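/- arXiv:1904.00146 — 2 statements merged into one kernel-verified Lean document; each statement's English description precedes it below -/
import Mathlib

section
/- Fix an r-graph F and η₂ > 0. There exists n₀ > 0 such that for every n-vertex r-graph G with n > n₀: if G is F-free, then one can delete at most η₂·C(n, r) edges from G so that the resulting r-graph is F-hom-free. -/
open Finset

/-- An `r`-graph: a set of edges each of which has exactly `r` vertices. -/
def IsRGraph {α : Type*} (r : ℕ) (G : Finset (Finset α)) : Prop :=
  ∀ e ∈ G, e.card = r

/-- `G` contains a (not necessarily induced) copy of `H`, i.e. a subgraph isomorphic to `H`. -/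
def ContainsCopy {α β : Type*} [DecidableEq β]
    (H : Finset (Finset α)) (G : Finset (Finset β)) : Prop :=
  ∃ f : α → β, Function.Injective f ∧ ∀ e ∈ H, e.image f ∈ G

/-- There is a homomorphism from `H` to `G`. -/
def ContainsHom {α β : Type*} [DecidableEq β]
    (H : Finset (Finset α)) (G : Finset (Finset β)) : Prop :=
  ∃ f : α → β, ∀ e ∈ H, e.image f ∈ G

/-- The Turán number `ex(n, H)` for `r`-graphs: the maximum number of edges in an
`n`-vertex `H`-free `r`-graph. -/
noncomputable def exNum {α : Type*} (r n : ℕ) (H : Finset (Finset α)) : ℕ :=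
  sSup {m | ∃ G : Finset (Finset (Fin n)), IsRGraph r G ∧ ¬ ContainsCopy H G ∧ G.card = m}

/-- The two endpoints of an edge of a simple graph, as a `Finset`. -/
def sym2ToFinset {α : Type*} [Fintype α] [DecidableEq α] (e : Sym2 α) : Finset α :=
  Finset.univ.filter (· ∈ e)

/-- The expansion `H_F^(r)` of a 2-graph `F`: each edge of `F` is enlarged with a new set of
`r - 2` vertices, distinct edges getting disjoint sets of new vertices. -/
def expansion {α : Type*} [Fintype α] [DecidableEq α] (r : ℕ)
    (F : SimpleGraph α) [DecidableRel F.Adj] :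
    Finset (Finset (α ⊕ (F.edgeFinset × Fin (r - 2)))) :=
  F.edgeFinset.attach.image (fun e =>
    (sym2ToFinset e.1).image Sum.inl ∪
      (Finset.univ : Finset (Fin (r - 2))).image (fun i => Sum.inr (e, i)))

/-- The complete balanced `l`-partite `r`-graph `T_r(n, l)` on vertex set `Fin n`,
with vertex classes the residue classes modulo `l` (which differ in size by at most 1):
its edges are all `r`-sets meeting each class in at most one vertex. -/
def turanGraph (r n l : ℕ) : Finset (Finset (Fin n)) :=
  (Finset.univ.powersetCard r).filter
    (fun e => ∀ u ∈ e, ∀ v ∈ e, (u : ℕ) % l = (v : ℕ) % l → u = v)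

/-- `t_r(n, l)`, the number of edges of `T_r(n, l)`. -/
def turanNum (r n l : ℕ) : ℕ := (turanGraph r n l).card

/-- Two `r`-graphs on `Fin n` are `ε`-close if some relabelling of the first one has
symmetric difference at most `ε·C(n,r)` with the second one. -/
def EpsClose (r n : ℕ) (ε : ℝ) (G₁ G₂ : Finset (Finset (Fin n))) : Prop :=
  ∃ σ : Fin n ≃ Fin n,
    ((((G₁.image fun e => e.image σ) \ G₂) ∪ (G₂ \ (G₁.image fun e => e.image σ))).card : ℝ)
      ≤ ε * (n.choose r)

/-- `G` contains a member of the decomposition family `𝓕_F` (w.r.t. proper `ℓ`-colourings of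
`F`) as a subgraph, with all its vertices placed inside `S`.  A member of `𝓕_F` is obtained
from `F` by deleting the vertices of `ℓ - 2` colour classes of a proper `ℓ`-colouring of `F`. -/
def ContainsDecompMemberOn {α β : Type*} [DecidableEq β] (ℓ : ℕ) (F : SimpleGraph α)
    (G : Finset (Finset β)) (S : Set β) : Prop :=
  ∃ c : α → Fin ℓ, (∀ ⦃u v⦄, F.Adj u v → c u ≠ c v) ∧
    ∃ i j : Fin ℓ, i ≠ j ∧
      ∃ f : {v : α // c v = i ∨ c v = j} → β, Function.Injective f ∧
        (∀ v, f v ∈ S) ∧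
        ∀ u v : {v : α // c v = i ∨ c v = j}, F.Adj u.1 v.1 → ({f u, f v} : Finset β) ∈ G

/-- `biex(n, F) = ex(n, 𝓕_F)`: the maximum number of edges in an `n`-vertex 2-graph containing
no member of the decomposition family of `F` (w.r.t. proper `ℓ`-colourings) as a subgraph. -/
noncomputable def biex {α : Type*} (ℓ : ℕ) (F : SimpleGraph α) (n : ℕ) : ℕ :=
  sSup {m | ∃ G : Finset (Finset (Fin n)), IsRGraph 2 G ∧
    ¬ ContainsDecompMemberOn ℓ F G Set.univ ∧ G.card = m}

/-- The Lagrangian of an `r`-graph `G`: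
`λ(G) = max { Σ_{e ∈ G} Π_{i ∈ e} w i }` over all legal weightings `w`. -/
noncomputable def lagrangian {α : Type*} [Fintype α] (G : Finset (Finset α)) : ℝ :=
  sSup {x : ℝ | ∃ w : α → ℝ, (∀ i, 0 ≤ w i) ∧ (∑ i, w i) = 1 ∧
    x = ∑ e ∈ G, ∏ i ∈ e, w i}

open Finset

namespace HRL
open MeasureTheory Filter Topology
open scoped ENNReal

universe u

/-- points of all finite models -/
abbrev Z (V : Type u) : Type u := Σ n : ℕ, (V → Fin (n + 1))

/-- the limit space -/
def Om (V : Type u) : Type u := Ultrafilter (Z V)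

/-- internal set -/
def cl {V : Type u} (S : Set (Z V)) : Set (Om V) := {w | S ∈ (show Ultrafilter (Z V) from w)}

instance (V : Type u) : MeasurableSpace (Om V) :=
  MeasurableSpace.generateFrom (Set.range (cl (V := V)))

section cl
variable {V : Type u}

lemma cl_compl (S : Set (Z V)) : cl Sᶜ = (cl S)ᶜ := by
  ext w; exact Ultrafilter.compl_mem_iff_notMem

lemma cl_inter (S T : Set (Z V)) : cl (S ∩ T) = cl S ∩ cl T := by
  ext w; exact Filter.inter_mem_iff

lemma cl_union (S T : Set (Z V)) : cl (S ∪ T) = cl S ∪ cl T := by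
  ext w; exact Ultrafilter.union_mem_iff

lemma cl_empty : cl (∅ : Set (Z V)) = ∅ := by
  ext w; exact iff_of_false (Ultrafilter.empty_notMem (f := w)) (fun h => h)

lemma cl_univ : cl (Set.univ : Set (Z V)) = Set.univ := by
  ext w; exact iff_of_true (Filter.univ_mem (f := Ultrafilter.toFilter w)) trivial

lemma cl_mono {S T : Set (Z V)} (h : S ⊆ T) : cl S ⊆ cl T := by
  intro w hw
  exact Filter.mem_of_superset hw h

lemma meas_cl (S : Set (Z V)) : MeasurableSet (cl S) :=
  MeasurableSpace.measurableSet_generateFrom ⟨S, rfl⟩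

/-- principal point -/
def pt (z : Z V) : Om V := (pure z : Ultrafilter (Z V))

lemma pt_mem_cl (z : Z V) (S : Set (Z V)) : pt z ∈ cl S ↔ z ∈ S := by
  exact Ultrafilter.mem_pure

lemma pt_cl (S : Set (Z V)) : {z | pt z ∈ cl S} = S := by
  ext z; simp [pt_mem_cl]

lemma alg_range : IsSetAlgebra (Set.range (cl (V := V))) where
  empty_mem := ⟨∅, cl_empty⟩
  compl_mem := by rintro _ ⟨S, rfl⟩; exact ⟨Sᶜ, cl_compl S⟩
  union_mem := by rintro _ _ ⟨S, rfl⟩ ⟨T, rfl⟩; exact ⟨S ∪ T, cl_union S T⟩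

lemma cl_compact (S : Set (Z V)) (f : ℕ → Set (Z V)) (h : cl S ⊆ ⋃ i, cl (f i)) :
    ∃ t : Finset ℕ, cl S ⊆ ⋃ i ∈ t, cl (f i) := by
  have hc : IsCompact {u : Ultrafilter (Z V) | S ∈ u} :=
    (ultrafilter_isClosed_basic S).isCompact
  exact hc.elim_finite_subcover (fun i => {u : Ultrafilter (Z V) | f i ∈ u})
    (fun i => ultrafilter_isOpen_basic _) h

end cl

section avg
variable {V : Type u} [Fintype V] [DecidableEq V]

/-- average at level `n` -/
noncomputable def av (h : Z V → ℝ) (n : ℕ) : ℝ :=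
  (∑ x : V → Fin (n + 1), h ⟨n, x⟩) / (Fintype.card (V → Fin (n + 1)) : ℝ)

lemma card_pos' (n : ℕ) : (0 : ℝ) < (Fintype.card (V → Fin (n + 1)) : ℝ) := by
  exact_mod_cast Fintype.card_pos

lemma av_add (h k : Z V → ℝ) (n : ℕ) : av (h + k) n = av h n + av k n := by
  simp [av, Finset.sum_add_distrib, add_div]

lemma av_smul (c : ℝ) (h : Z V → ℝ) (n : ℕ) : av (fun z => c * h z) n = c * av h n := by
  simp [av, ← Finset.mul_sum, mul_div_assoc]

lemma av_mono {h k : Z V → ℝ} (hk : ∀ z, h z ≤ k z) (n : ℕ) : av h n ≤ av k n := by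
  unfold av
  have := card_pos' (V := V) n
  gcongr
  exact hk _

lemma av_const (c : ℝ) (n : ℕ) : av (fun _ : Z V => c) n = c := by
  have := card_pos' (V := V) n
  simp only [av, Finset.sum_const, Finset.card_univ, nsmul_eq_mul]
  field_simp

/-- density -/
noncomputable def dens (S : Set (Z V)) (n : ℕ) : ℝ := av (S.indicator 1) n

lemma dens_nonneg (S : Set (Z V)) (n : ℕ) : 0 ≤ dens S n := by
  have := av_mono (h := fun _ : Z V => 0) (k := S.indicator 1)
    (fun z => Set.indicator_nonneg (fun _ _ => zero_le_one) z) n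
  rwa [av_const] at this

lemma dens_le_one (S : Set (Z V)) (n : ℕ) : dens S n ≤ 1 := by
  have := av_mono (k := fun _ : Z V => 1) (h := S.indicator 1)
    (fun z => Set.indicator_le_self' (fun _ _ => zero_le_one) z) n
  rwa [av_const] at this

lemma dens_union {S T : Set (Z V)} (h : Disjoint S T) (n : ℕ) :
    dens (S ∪ T) n = dens S n + dens T n := by
  rw [dens, Set.indicator_union_of_disjoint h]
  exact av_add _ _ n

lemma exists_lim (U : Ultrafilter ℕ) (S : Set (Z V)) :
    ∃ l, 0 ≤ l ∧ Tendsto (dens S) U (𝓝 l) := by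
  have := (isCompact_Icc (a := (0:ℝ)) (b := 1)).ultrafilter_le_nhds (U.map (dens S)) (by
    rw [le_principal_iff]
    exact Filter.mem_map.2 (Filter.univ_mem' fun n => ⟨dens_nonneg S n, dens_le_one S n⟩))
  obtain ⟨l, hl, h⟩ := this
  exact ⟨l, hl.1, h⟩

theorem exists_measure (U : Ultrafilter ℕ) :
    ∃ μ : Measure (Om V), IsProbabilityMeasure μ ∧
      ∀ S, Tendsto (dens S) U (𝓝 (μ.real (cl S))) := by
  choose l hl0 hl using exists_lim (V := V) U
  have hl_empty : l ∅ = 0 := by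
    refine tendsto_nhds_unique (hl ∅) ?_
    have : dens (∅ : Set (Z V)) = fun _ => 0 := by
      ext n; simp [dens, av]
    rw [this]; exact tendsto_const_nhds
  have hl_univ : l Set.univ = 1 := by
    refine tendsto_nhds_unique (hl Set.univ) ?_
    have : dens (Set.univ : Set (Z V)) = fun _ => 1 := by
      ext n; rw [dens, Set.indicator_univ]; exact av_const 1 n
    rw [this]; exact tendsto_const_nhds
  have hl_union : ∀ S T, Disjoint S T → l (S ∪ T) = l S + l T := by
    intro S T h
    refine tendsto_nhds_unique (hl _) ?_
    have : dens (S ∪ T) = fun n => dens S n + dens T n := by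
      ext n; exact dens_union h n
    rw [this]; exact (hl S).add (hl T)
  have hring := (alg_range (V := V)).isSetRing
  let m : AddContent ℝ≥0∞ (Set.range (cl (V := V))) :=
    hring.addContent_of_union (fun E => ENNReal.ofReal (l {z | pt z ∈ E}))
      (by simp [hl_empty])
      (by
        rintro _ _ ⟨S, rfl⟩ ⟨T, rfl⟩ hd
        rw [← cl_union, pt_cl, pt_cl, pt_cl, hl_union, ENNReal.ofReal_add (hl0 _) (hl0 _)]
        rw [Set.disjoint_left] at hd ⊢
        intro z h1 h2
        exact hd ((pt_mem_cl z S).2 h1) ((pt_mem_cl z T).2 h2))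
  have hm : ∀ S, m (cl S) = ENNReal.ofReal (l S) := by
    intro S
    change ENNReal.ofReal (l {z | pt z ∈ cl S}) = _
    rw [pt_cl]
  have hsub : m.IsSigmaSubadditive := by
    intro f hf hU
    choose g hg using hf
    obtain ⟨S, hS⟩ := hU
    obtain ⟨t, ht⟩ := cl_compact S g (by rw [hS]; simp [hg])
    classical
    have := addContent_le_sum_of_subset_sUnion (m := m) hring.isSetSemiring
      (J := t.image f) (t := cl S) (by
        intro x hx
        simp only [Finset.coe_image, Set.mem_image] at hx
        obtain ⟨i, _, rfl⟩ := hx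
        exact ⟨g i, hg i⟩) ⟨S, rfl⟩ (by
        refine ht.trans ?_
        intro w hw
        simp only [Set.mem_iUnion] at hw
        obtain ⟨i, hi, hw⟩ := hw
        refine ⟨f i, by simpa using ⟨i, hi, rfl⟩, ?_⟩
        rw [← hg i]; exact hw)
    rw [← hS]
    refine this.trans ((Finset.sum_image_le_of_nonneg ?_).trans (ENNReal.sum_le_tsum t))
    intros; exact bot_le
  let μ := m.measure hring.isSetSemiring le_rfl hsub
  have hμ : ∀ S, μ (cl S) = ENNReal.ofReal (l S) := by
    intro S
    rw [← hm]
    exact m.measure_eq hring.isSetSemiring rfl hsub ⟨S, rfl⟩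
  refine ⟨μ, ⟨?_⟩, fun S => ?_⟩
  · rw [← cl_univ, hμ, hl_univ]; simp
  · have : μ.real (cl S) = l S := by
      rw [Measure.real, hμ, ENNReal.toReal_ofReal (hl0 S)]
    rw [this]; exact hl S

end avg
end HRL

open Finset

namespace HRL
open MeasureTheory Filter Topology
open scoped ENNReal

universe u
set_option linter.unusedSectionVars false
section alg
variable {V : Type u} [DecidableEq V]

/-- depends only on the coordinates in `K` -/
def depF {κ : Type*} (K : Finset V) (f : Z V → κ) : Prop :=
  ∀ (n : ℕ) (x y : V → Fin (n + 1)), (∀ v ∈ K, x v = y v) → f ⟨n, x⟩ = f ⟨n, y⟩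

/-- set depending only on the coordinates in `K` -/
def dep (K : Finset V) (S : Set (Z V)) : Prop := depF K (fun z => z ∈ S)

lemma depF.mono {κ : Type*} {K K' : Finset V} {f : Z V → κ} (h : depF K f) (hK : K ⊆ K') :
    depF K' f := fun n x y hxy => h n x y fun v hv => hxy v (hK hv)

/-- the algebra generated -/
inductive Alg (Kf : Set (Finset V)) : Set (Z V) → Prop
  | base (K : Finset V) (S : Set (Z V)) (hK : K ∈ Kf) (h : dep K S) : Alg Kf S
  | univ : Alg Kf Set.univ
  | compl (S : Set (Z V)) (h : Alg Kf S) : Alg Kf Sᶜ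
  | inter (S T : Set (Z V)) (h : Alg Kf S) (h' : Alg Kf T) : Alg Kf (S ∩ T)

/-- the sigma-algebra generated -/
@[reducible] def B (Kf : Set (Finset V)) : MeasurableSpace (Om V) :=
  MeasurableSpace.generateFrom (cl '' {S | Alg Kf S})

lemma alg_alg (Kf : Set (Finset V)) : IsSetAlgebra (cl '' {S | Alg Kf S}) where
  empty_mem := ⟨_, (Alg.univ).compl, by rw [Set.compl_univ, cl_empty]⟩
  compl_mem := by
    rintro _ ⟨S, hS, rfl⟩
    exact ⟨Sᶜ, hS.compl, cl_compl S⟩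
  union_mem := by
    rintro _ _ ⟨S, hS, rfl⟩ ⟨T, hT, rfl⟩
    exact ⟨(Sᶜ ∩ Tᶜ)ᶜ, (hS.compl.inter _ _ hT.compl).compl, by
      rw [Set.compl_inter, compl_compl, compl_compl, cl_union]⟩

lemma B_le (Kf : Set (Finset V)) : B Kf ≤ (inferInstance : MeasurableSpace (Om V)) := by
  refine MeasurableSpace.generateFrom_le ?_
  rintro _ ⟨S, _, rfl⟩
  exact meas_cl S

lemma Alg.mono {Kf Kf' : Set (Finset V)} (h : ∀ K ∈ Kf, ∃ K' ∈ Kf', K ⊆ K') {S : Set (Z V)}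
    (hS : Alg Kf S) : Alg Kf' S := by
  induction hS with
  | base K S hK hd =>
    obtain ⟨K', hK', hs⟩ := h K hK
    exact .base K' S hK' (depF.mono hd hs)
  | univ => exact .univ
  | compl S _ ih => exact .compl _ ih
  | inter S T _ _ ih ih' => exact .inter _ _ ih ih'

lemma B_mono {Kf Kf' : Set (Finset V)} (h : ∀ K ∈ Kf, ∃ K' ∈ Kf', K ⊆ K') : B Kf ≤ B Kf' := by
  refine MeasurableSpace.generateFrom_mono ?_
  rintro _ ⟨S, hS, rfl⟩
  exact ⟨S, hS.mono h, rfl⟩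

lemma B_mono' {Kf Kf' : Set (Finset V)} (h : Kf ⊆ Kf') : B Kf ≤ B Kf' :=
  B_mono fun K hK => ⟨K, h hK, subset_rfl⟩

lemma meas_B {Kf : Set (Finset V)} {S : Set (Z V)} (h : Alg Kf S) : MeasurableSet[B Kf] (cl S) :=
  MeasurableSpace.measurableSet_generateFrom ⟨S, h, rfl⟩

lemma B_approx (μ : Measure (Om V)) [IsProbabilityMeasure μ] {Kf : Set (Finset V)}
    {A : Set (Om V)} (hA : MeasurableSet[B Kf] A) {δ : ℝ≥0∞} (hδ : 0 < δ) :
    ∃ S, Alg Kf S ∧ μ (symmDiff (cl S) A) < δ := by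
  have h := @exists_measure_symmDiff_lt_of_generateFrom_isSetRing (Om V) (B Kf)
    (μ.trim (B_le Kf)) _ _ (alg_alg Kf).isSetRing
    ⟨{Set.univ}, by simp, by
      simp only [Set.singleton_subset_iff]
      exact (alg_alg Kf).univ_mem, by simp⟩ rfl A hA δ hδ
  obtain ⟨_, ⟨S, hS, rfl⟩, h⟩ := h
  refine ⟨S, hS, ?_⟩
  rwa [trim_measurableSet_eq] at h
  exact MeasurableSet.symmDiff (meas_B hS) hA

/-- gluing -/
def glue (e : Finset V) {n : ℕ} (x y : V → Fin (n + 1)) : V → Fin (n + 1) :=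
  fun v => if v ∈ e then x v else y v

/-- slices -/
def slice (e : Finset V) (y : ∀ n : ℕ, V → Fin (n + 1)) (S : Set (Z V)) : Set (Z V) :=
  {z | (⟨z.1, glue e z.2 (y z.1)⟩ : Z V) ∈ S}

lemma slice_alg {e : Finset V} (y : ∀ n : ℕ, V → Fin (n + 1)) {Kf Kf' : Set (Finset V)}
    (h : ∀ K ∈ Kf, K ∩ e ∈ Kf') {S : Set (Z V)} (hS : Alg Kf S) : Alg Kf' (slice e y S) := by
  induction hS with
  | base K S hK hd =>
    refine .base (K ∩ e) _ (h K hK) ?_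
    intro n x x' hx
    refine hd n _ _ ?_
    intro v hv
    by_cases hve : v ∈ e
    · simpa [glue, hve] using hx v (by simp [hv, hve])
    · simp [glue, hve]
  | univ => exact .univ
  | compl S _ ih => exact .compl _ ih
  | inter S T _ _ ih ih' => exact .inter _ _ ih ih'

variable [Fintype V]

lemma sum_glue (e : Finset V) (n : ℕ) (φ : (V → Fin (n + 1)) → ℝ) :
    ∑ y : V → Fin (n + 1), ∑ x : V → Fin (n + 1), φ (glue e x y) =
      ∑ _y : V → Fin (n + 1), ∑ x : V → Fin (n + 1), φ x := by
  rw [← Fintype.sum_prod_type' (f := fun y x => φ (glue e x y)),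
    ← Fintype.sum_prod_type' (f := fun _ x => φ x)]
  refine Fintype.sum_bijective (fun p => (glue e p.2 p.1 |> fun a => (glue e p.1 p.2, a))) ?_ _ _
    (fun p => rfl)
  refine Function.Involutive.bijective ?_
  rintro ⟨x, y⟩
  ext v <;> by_cases hv : v ∈ e <;> simp [glue, hv]

lemma av_slice (e : Finset V) (S : Set (Z V)) (h : Z V → ℝ) (hh : depF e h) :
    ∃ y : ∀ n : ℕ, V → Fin (n + 1), ∀ n,
      |av (S.indicator h) n| ≤ |av ((slice e y S).indicator h) n| := by
  have key : ∀ n, ∃ y : V → Fin (n + 1), |∑ x : V → Fin (n + 1), S.indicator h ⟨n, x⟩| ≤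
      |∑ x : V → Fin (n + 1), S.indicator h ⟨n, glue e x y⟩| := by
    intro n
    have h1 := sum_glue e n (fun x => S.indicator h ⟨n, x⟩)
    have h2 : ∑ _y : V → Fin (n + 1), |∑ x : V → Fin (n + 1), S.indicator h ⟨n, x⟩| ≤
        ∑ y : V → Fin (n + 1), |∑ x : V → Fin (n + 1), S.indicator h ⟨n, glue e x y⟩| := by
      refine le_trans (le_of_eq ?_) (Finset.abs_sum_le_sum_abs _ _)
      rw [h1]
      rw [Finset.sum_const, Finset.sum_const, abs_nsmul]
    obtain ⟨y, _, hy⟩ := Finset.exists_le_of_sum_le Finset.univ_nonempty h2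
    exact ⟨y, hy⟩
  choose y hy using key
  refine ⟨y, fun n => ?_⟩
  have : ∀ x : V → Fin (n + 1),
      (slice e y S).indicator h ⟨n, x⟩ = S.indicator h ⟨n, glue e x (y n)⟩ := by
    intro x
    have e1 : h ⟨n, x⟩ = h ⟨n, glue e x (y n)⟩ := hh n _ _ (by
      intro v hv; simp [glue, hv])
    by_cases hx : (⟨n, glue e x (y n)⟩ : Z V) ∈ S
    · rw [Set.indicator_of_mem hx, Set.indicator_of_mem (show _ ∈ slice e y S from hx), e1]
    · rw [Set.indicator_of_notMem hx, Set.indicator_of_notMem (show _ ∉ slice e y S from hx)]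
  simp only [av, this, abs_div]
  exact div_le_div_of_nonneg_right (hy n) (abs_nonneg _)

end alg

section fub
variable {V : Type u} [DecidableEq V] [Fintype V]

/-- the limit property -/
def Lim (U : Ultrafilter ℕ) (μ : Measure (Om V)) : Prop :=
  ∀ S, Tendsto (dens S) U (𝓝 (μ.real (cl S)))

/-- representable functions -/
def Rep (U : Ultrafilter ℕ) (μ : Measure (Om V)) (e : Finset V) (g : Om V → ℝ) : Prop :=
  StronglyMeasurable[B {e}] g ∧ Integrable g μ ∧ ∃ h : Z V → ℝ, depF e h ∧
    ∀ S, Tendsto (av (S.indicator h)) U (𝓝 (∫ w in cl S, g w ∂μ))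

variable {U : Ultrafilter ℕ} {μ : Measure (Om V)} [IsProbabilityMeasure μ]

lemma Rep.add {e : Finset V} {f g : Om V → ℝ} (hf : Rep U μ e f) (hg : Rep U μ e g) :
    Rep U μ e (f + g) := by
  obtain ⟨m1, i1, h1, d1, t1⟩ := hf
  obtain ⟨m2, i2, h2, d2, t2⟩ := hg
  refine ⟨m1.add m2, i1.add i2, h1 + h2, ?_, ?_⟩
  · intro n x y hxy
    simp [d1 n x y hxy, d2 n x y hxy]
  · intro S
    have : av (S.indicator (h1 + h2)) = fun n => av (S.indicator h1) n + av (S.indicator h2) n := by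
      ext n; rw [Set.indicator_add']; exact av_add _ _ n
    rw [this]
    simp only [Pi.add_apply]
    rw [integral_add i1.integrableOn i2.integrableOn]
    exact (t1 S).add (t2 S)

lemma Rep.ind (hU : Lim U μ) {e : Finset V} {R : Set (Z V)} (hR : dep e R) (c : ℝ) :
    Rep U μ e ((cl R).indicator fun _ => c) := by
  have hm : MeasurableSet[B {e}] (cl R) := meas_B (.base e R rfl hR)
  refine ⟨StronglyMeasurable.indicator stronglyMeasurable_const hm,
    (integrable_const c).indicator (meas_cl R), R.indicator (fun _ => c), ?_, ?_⟩
  · intro n x y hxy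
    have := hR n x y hxy
    simp only [eq_iff_iff] at this
    by_cases hx : (⟨n, x⟩ : Z V) ∈ R
    · rw [Set.indicator_of_mem hx, Set.indicator_of_mem (this.1 hx)]
    · rw [Set.indicator_of_notMem hx, Set.indicator_of_notMem (fun h => hx (this.2 h))]
  · intro S
    have h1 : av (S.indicator (R.indicator fun _ => c)) = fun n => c * dens (S ∩ R) n := by
      ext n
      rw [dens, ← av_smul]
      congr 1
      ext z
      rw [Set.indicator_indicator]
      by_cases hz : z ∈ S ∩ R
      · rw [Set.indicator_of_mem hz, Set.indicator_of_mem hz]; simp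
      · rw [Set.indicator_of_notMem hz, Set.indicator_of_notMem hz]; simp
    have h2 : ∫ w in cl S, (cl R).indicator (fun _ => c) w ∂μ = c * μ.real (cl (S ∩ R)) := by
      rw [setIntegral_indicator (meas_cl R), ← cl_inter]
      simp [mul_comm]
    rw [h1, h2]
    exact (hU (S ∩ R)).const_mul c

lemma alg_dep {e : Finset V} {S : Set (Z V)} (h : Alg {e} S) : dep e S := by
  induction h with
  | base K S hK hd => rw [Set.mem_singleton_iff] at hK; exact hK ▸ hd
  | univ => intro n x y _; simp
  | compl S _ ih => intro n x y h; exact congrArg Not (ih n x y h)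
  | inter S T _ _ ih ih' =>
    intro n x y h
    exact congrArg₂ And (ih n x y h) (ih' n x y h)

lemma Rep.dense (hU : Lim U μ) {e : Finset V} {f : Om V → ℝ}
    (hf : StronglyMeasurable[B {e}] f) (hfi : Integrable f μ) {δ : ℝ} (hδ : 0 < δ) :
    ∃ g, Rep U μ e g ∧ ∫ w, |f w - g w| ∂μ ≤ δ := by
  have hi := hfi.trim (B_le {e}) hf
  have hmem := (memLp_one_iff_integrable (μ := μ.trim (B_le {e}))).2 hi
  obtain ⟨g, hg, hP⟩ := @MemLp.induction_dense (Om V) ℝ (B {e}) _ 1 (μ.trim (B_le {e})) (by simp) (Rep U μ e) (by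
    intro c s hs _ ε hε
    rcases eq_or_ne c 0 with rfl | hc
    · refine ⟨(cl ∅).indicator fun _ => 0, by simp, Rep.ind hU (alg_dep ?_) 0⟩
      rw [← Set.compl_univ]; exact (Alg.univ).compl
    have hcp : ‖c‖ₑ ≠ 0 := by simpa using hc
    obtain ⟨S, hS, hd⟩ := B_approx μ hs (δ := ε / ‖c‖ₑ)
      (ENNReal.div_pos hε (by simp))
    refine ⟨(cl S).indicator fun _ => c, ?_, Rep.ind hU (alg_dep hS) c⟩
    have hmS := meas_B hS
    rw [eLpNorm_trim _ ((StronglyMeasurable.indicator stronglyMeasurable_const hmS).sub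
      (StronglyMeasurable.indicator stronglyMeasurable_const hs)),
      eLpNorm_one_eq_lintegral_enorm]
    have : ∀ w, ‖((cl S).indicator (fun _ => c) - s.indicator fun _ => c) w‖ₑ =
        (symmDiff (cl S) s).indicator (fun _ => ‖c‖ₑ) w := by
      intro w
      by_cases h1 : w ∈ cl S <;> by_cases h2 : w ∈ s <;>
        simp [Set.indicator, Set.mem_symmDiff, h1, h2]
    simp_rw [this]
    rw [lintegral_indicator_const]
    · calc ‖c‖ₑ * μ (symmDiff (cl S) s) ≤ ‖c‖ₑ * (ε / ‖c‖ₑ) := by gcongr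
        _ ≤ ε := ENNReal.mul_div_le
    · exact (meas_cl S).symmDiff (B_le _ _ hs)) (fun f g => Rep.add)
    (fun f hf => hf.1.aestronglyMeasurable) f hmem (ENNReal.ofReal δ) (by simpa using hδ)
  refine ⟨g, hP, ?_⟩
  rw [eLpNorm_trim _ (hf.sub hP.1), eLpNorm_one_eq_lintegral_enorm] at hg
  have := integral_norm_eq_lintegral_enorm (hfi.sub hP.2.1).1
  simp only [Pi.sub_apply, Real.norm_eq_abs] at this
  rw [this]
  exact ENNReal.toReal_le_of_le_ofReal hδ.le hg

lemma abs_setInt_sub {f g : Om V → ℝ} (hf : Integrable f μ) (hg : Integrable g μ)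
    (E : Set (Om V)) : |∫ w in E, f w ∂μ - ∫ w in E, g w ∂μ| ≤ ∫ w, |f w - g w| ∂μ := by
  rw [← integral_sub hf.integrableOn hg.integrableOn]
  refine (abs_integral_le_integral_abs).trans ?_
  exact setIntegral_le_integral (hf.sub hg).abs (Eventually.of_forall fun w => abs_nonneg _)

/-- main Fubini-type lemma -/
lemma slice_bound (hU : Lim U μ) {e : Finset V} {f : Om V → ℝ}
    (hf : StronglyMeasurable[B {e}] f) (hfi : Integrable f μ) (S : Set (Z V))
    (h0 : ∀ y, ∫ w in cl (slice e y S), f w ∂μ = 0) : ∫ w in cl S, f w ∂μ = 0 := by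
  rw [← abs_nonpos_iff]
  refine le_of_forall_pos_le_add fun δ hδ => ?_
  obtain ⟨g, ⟨_, gi, h, hd, ht⟩, hg⟩ := Rep.dense hU hf hfi (half_pos hδ)
  obtain ⟨y, hy⟩ := av_slice e S h hd
  have h1 : |∫ w in cl S, g w ∂μ| ≤ |∫ w in cl (slice e y S), g w ∂μ| :=
    le_of_tendsto_of_tendsto' (ht S).abs (ht _).abs hy
  have h2 := abs_setInt_sub hfi gi (cl S)
  have h3 := abs_setInt_sub hfi gi (cl (slice e y S))
  rw [h0 y, zero_sub, abs_neg] at h3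
  have h4 := abs_sub_abs_le_abs_sub (∫ w in cl S, f w ∂μ) (∫ w in cl S, g w ∂μ)
  linarith

end fub
end HRL

open Finset

namespace HRL
open MeasureTheory Filter Topology
open scoped ENNReal

universe u
set_option linter.unusedSectionVars false
section indep
variable {V : Type u} [DecidableEq V] [Fintype V]
variable {U : Ultrafilter ℕ} {μ : Measure (Om V)} [IsProbabilityMeasure μ]

/-- indicator -/
noncomputable def I (A : Set (Om V)) : Om V → ℝ := A.indicator 1

lemma I_int {A : Set (Om V)} (hA : MeasurableSet A) : Integrable (I A) μ :=
  (integrable_const (1 : ℝ)).indicator hA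

lemma I_nonneg (A : Set (Om V)) (w : Om V) : 0 ≤ I A w :=
  Set.indicator_nonneg (fun _ _ => zero_le_one) w

lemma I_le_one (A : Set (Om V)) (w : Om V) : I A w ≤ 1 :=
  Set.indicator_le_self' (fun _ _ => zero_le_one) w

lemma I_inter (A C : Set (Om V)) (w : Om V) : I (A ∩ C) w = I A w * I C w := by
  by_cases h1 : w ∈ A <;> by_cases h2 : w ∈ C <;> simp [I, h1, h2]

lemma I_mem {A : Set (Om V)} {w : Om V} (h : w ∈ A) : I A w = 1 := by simp [I, h]

lemma I_notMem {A : Set (Om V)} {w : Om V} (h : w ∉ A) : I A w = 0 := by simp [I, h]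

lemma int_I {A : Set (Om V)} (hA : MeasurableSet A) : ∫ w, I A w ∂μ = μ.real A :=
  integral_indicator_one hA

lemma I_sm {m : MeasurableSpace (Om V)} {A : Set (Om V)} (hA : MeasurableSet[m] A) :
    StronglyMeasurable[m] (I A) :=
  StronglyMeasurable.indicator stronglyMeasurable_const hA

lemma int_mul_I {f : Om V → ℝ} {E : Set (Om V)} (hE : MeasurableSet E) :
    ∫ w, I E w * f w ∂μ = ∫ w in E, f w ∂μ := by
  rw [← integral_indicator hE]
  congr 1
  ext w
  by_cases h : w ∈ E <;> simp [I, h]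

/-- conditional probability -/
noncomputable def cp (μ : Measure (Om V)) (Kf : Set (Finset V)) (A : Set (Om V)) : Om V → ℝ :=
  μ[I A | B Kf]

lemma cp_sm (Kf : Set (Finset V)) (A : Set (Om V)) : StronglyMeasurable[B Kf] (cp μ Kf A) :=
  stronglyMeasurable_condExp

lemma cp_int (Kf : Set (Finset V)) (A : Set (Om V)) : Integrable (cp μ Kf A) μ :=
  integrable_condExp

lemma cp_nonneg (Kf : Set (Finset V)) (A : Set (Om V)) : ∀ᵐ w ∂μ, 0 ≤ cp μ Kf A w :=
  condExp_nonneg (Eventually.of_forall (I_nonneg A))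

lemma cp_le_one (Kf : Set (Finset V)) {A : Set (Om V)} (hA : MeasurableSet A) :
    ∀ᵐ w ∂μ, cp μ Kf A w ≤ 1 := by
  have h := condExp_mono (m := B Kf) (I_int (μ := μ) hA) (integrable_const (1 : ℝ))
    (Eventually.of_forall (I_le_one A))
  rw [condExp_const (B_le Kf)] at h
  exact h

lemma cp_setInt {Kf : Set (Finset V)} {A E : Set (Om V)} (hA : MeasurableSet A)
    (hE : MeasurableSet[B Kf] E) : ∫ w in E, cp μ Kf A w ∂μ = ∫ w in E, I A w ∂μ :=
  setIntegral_condExp (B_le Kf) (I_int hA) hE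

lemma cond_local (hU : Lim U μ) {e : Finset V} {Kf Kf' : Set (Finset V)}
    (h1 : ∀ K ∈ Kf, K ∩ e ∈ Kf') (h2 : ∀ K ∈ Kf', K ⊆ e) {A : Set (Om V)}
    (hA : MeasurableSet[B {e}] A) {E : Set (Om V)} (hE : MeasurableSet[B Kf] E) :
    ∫ w in E, (I A w - cp μ Kf' A w) ∂μ = 0 := by
  have hA' : MeasurableSet A := B_le _ _ hA
  have hfi : Integrable (fun w => I A w - cp μ Kf' A w) μ := (I_int hA').sub (cp_int _ _)
  have hz : ∀ {E}, MeasurableSet[B Kf'] E → ∫ w in E, (I A w - cp μ Kf' A w) ∂μ = 0 := by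
    intro E hE
    rw [integral_sub (I_int hA').integrableOn (cp_int _ _).integrableOn, cp_setInt hA' hE, sub_self]
  induction E, hE using MeasurableSpace.induction_on_inter
    (s := cl '' {S | Alg Kf S}) rfl (alg_alg Kf).isSetRing.isSetSemiring.isPiSystem with
  | empty => simp
  | basic t ht =>
    obtain ⟨S, hS, rfl⟩ := ht
    refine slice_bound hU (e := e) ?_ hfi S ?_
    · refine (I_sm hA).sub ((cp_sm Kf' A).mono (B_mono fun K hK => ⟨e, rfl, h2 K hK⟩))
    · intro y
      exact hz (meas_B (slice_alg y h1 hS))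
  | compl t ht ih =>
    rw [setIntegral_compl (B_le _ _ ht) hfi, ih, sub_zero]
    have := hz (MeasurableSet.univ)
    rwa [setIntegral_univ] at this
  | iUnion f hd hm ih =>
    rw [integral_iUnion (fun i => B_le _ _ (hm i)) hd hfi.integrableOn]
    simp [ih]

/-- bounded measurable functions -/
def Nice (μ : Measure (Om V)) (Kf : Set (Finset V)) (g : Om V → ℝ) : Prop :=
  StronglyMeasurable[B Kf] g ∧ ∀ᵐ w ∂μ, |g w| ≤ 1

lemma Nice.mono {Kf Kf' : Set (Finset V)} {g : Om V → ℝ} (h : Nice μ Kf g)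
    (hK : B Kf ≤ B Kf') : Nice μ Kf' g := ⟨h.1.mono hK, h.2⟩

lemma Nice.mul {Kf : Set (Finset V)} {f g : Om V → ℝ} (hf : Nice μ Kf f) (hg : Nice μ Kf g) :
    Nice μ Kf (fun w => f w * g w) := by
  refine ⟨hf.1.mul hg.1, ?_⟩
  filter_upwards [hf.2, hg.2] with w h1 h2
  rw [abs_mul]
  exact mul_le_one₀ h1 (abs_nonneg _) h2

lemma Nice.I {Kf : Set (Finset V)} {A : Set (Om V)} (hA : MeasurableSet[B Kf] A) :
    Nice μ Kf (I A) :=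
  ⟨I_sm hA, Eventually.of_forall fun w => by
    rw [abs_of_nonneg (I_nonneg A w)]; exact I_le_one A w⟩

lemma Nice.cp {Kf : Set (Finset V)} {A : Set (Om V)} (hA : MeasurableSet A) :
    Nice μ Kf (cp μ Kf A) := by
  refine ⟨cp_sm _ _, ?_⟩
  filter_upwards [cp_nonneg (μ := μ) Kf A, cp_le_one (μ := μ) Kf hA] with w h1 h2
  rwa [abs_of_nonneg h1]

lemma Nice.prod {ι : Type*} {Kf : Set (Finset V)} (s : Finset ι) (f : ι → Om V → ℝ)
    (h : ∀ i ∈ s, Nice μ Kf (f i)) : Nice μ Kf (fun w => ∏ i ∈ s, f i w) := by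
  classical
  induction s using Finset.induction_on with
  | empty =>
    simp only [Finset.prod_empty]
    exact ⟨stronglyMeasurable_const, by simp⟩
  | insert a s ha ih =>
    simp only [Finset.prod_insert ha]
    exact (h a (by simp)).mul (ih fun i hi => h i (by simp [hi]))

lemma Nice.int_mul {Kf : Set (Finset V)} {g f : Om V → ℝ} (hg : Nice μ Kf g)
    (hf : Integrable f μ) : Integrable (fun w => g w * f w) μ :=
  hf.bdd_mul (hg.1.mono (B_le Kf)).aestronglyMeasurable (c := 1) hg.2

lemma Nice.int {Kf : Set (Finset V)} {g : Om V → ℝ} (hg : Nice μ Kf g) : Integrable g μ := by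
  simpa using hg.int_mul (integrable_const (1 : ℝ))

lemma cond_nice (hU : Lim U μ) {e : Finset V} {Kf Kf' : Set (Finset V)}
    (h1 : ∀ K ∈ Kf, K ∩ e ∈ Kf') (h2 : ∀ K ∈ Kf', K ⊆ e) {A : Set (Om V)}
    (hA : MeasurableSet[B {e}] A) {g : Om V → ℝ} (hg : Nice μ Kf g) :
    ∫ w, g w * I A w ∂μ = ∫ w, g w * cp μ Kf' A w ∂μ := by
  have hA' : MeasurableSet A := B_le _ _ hA
  set f : Om V → ℝ := fun w => I A w - cp μ Kf' A w with hf
  have hfi : Integrable f μ := (I_int hA').sub (cp_int _ _)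
  have h0 : (fun _ => (0 : ℝ)) =ᵐ[μ] μ[f | B Kf] := by
    refine ae_eq_condExp_of_forall_setIntegral_eq (B_le Kf) hfi (by simp [integrableOn_zero]) ?_ ?_
    · intro s hs _
      rw [cond_local hU h1 h2 hA hs]; simp
    · exact stronglyMeasurable_const.aestronglyMeasurable
  have hi : Integrable (g * f) μ := hg.int_mul hfi
  have h3 : ∫ w, (g * f) w ∂μ = 0 := by
    rw [← integral_condExp (B_le Kf)]
    rw [integral_congr_ae (condExp_mul_of_stronglyMeasurable_left hg.1 hi hfi)]
    rw [integral_congr_ae (g := fun _ => (0 : ℝ))]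
    · simp
    · filter_upwards [h0] with w hw
      simp [← hw]
  rw [← sub_eq_zero, ← integral_sub (hg.int_mul (I_int hA')) (hg.int_mul (cp_int _ _)), ← h3]
  congr 1
  ext w
  simp [hf, mul_sub]

/-- lower family -/
def low (J : Finset V) (j : ℕ) : Set (Finset V) := {K | K ⊆ J ∧ K.card < j}

theorem indep (hU : Lim U μ) {j : ℕ} (Js : Finset (Finset V)) (hJ : ∀ J ∈ Js, J.card = j)
    (D : Finset V → Set (Om V)) (hD : ∀ J ∈ Js, MeasurableSet[B {J}] (D J)) :
    ∀ {g : Om V → ℝ}, Nice μ {K | ∀ J ∈ Js, ¬ J ⊆ K} g →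
    ∫ w, g w * ∏ J ∈ Js, I (D J) w ∂μ = ∫ w, g w * ∏ J ∈ Js, cp μ (low J j) (D J) w ∂μ := by
  induction Js using Finset.induction_on with
  | empty => simp
  | insert J₀ Js hJ₀ ih =>
    intro g hg
    simp only [Finset.prod_insert hJ₀]
    have hJ' : ∀ J ∈ Js, J.card = j := fun J h => hJ J (by simp [h])
    have hJ0 : J₀.card = j := hJ J₀ (by simp)
    have hD0 := hD J₀ (by simp)
    have hne : ∀ J ∈ Js, ¬ J ⊆ J₀ := by
      intro J h hs
      have := Finset.eq_of_subset_of_card_le hs (by rw [hJ0, hJ' J h])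
      exact hJ₀ (this ▸ h)
    have e1 := ih hJ' (fun J h => hD J (by simp [h])) (g := fun w => g w * I (D J₀) w) (by
      refine Nice.mul (hg.mono (B_mono' ?_)) ((Nice.I hD0).mono (B_mono' ?_))
      · intro K hK J h; exact hK J (by simp [h])
      · rintro K rfl; exact hne)
    have e2 := cond_nice hU (e := J₀) (Kf := {K | ¬ J₀ ⊆ K}) (Kf' := low J₀ j) (μ := μ)
      (by
        intro K hK
        refine ⟨Finset.inter_subset_right, ?_⟩
        rw [← hJ0]
        refine Finset.card_lt_card ⟨Finset.inter_subset_right, fun h => hK (h.trans Finset.inter_subset_left)⟩)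
      (fun K hK => hK.1) hD0
      (g := fun w => g w * ∏ J ∈ Js, cp μ (low J j) (D J) w) (by
      refine Nice.mul (hg.mono (B_mono' ?_)) (Nice.prod _ _ fun J h => ?_)
      · intro K hK; exact hK J₀ (by simp)
      · refine (Nice.cp (B_le _ _ (hD J (by simp [h])))).mono (B_mono' ?_)
        intro K hK hs
        have := Finset.card_le_card hs
        have := hK.2
        omega)
    calc _ = ∫ w, g w * I (D J₀) w * ∏ J ∈ Js, I (D J) w ∂μ := by simp only [mul_assoc]
      _ = _ := e1
      _ = ∫ w, g w * (∏ J ∈ Js, cp μ (low J j) (D J) w) * I (D J₀) w ∂μ := by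
        congr 1; ext w; ring
      _ = _ := e2
      _ = _ := by congr 1; ext w; ring

end indep
end HRL

open Finset

namespace HRL
open MeasureTheory Filter Topology
open scoped ENNReal

universe u
set_option linter.unusedSectionVars false
section count
variable {V : Type u} [DecidableEq V] [Fintype V]
variable {U : Ultrafilter ℕ} {μ : Measure (Om V)} [IsProbabilityMeasure μ]

lemma I_prod {ι : Type*} (s : Finset ι) (D : ι → Set (Om V)) (w : Om V) :
    ∏ i ∈ s, I (D i) w = I (⋂ i ∈ s, D i) w := by
  by_cases h : w ∈ ⋂ i ∈ s, D i
  · rw [I_mem h]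
    refine Finset.prod_eq_one fun i hi => I_mem ?_
    exact Set.mem_iInter₂.1 h i hi
  · rw [I_notMem h]
    simp only [Set.mem_iInter, not_forall] at h
    obtain ⟨i, hi, h⟩ := h
    exact Finset.prod_eq_zero hi (I_notMem h)

lemma count0 (hU : Lim U μ) {j : ℕ} (Js : Finset (Finset V)) (hJ : ∀ J ∈ Js, J.card = j)
    (D : Finset V → Set (Om V)) (hD : ∀ J ∈ Js, MeasurableSet[B {J}] (D J))
    (e : Finset V) (he : ∀ J ∈ Js, ¬ J ⊆ e) {S X : Set (Om V)}
    (hS : MeasurableSet[B {K | K.card < j}] S) (hX : MeasurableSet[B {e}] X) :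
    μ.real (S ∩ X ∩ ⋂ J ∈ Js, D J) =
      ∫ w, (I S w * ∏ J ∈ Js, cp μ (low J j) (D J) w) * cp μ (low e j) X w ∂μ := by
  have hm : MeasurableSet (S ∩ X ∩ ⋂ J ∈ Js, D J) := by
    refine ((B_le _ _ hS).inter (B_le _ _ hX)).inter ?_
    exact Finset.measurableSet_biInter _ fun J h => B_le _ _ (hD J h)
  have hlt : ∀ K : Finset V, K.card < j → ∀ J ∈ Js, ¬ J ⊆ K := by
    intro K hK J h hs
    have := Finset.card_le_card hs
    have := hJ J h
    omega
  rw [← int_I hm]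
  have e1 := indep hU Js hJ D hD (g := fun w => I S w * I X w) (by
    refine Nice.mul ((Nice.I hS).mono (B_mono' ?_)) ((Nice.I hX).mono (B_mono' ?_))
    · intro K hK; exact hlt K hK
    · rintro K rfl; exact he)
  have e2 := cond_nice hU (e := e) (Kf := {K | K.card < j}) (Kf' := low e j) (μ := μ)
    (by
      intro K hK
      exact ⟨Finset.inter_subset_right,
        lt_of_le_of_lt (Finset.card_le_card Finset.inter_subset_left) hK⟩)
    (fun K hK => hK.1) hX
    (g := fun w => I S w * ∏ J ∈ Js, cp μ (low J j) (D J) w) (by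
    refine Nice.mul (Nice.I hS) (Nice.prod _ _ fun J h => ?_)
    refine (Nice.cp (B_le _ _ (hD J h))).mono (B_mono' ?_)
    intro K hK
    exact hK.2)
  calc _ = ∫ w, (I S w * I X w) * ∏ J ∈ Js, I (D J) w ∂μ := by
        congr 1; ext w; rw [I_prod, I_inter, I_inter]
    _ = _ := e1
    _ = ∫ w, (I S w * ∏ J ∈ Js, cp μ (low J j) (D J) w) * I X w ∂μ := by
        congr 1; ext w; ring
    _ = _ := e2

lemma meas_alpha {j : ℕ} {e : Finset V} {D : Finset V → Set (Om V)}
    (hD : ∀ J, MeasurableSet[B {J}] (D J)) :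
    MeasurableSet[B {e}] (⋂ J ∈ e.powersetCard j, D J) := by
  refine Finset.measurableSet_biInter _ fun J h => ?_
  refine B_mono ?_ _ (hD J)
  rintro K rfl
  exact ⟨e, rfl, (Finset.mem_powersetCard.1 h).1⟩

lemma count1 (hU : Lim U μ) {j : ℕ} (Js : Finset (Finset V)) (hJ : ∀ J ∈ Js, J.card = j)
    (D : Finset V → Set (Om V)) (hD : ∀ J, MeasurableSet[B {J}] (D J))
    (e : Finset V) (he : e.powersetCard j ⊆ Js) {S A : Set (Om V)}
    (hS : MeasurableSet[B {K | K.card < j}] S) (hA : MeasurableSet[B {e}] A) {c : ℝ}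
    (hc : ∀ w ∈ S, cp μ (low e j) ((⋂ J ∈ e.powersetCard j, D J) \ A) w ≤
      c * cp μ (low e j) (⋂ J ∈ e.powersetCard j, D J) w) :
    μ.real ((S ∩ ⋂ J ∈ Js, D J) \ A) ≤ c * μ.real (S ∩ ⋂ J ∈ Js, D J) := by
  set α := ⋂ J ∈ e.powersetCard j, D J with hα
  have hαm : MeasurableSet[B {e}] α := meas_alpha hD
  set Q := Js \ e.powersetCard j with hQ
  have hQJ : ∀ J ∈ Q, J.card = j := fun J h => hJ J (Finset.mem_sdiff.1 h).1
  have hQe : ∀ J ∈ Q, ¬ J ⊆ e := by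
    intro J h hs
    exact (Finset.mem_sdiff.1 h).2 (Finset.mem_powersetCard.2 ⟨hs, hQJ J h⟩)
  have hsplit : ⋂ J ∈ Js, D J = α ∩ ⋂ J ∈ Q, D J := by
    ext w
    simp only [hα, hQ, Set.mem_iInter, Set.mem_inter_iff, Finset.mem_sdiff]
    constructor
    · intro h; exact ⟨fun J hJ => h J (he hJ), fun J hJ => h J hJ.1⟩
    · rintro ⟨h1, h2⟩ J hJ
      by_cases h : J ∈ e.powersetCard j
      · exact h1 J h
      · exact h2 J ⟨hJ, h⟩
  have e1 := count0 hU Q hQJ D (fun J _ => hD J) e hQe hS (hαm.diff hA)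
  have e2 := count0 hU Q hQJ D (fun J _ => hD J) e hQe hS hαm
  have s1 : (S ∩ ⋂ J ∈ Js, D J) \ A = S ∩ (α \ A) ∩ ⋂ J ∈ Q, D J := by
    rw [hsplit]; ext w; simp only [Set.mem_sdiff, Set.mem_inter_iff]; tauto
  have s2 : (S ∩ ⋂ J ∈ Js, D J) = S ∩ α ∩ ⋂ J ∈ Q, D J := by
    rw [hsplit, Set.inter_assoc]
  rw [s1, s2, e1, e2, ← integral_const_mul]
  have hn : Nice μ {K | K.card < j} (fun w => I S w * ∏ J ∈ Q, cp μ (low J j) (D J) w) := by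
    refine Nice.mul (Nice.I hS) (Nice.prod _ _ fun J h => ?_)
    refine (Nice.cp (B_le _ _ (hD J))).mono (B_mono' ?_)
    intro K hK
    exact hK.2
  refine integral_mono_ae (hn.int_mul (cp_int _ _)) ((hn.int_mul (cp_int _ _)).const_mul c) ?_
  have hpos : ∀ᵐ w ∂μ, ∀ J ∈ Q, 0 ≤ cp μ (low J j) (D J) w :=
    (ae_ball_iff (Finset.countable_toSet Q)).2 fun J _ => cp_nonneg _ _
  filter_upwards [hpos] with w hw
  by_cases hwS : w ∈ S
  · have h1 := hc w hwS
    have h2 : 0 ≤ ∏ J ∈ Q, cp μ (low J j) (D J) w := Finset.prod_nonneg hw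
    rw [I_mem hwS]
    nlinarith [mul_le_mul_of_nonneg_left h1 h2]
  · rw [I_notMem hwS]; simp

lemma count2 (hU : Lim U μ) {ι : Type*} {j : ℕ} (T : Finset ι) (e : ι → Finset V)
    (A : ι → Set (Om V)) (hA : ∀ i, MeasurableSet[B {e i}] (A i))
    (D : Finset V → Set (Om V)) (hD : ∀ J, MeasurableSet[B {J}] (D J))
    {c : ℝ} (hcT : T.card * c < 1)
    (S : ι → Set (Om V)) (hS : ∀ i, MeasurableSet[B (low (e i) j)] (S i))
    (hc : ∀ i, ∀ w ∈ S i, cp μ (low (e i) j) ((⋂ J ∈ (e i).powersetCard j, D J) \ A i) w ≤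
      c * cp μ (low (e i) j) (⋂ J ∈ (e i).powersetCard j, D J) w)
    (h0 : μ (⋂ i ∈ T, A i) = 0) :
    μ ((⋂ i ∈ T, S i) ∩ ⋂ J ∈ T.biUnion (fun i => (e i).powersetCard j),
      {w | 0 < cp μ (low J j) (D J) w}) = 0 := by
  set Js := T.biUnion (fun i => (e i).powersetCard j) with hJs
  have hJ : ∀ J ∈ Js, J.card = j := by
    intro J h
    obtain ⟨i, _, h⟩ := Finset.mem_biUnion.1 h
    exact (Finset.mem_powersetCard.1 h).2
  set S' := ⋂ i ∈ T, S i with hS'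
  have hSm : MeasurableSet[B {K | K.card < j}] S' := by
    refine Finset.measurableSet_biInter _ fun i _ => B_mono' ?_ _ (hS i)
    intro K hK; exact hK.2
  set X := S' ∩ ⋂ J ∈ Js, D J with hX
  have hXm : MeasurableSet X := (B_le _ _ hSm).inter
    (Finset.measurableSet_biInter _ fun J _ => B_le _ _ (hD J))
  have h1 : ∀ i ∈ T, μ.real (X \ A i) ≤ c * μ.real X := by
    intro i hi
    refine count1 hU Js hJ D hD (e i) ?_ hSm (hA i) ?_
    · exact Finset.subset_biUnion_of_mem (fun i => (e i).powersetCard j) hi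
    · intro w hw
      exact hc i w (Set.mem_iInter₂.1 hw i hi)
  have h2 : μ.real X ≤ ∑ i ∈ T, μ.real (X \ A i) := by
    have hsub : X ⊆ (⋂ i ∈ T, A i) ∪ ⋃ i ∈ T, X \ A i := by
      intro w hw
      by_cases h : w ∈ ⋂ i ∈ T, A i
      · exact Or.inl h
      · simp only [Set.mem_iInter, not_forall] at h
        obtain ⟨i, hi, h⟩ := h
        exact Or.inr (Set.mem_biUnion hi ⟨hw, h⟩)
    calc μ.real X ≤ μ.real (⋂ i ∈ T, A i) + μ.real (⋃ i ∈ T, X \ A i) :=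
          (measureReal_mono hsub).trans (measureReal_union_le _ _)
      _ ≤ _ := by
          rw [Measure.real, h0]
          simpa using measureReal_biUnion_finset_le T _
  have h3 : μ.real X = 0 := by
    have h4 := h2.trans (Finset.sum_le_sum h1)
    rw [Finset.sum_const, nsmul_eq_mul, ← mul_assoc] at h4
    have h5 : 0 ≤ μ.real X := measureReal_nonneg
    nlinarith
  have hn : Nice μ {K | ∀ J ∈ Js, ¬ J ⊆ K} (I S') := by
    refine (Nice.I hSm).mono (B_mono' ?_)
    intro K hK J h hs
    have := Finset.card_le_card hs
    have := hJ J h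
    simp only [Set.mem_setOf_eq] at hK
    omega
  have e1 := indep hU Js hJ D (fun J _ => hD J) hn
  have e2 : ∫ w, I S' w * ∏ J ∈ Js, I (D J) w ∂μ = μ.real X := by
    rw [← int_I hXm]
    congr 1; ext w; rw [I_prod, hX, I_inter]
  rw [e2, h3] at e1
  have hpos : ∀ᵐ w ∂μ, ∀ J ∈ Js, 0 ≤ cp μ (low J j) (D J) w :=
    (ae_ball_iff (Finset.countable_toSet Js)).2 fun J _ => cp_nonneg _ _
  have hn2 : Nice μ {K | K.card < j} (fun w => I S' w * ∏ J ∈ Js, cp μ (low J j) (D J) w) := by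
    refine Nice.mul (Nice.I hSm) (Nice.prod _ _ fun J h => ?_)
    refine (Nice.cp (B_le _ _ (hD J))).mono (B_mono' ?_)
    intro K hK
    exact hK.2
  have e3 := (integral_eq_zero_iff_of_nonneg_ae (by
    filter_upwards [hpos] with w hw
    exact mul_nonneg (I_nonneg _ _) (Finset.prod_nonneg hw)) hn2.int).1 e1.symm
  rw [measure_eq_zero_iff_ae_notMem]
  filter_upwards [e3] with w hw hmem
  simp only [Pi.zero_apply, I_mem hmem.1, one_mul] at hw
  have : 0 < ∏ J ∈ Js, cp μ (low J j) (D J) w :=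
    Finset.prod_pos fun J h => Set.mem_iInter₂.1 hmem.2 J h
  exact this.ne' hw

/-- regularization -/
lemma reg (Kf : Set (Finset V)) {T : Type*} [Finite T] (t : Om V → T)
    (ht : ∀ τ, MeasurableSet (t ⁻¹' {τ})) (R : T → Set (Om V))
    (hR : ∀ τ, MeasurableSet[B Kf] (R τ)) {A : Set (Om V)} (hA : MeasurableSet A)
    {c : ℝ} (hc : 0 < c) :
    c * μ.real {w | w ∈ A ∧ ¬ cp μ Kf (t ⁻¹' {t w} \ A) w ≤ c * cp μ Kf (t ⁻¹' {t w}) w} ≤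
      (c + 1) * μ.real (symmDiff {w | w ∈ R (t w)} A) := by
  classical
  have := Fintype.ofFinite T
  set A' := {w | w ∈ R (t w)} with hA'
  let E : T → Set (Om V) := fun τ =>
    R τ ∩ {w | c * cp μ Kf (t ⁻¹' {τ}) w < cp μ Kf (t ⁻¹' {τ} \ A) w}
  have hE : ∀ τ, MeasurableSet[B Kf] (E τ) := fun τ =>
    (hR τ).inter (measurableSet_lt ((cp_sm Kf _).measurable.const_mul c) (cp_sm Kf _).measurable)
  have h1 : ∀ τ, c * μ.real (t ⁻¹' {τ} ∩ E τ) ≤ μ.real ((t ⁻¹' {τ} \ A) ∩ E τ) := by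
    intro τ
    have k : ∀ X : Set (Om V), MeasurableSet X →
        ∫ w in E τ, cp μ Kf X w ∂μ = μ.real (X ∩ E τ) := by
      intro X hX
      rw [cp_setInt hX (hE τ), I, setIntegral_indicator hX, Set.inter_comm]
      simp
    rw [← k _ (ht τ), ← k _ ((ht τ).diff hA), ← integral_const_mul]
    refine setIntegral_mono_on ((cp_int _ _).const_mul c).integrableOn (cp_int _ _).integrableOn
      (B_le _ _ (hE τ)) ?_
    intro w hw
    exact hw.2.le
  have h2 : {w | w ∈ A ∧ ¬ cp μ Kf (t ⁻¹' {t w} \ A) w ≤ c * cp μ Kf (t ⁻¹' {t w}) w} ⊆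
      symmDiff A' A ∪ ⋃ τ ∈ (Finset.univ : Finset T), (t ⁻¹' {τ} ∩ E τ) := by
    rintro w ⟨hw, hw2⟩
    by_cases h : w ∈ A'
    · right
      simp only [Set.mem_iUnion]
      exact ⟨t w, by simp, rfl, h, not_le.1 hw2⟩
    · left
      exact Or.inr ⟨hw, h⟩
  have h3 : ∑ τ : T, μ.real ((t ⁻¹' {τ} \ A) ∩ E τ) ≤ μ.real (symmDiff A' A) := by
    rw [← measureReal_biUnion_finset]
    · refine measureReal_mono ?_
      intro w hw
      simp only [Set.mem_iUnion] at hw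
      obtain ⟨τ, _, ⟨hw1, hw2⟩, hw3⟩ := hw
      left
      refine ⟨?_, hw2⟩
      have : t w = τ := hw1
      subst this
      exact hw3.1
    · intro τ _ τ' _ hne
      refine Set.disjoint_left.2 ?_
      rintro w ⟨⟨h, _⟩, _⟩ ⟨⟨h', _⟩, _⟩
      exact hne (h.symm.trans h')
    · intro τ _
      exact ((ht τ).diff hA).inter (B_le _ _ (hE τ))
  calc _ ≤ c * (μ.real (symmDiff A' A) + ∑ τ : T, μ.real (t ⁻¹' {τ} ∩ E τ)) := by
        gcongr
        refine (measureReal_mono h2).trans ((measureReal_union_le _ _).trans ?_)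
        gcongr
        exact measureReal_biUnion_finset_le _ _
    _ = c * μ.real (symmDiff A' A) + ∑ τ : T, c * μ.real (t ⁻¹' {τ} ∩ E τ) := by
        rw [mul_add, Finset.mul_sum]
    _ ≤ c * μ.real (symmDiff A' A) + μ.real (symmDiff A' A) := by
        gcongr
        exact (Finset.sum_le_sum fun τ _ => h1 τ).trans h3
    _ = _ := by ring

end count

section col
variable {V : Type u} [DecidableEq V] [Fintype V]

lemma exists_hat {κ : Type*} [Finite κ] (c : Z V → κ) (w : Om V) :
    ∃ k, w ∈ cl {z | c z = k} := by
  obtain ⟨k, hk⟩ := Ultrafilter.eq_pure_of_finite (Ultrafilter.map c w)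
  refine ⟨k, ?_⟩
  have : ({k} : Set κ) ∈ Ultrafilter.map c w := by rw [hk]; exact Ultrafilter.mem_pure.2 rfl
  exact this

/-- extension of a colouring -/
noncomputable def hat {κ : Type*} [Finite κ] (c : Z V → κ) (w : Om V) : κ := (exists_hat c w).choose

lemma hat_mem {κ : Type*} [Finite κ] (c : Z V → κ) (w : Om V) : w ∈ cl {z | c z = hat c w} :=
  (exists_hat c w).choose_spec

lemma hat_iff {κ : Type*} [Finite κ] (c : Z V → κ) (w : Om V) (k : κ) :
    hat c w = k ↔ w ∈ cl {z | c z = k} := by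
  constructor
  · rintro rfl; exact hat_mem c w
  · intro h
    have h2 : w ∈ cl ({z | c z = k} ∩ {z | c z = hat c w}) := by
      rw [cl_inter]; exact ⟨h, hat_mem c w⟩
    by_contra hne
    have : ({z | c z = k} ∩ {z | c z = hat c w} : Set (Z V)) = ∅ := by
      ext z; simp only [Set.mem_inter_iff, Set.mem_setOf_eq, Set.mem_empty_iff_false, iff_false]
      rintro ⟨h1, h2⟩; exact hne (h2.symm.trans h1)
    rw [this, cl_empty] at h2
    exact h2

lemma hat_comp {κ κ' : Type*} [Finite κ] [Finite κ'] (c : Z V → κ) (f : κ → κ') (w : Om V) :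
    hat (fun z => f (c z)) w = f (hat c w) := by
  rw [hat_iff]
  refine cl_mono ?_ (hat_mem c w)
  intro z hz
  exact congrArg f hz

lemma struct {e : Finset V} {j : ℕ} {S : Set (Z V)} (hS : Alg (low e (j + 1)) S) :
    ∃ (κ : Type) (_ : Finite κ) (c : Finset V → Z V → κ) (R : (Finset V → κ) → Set (Om V)),
      (∀ J, depF J (c J)) ∧ (∀ τ, MeasurableSet[B (low e j)] (R τ)) ∧
      (∀ τ τ', (∀ J ∈ e.powersetCard j, τ J = τ' J) → R τ = R τ') ∧
      ∀ w, w ∈ cl S ↔ w ∈ R (fun J => hat (c J) w) := by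
  classical
  induction hS with
  | base K S hK hd =>
    rcases Nat.lt_succ_iff_lt_or_eq.1 hK.2 with h | h
    · refine ⟨Unit, inferInstance, fun _ _ => (), fun _ => cl S, ?_, ?_, ?_, ?_⟩
      · intro _ _ _ _ _; rfl
      · intro _; exact meas_B (.base K S ⟨hK.1, h⟩ hd)
      · intro _ _ _; rfl
      · intro w; rfl
    · refine ⟨Bool, inferInstance, fun J z => if J = K then decide (z ∈ S) else false,
        fun τ => if τ K = true then Set.univ else ∅, ?_, ?_, ?_, ?_⟩
      · intro J n x y hxy
        by_cases hJ : J = K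
        · subst hJ
          have := hd n x y hxy
          simp only [eq_iff_iff] at this
          simp [this]
        · simp [hJ]
      · intro τ; dsimp only; split_ifs
        · exact @MeasurableSet.univ _ (B (low e j))
        · exact @MeasurableSet.empty _ (B (low e j))
      · intro τ τ' hτ
        dsimp only
        rw [hτ K (Finset.mem_powersetCard.2 ⟨hK.1, h⟩)]
      · intro w
        have := hat_iff (fun z => if K = K then decide (z ∈ S) else false) w true
        simp only [if_true, decide_eq_true_eq, Set.setOf_mem_eq] at this
        simp only [if_true]
        split_ifs with h1
        · simp [this.1 h1]
        · simp only [Set.mem_empty_iff_false, iff_false]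
          exact fun h2 => h1 (this.2 h2)
  | univ =>
    refine ⟨Unit, inferInstance, fun _ _ => (), fun _ => Set.univ, ?_, ?_, ?_, ?_⟩
    · intro _ _ _ _ _; rfl
    · intro _; exact @MeasurableSet.univ _ (B (low e j))
    · intro _ _ _; rfl
    · intro w; simp [cl_univ]
  | compl S _ ih =>
    obtain ⟨κ, hκ, c, R, h1, h2, h3, h4⟩ := ih
    refine ⟨κ, hκ, c, fun τ => (R τ)ᶜ, h1, fun τ => (h2 τ).compl, ?_, ?_⟩
    · intro τ τ' h; dsimp only; rw [h3 τ τ' h]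
    · intro w; rw [cl_compl, Set.mem_compl_iff, h4 w]; rfl
  | inter S S' _ _ ih ih' =>
    obtain ⟨κ, hκ, c, R, h1, h2, h3, h4⟩ := ih
    obtain ⟨κ', hκ', c', R', h1', h2', h3', h4'⟩ := ih'
    refine ⟨κ × κ', inferInstance, fun J z => (c J z, c' J z),
      fun τ => R (fun J => (τ J).1) ∩ R' (fun J => (τ J).2), ?_, ?_, ?_, ?_⟩
    · intro J n x y hxy
      simp only [h1 J n x y hxy, h1' J n x y hxy]
    · intro τ; exact (h2 _).inter (h2' _)
    · intro τ τ' h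
      dsimp only
      rw [h3 _ (fun J => (τ' J).1) (fun J hJ => by rw [h J hJ]),
        h3' _ (fun J => (τ' J).2) (fun J hJ => by rw [h J hJ])]
    · intro w
      have e1 : ∀ J, (hat (fun z => (c J z, c' J z)) w).1 = hat (c J) w := fun J =>
        (hat_comp (fun z => (c J z, c' J z)) Prod.fst w).symm
      have e2 : ∀ J, (hat (fun z => (c J z, c' J z)) w).2 = hat (c' J) w := fun J =>
        (hat_comp (fun z => (c J z, c' J z)) Prod.snd w).symm
      simp only [e1, e2]
      rw [cl_inter, Set.mem_inter_iff, h4 w, h4' w]; rfl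

end col
end HRL

open Finset
namespace HRL
open MeasureTheory Filter Topology
open scoped ENNReal
universe u
set_option linter.unusedSectionVars false

section ind
variable {V : Type u} [DecidableEq V] [Fintype V]
variable {U : Ultrafilter ℕ} {μ : Measure (Om V)} [IsProbabilityMeasure μ]

lemma alg_empty {S : Set (Z V)} (h : Alg ∅ S) : S = ∅ ∨ S = Set.univ := by
  induction h with
  | base K S hK _ => exact hK.elim
  | univ => exact Or.inr rfl
  | compl S _ ih => rcases ih with rfl | rfl <;> simp
  | inter S T _ _ ih ih' => rcases ih with rfl | rfl <;> rcases ih' with rfl | rfl <;> simp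

lemma B_empty {A : Set (Om V)} (h : MeasurableSet[B (∅ : Set (Finset V))] A) :
    A = ∅ ∨ A = Set.univ := by
  have : B (∅ : Set (Finset V)) ≤ ⊥ := by
    refine MeasurableSpace.generateFrom_le ?_
    rintro _ ⟨S, hS, rfl⟩
    rw [MeasurableSpace.measurableSet_bot_iff]
    rcases alg_empty hS with rfl | rfl
    · exact Or.inl cl_empty
    · exact Or.inr cl_univ
  exact MeasurableSpace.measurableSet_bot_iff.1 (this _ h)

lemma null_cp {Kf : Set (Finset V)} {A : Set (Om V)} (hA : MeasurableSet A) :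
    μ.real (A \ {w | 0 < cp μ Kf A w}) = 0 := by
  have hE : MeasurableSet[B Kf] {w | cp μ Kf A w ≤ 0} :=
    measurableSet_le (cp_sm Kf _).measurable (@measurable_const _ _ _ (B Kf) _)
  have h1 := cp_setInt (μ := μ) hA hE
  have h2 : ∫ w in {w | cp μ Kf A w ≤ 0}, cp μ Kf A w ∂μ ≤ 0 :=
    setIntegral_nonpos (B_le _ _ hE) fun w hw => hw
  rw [h1, ← int_mul_I (B_le _ _ hE)] at h2
  simp_rw [← I_inter] at h2
  rw [int_I ((B_le _ _ hE).inter hA)] at h2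
  refine le_antisymm (le_trans (measureReal_mono ?_) h2) measureReal_nonneg
  rintro w ⟨h, h'⟩
  have h2 : ¬ 0 < cp μ Kf A w := h'
  exact ⟨show cp μ Kf A w ≤ 0 from not_lt.1 h2, h⟩

/-- the inductive statement -/
def Ind (μ : Measure (Om V)) (j : ℕ) : Prop :=
  ∀ (ι : Type u) [Finite ι] (e : ι → Finset V) (A : ι → Set (Om V)),
    (∀ i, MeasurableSet[B (low (e i) j)] (A i)) → ∀ ε : ℝ, 0 < ε →
    ∃ A' : ι → Set (Z V), (∀ i, dep (e i) (A' i)) ∧ (∀ i, μ.real (A i \ cl (A' i)) ≤ ε) ∧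
      ∀ T : Finset ι, μ (⋂ i ∈ T, A i) = 0 → ⋂ i ∈ T, A' i = ∅

lemma ind_zero : Ind μ 0 := by
  classical
  intro ι _ e A hA ε hε
  have hlow : ∀ J : Finset V, low J 0 = ∅ := by
    intro J; ext K; simp [low]
  have h : ∀ i, A i = ∅ ∨ A i = Set.univ := fun i => B_empty (hlow (e i) ▸ hA i)
  refine ⟨fun i => if A i = ∅ then ∅ else Set.univ, ?_, ?_, ?_⟩
  · intro i n x y _
    by_cases hi : A i = ∅ <;> simp [hi]
  · intro i
    by_cases hi : A i = ∅
    · simp [hi, hε.le]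
    · simp [hi, cl_univ, hε.le]
  · intro T hT
    by_contra hne
    obtain ⟨z, hz⟩ := Set.nonempty_iff_ne_empty.2 hne
    have : ⋂ i ∈ T, A i = Set.univ := by
      refine Set.eq_univ_of_forall fun w => Set.mem_iInter₂.2 fun i hi => ?_
      have := Set.mem_iInter₂.1 hz i hi
      rcases h i with h | h
      · simp [h] at this
      · simp [h]
    rw [this, measure_univ] at hT
    exact one_ne_zero hT

/-- restriction of a colour profile -/
def res {κ : Type*} (k0 : κ) (e : Finset V) (j : ℕ) (τ : Finset V → κ) : Finset V → κ :=
  fun J => if J ∈ e.powersetCard j then τ J else k0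

lemma res_eq_iff {κ : Type*} (k0 : κ) (e : Finset V) (j : ℕ) (τ τ' : Finset V → κ) :
    res k0 e j τ = res k0 e j τ' ↔ ∀ J ∈ e.powersetCard j, τ J = τ' J := by
  constructor
  · intro h J hJ
    have := congrFun h J
    simpa only [res, if_pos hJ] using this
  · intro h
    ext J
    by_cases hJ : J ∈ e.powersetCard j
    · simp only [res, if_pos hJ, h J hJ]
    · simp only [res, if_neg hJ]

lemma res_res {κ : Type*} (k0 : κ) (e : Finset V) (j : ℕ) (τ : Finset V → κ) :
    ∀ J ∈ e.powersetCard j, res k0 e j τ J = τ J := by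
  intro J hJ; simp only [res, if_pos hJ]

/-- simultaneous structure for a finite family -/
lemma struct_family {ι : Type u} [Finite ι] (e : ι → Finset V) (j : ℕ) (S : ι → Set (Z V))
    (hS : ∀ i, Alg (low (e i) (j + 1)) (S i)) :
    ∃ (κ : Type u) (_ : Finite κ) (_ : Nonempty κ) (c : Finset V → Z V → κ)
      (R : ι → (Finset V → κ) → Set (Om V)),
      (∀ J, depF J (c J)) ∧ (∀ i τ, MeasurableSet[B (low (e i) j)] (R i τ)) ∧
      (∀ i τ τ', (∀ J ∈ (e i).powersetCard j, τ J = τ' J) → R i τ = R i τ') ∧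
      ∀ i w, w ∈ cl (S i) ↔ w ∈ R i (fun J => hat (c J) w) := by
  choose κ hκ c R h1 h2 h3 h4 using fun i => struct (hS i)
  have : ∀ i, Finite (κ i) := hκ
  refine ⟨∀ i, κ i, inferInstance, ⟨fun i => c i ∅ ⟨0, fun _ => 0⟩⟩, fun J z i => c i J z,
    fun i τ => R i (fun J => τ J i), ?_, ?_, ?_, ?_⟩
  · intro J n x y hxy
    funext i
    exact h1 i J n x y hxy
  · intro i τ; exact h2 i _
  · intro i τ τ' h
    exact h3 i _ _ fun J hJ => by rw [h J hJ]
  · intro i w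
    have e1 : ∀ J, (hat (fun z (i : ι) => c i J z) w) i = hat (c i J) w := fun J =>
      (hat_comp (fun z (i : ι) => c i J z) (fun k => k i) w).symm
    simp only [e1]
    exact h4 i w

lemma ind_succ (hU : Lim U μ) {j : ℕ} (ih : Ind μ j) : Ind μ (j + 1) := by
  classical
  intro ι _ e A hA ε hε
  have := Fintype.ofFinite ι
  have hA1 : ∀ i, MeasurableSet[B {e i}] (A i) := fun i =>
    B_mono (fun K hK => ⟨e i, Set.mem_singleton _, hK.1⟩) _ (hA i)
  have hA0 : ∀ i, MeasurableSet (A i) := fun i => B_le _ _ (hA i)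
  obtain ⟨c, hc, hcm⟩ : ∃ c : ℝ, 0 < c ∧ Fintype.card ι * c < 1 := by
    refine ⟨1 / (Fintype.card ι + 1), by positivity, ?_⟩
    rw [mul_one_div, div_lt_one (by positivity)]
    linarith
  obtain ⟨δ, hδ, hδε⟩ : ∃ δ : ℝ, 0 < δ ∧ (c + 1) * δ ≤ c * (ε / 2) :=
    ⟨c * (ε / 2) / (c + 1), by positivity, le_of_eq (by field_simp)⟩
  choose S hSalg hSd using fun i => B_approx μ (hA i) (ENNReal.ofReal_pos.2 hδ)
  obtain ⟨κ, hκ, ⟨k0⟩, col, R, hcol, hRm, hRd, hRS⟩ := struct_family e j S hSalg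
  have := Fintype.ofFinite κ
  have hD : ∀ J k, dep J {z | col J z = k} := by
    intro J k n x y hxy
    simp only [Set.mem_ofPred_eq, hcol J n x y hxy]
  have hDm : ∀ J k, MeasurableSet[B {J}] (cl {z | col J z = k}) := fun J k =>
    meas_B (.base J _ rfl (hD J k))
  let pr : Om V → Finset V → κ := fun w J => hat (col J) w
  let t : ι → Om V → Finset V → κ := fun i w => res k0 (e i) j (pr w)
  have htα : ∀ i τ, t i ⁻¹' {res k0 (e i) j τ} =
      ⋂ J ∈ (e i).powersetCard j, cl {z | col J z = τ J} := by
    intro i τ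
    ext w
    simp only [Set.mem_preimage, Set.mem_singleton_iff, Set.mem_iInter, t]
    rw [res_eq_iff]
    exact forall₂_congr fun J _ => hat_iff _ _ _
  have htm : ∀ i τ, MeasurableSet (t i ⁻¹' {τ}) := by
    intro i τ
    by_cases h : ∃ τ', res k0 (e i) j τ' = τ
    · obtain ⟨τ', rfl⟩ := h
      rw [htα]
      exact B_le _ _ (meas_alpha fun J => hDm J (τ' J))
    · have : t i ⁻¹' {τ} = ∅ := by
        ext w
        simp only [Set.mem_preimage, Set.mem_singleton_iff, Set.mem_empty_iff_false, iff_false]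
        exact fun h' => h ⟨_, h'⟩
      rw [this]; exact MeasurableSet.empty
  let Sg : ι → (Finset V → κ) → Set (Om V) := fun i τ =>
    {w | cp μ (low (e i) j) (t i ⁻¹' {τ} \ A i) w ≤ c * cp μ (low (e i) j) (t i ⁻¹' {τ}) w}
  have hSg : ∀ i τ, MeasurableSet[B (low (e i) j)] (Sg i τ) := fun i τ =>
    measurableSet_le (cp_sm _ _).measurable ((cp_sm _ _).measurable.const_mul c)
  let Dp : Finset V → κ → Set (Om V) := fun J k =>
    {w | 0 < cp μ (low J j) (cl {z | col J z = k}) w}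
  have hDp : ∀ J k, MeasurableSet[B (low J j)] (Dp J k) := fun J k =>
    measurableSet_lt (@measurable_const _ _ _ (B (low J j)) _) (cp_sm _ _).measurable
  let ι' := (Finset V × κ) ⊕ (ι × (Finset V → κ))
  let e' : ι' → Finset V := Sum.elim (fun p => p.1) (fun p => e p.1)
  let X : ι' → Set (Om V) := Sum.elim (fun p => Dp p.1 p.2) (fun p => Sg p.1 p.2)
  have hX : ∀ i, MeasurableSet[B (low (e' i) j)] (X i) := by
    rintro (⟨J, k⟩ | ⟨i, τ⟩)
    · exact hDp J k
    · exact hSg i τ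
  have hε' : 0 < ε / 2 / (Fintype.card ι' + 1) := by positivity
  obtain ⟨Y, hYd, hYm, hYe⟩ := ih ι' e' X hX _ hε'
  let As : ι → Set (Z V) := fun i => {z | z ∈ Y (.inr (i, res k0 (e i) j fun J => col J z)) ∧
    ∀ J ∈ (e i).powersetCard j, z ∈ Y (.inl (J, col J z))}
  refine ⟨As, ?_, ?_, ?_⟩
  · intro i n x y hxy
    have hc1 : ∀ J ∈ (e i).powersetCard j, col J ⟨n, x⟩ = col J ⟨n, y⟩ := fun J hJ =>
      hcol J n x y fun v hv => hxy v ((Finset.mem_powersetCard.1 hJ).1 hv)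
    have hc2 := (res_eq_iff k0 (e i) j (fun J => col J ⟨n, x⟩) (fun J => col J ⟨n, y⟩)).2 hc1
    simp only [As, Set.mem_ofPred_eq]
    rw [hc2]
    congr 1
    · exact hYd (.inr (i, _)) n x y hxy
    · refine propext (forall₂_congr fun J hJ => ?_)
      rw [hc1 J hJ]
      exact iff_of_eq (hYd (.inl (J, _)) n x y
        fun v hv => hxy v ((Finset.mem_powersetCard.1 hJ).1 hv))
  · intro i
    have hsub : A i \ cl (As i) ⊆
        {w | w ∈ A i ∧ ¬ cp μ (low (e i) j) (t i ⁻¹' {t i w} \ A i) w ≤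
          c * cp μ (low (e i) j) (t i ⁻¹' {t i w}) w} ∪
        ((⋃ q ∈ (Finset.univ : Finset ι'), X q \ cl (Y q)) ∪
          ⋃ p ∈ (Finset.univ : Finset (Finset V × κ)),
            cl {z | col p.1 z = p.2} \ Dp p.1 p.2) := by
      rintro w ⟨hwA, hwAs⟩
      by_contra hcon
      simp only [Set.mem_union, not_or, Set.mem_iUnion, not_exists] at hcon
      obtain ⟨g1, g2, g3⟩ := hcon
      apply hwAs
      have g1' : w ∈ Sg i (t i w) := by
        by_contra h
        exact g1 ⟨hwA, h⟩
      have f1 : w ∈ cl (Y (.inr (i, t i w))) := by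
        by_contra h
        exact g2 (.inr (i, t i w)) (Finset.mem_univ _) ⟨g1', h⟩
      have f2 : ∀ J, w ∈ cl (Y (.inl (J, pr w J))) := by
        intro J
        by_contra h
        refine g2 (.inl (J, pr w J)) (Finset.mem_univ _) ⟨?_, h⟩
        by_contra h'
        exact g3 (J, pr w J) (Finset.mem_univ _) ⟨hat_mem _ _, h'⟩
      have f3 : ∀ J, w ∈ cl {z | col J z = pr w J} := fun J => hat_mem _ _
      have F1 : ∀ᶠ z in (show Filter (Z V) from Ultrafilter.toFilter w),
          z ∈ Y (.inr (i, t i w)) := f1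
      have F2 : ∀ᶠ z in (show Filter (Z V) from Ultrafilter.toFilter w),
          ∀ J, z ∈ Y (.inl (J, pr w J)) := Filter.eventually_all.2 f2
      have F3 : ∀ᶠ z in (show Filter (Z V) from Ultrafilter.toFilter w),
          ∀ J, col J z = pr w J := Filter.eventually_all.2 f3
      have F4 : ∀ᶠ z in (show Filter (Z V) from Ultrafilter.toFilter w), z ∈ As i := by
        filter_upwards [F1, F2, F3] with z z1 z2 z3
        have : (fun J => col J z) = pr w := funext z3
        simp only [As, Set.mem_ofPred_eq]
        refine ⟨?_, fun J _ => ?_⟩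
        · rw [this]; exact z1
        · rw [z3 J]; exact z2 J
      exact F4
    have b1 : μ.real {w | w ∈ A i ∧ ¬ cp μ (low (e i) j) (t i ⁻¹' {t i w} \ A i) w ≤
          c * cp μ (low (e i) j) (t i ⁻¹' {t i w}) w} ≤ ε / 2 := by
      have h := reg (μ := μ) (low (e i) j) (t i) (htm i) (R i) (hRm i) (hA0 i) hc
      have hS' : {w | w ∈ R i (t i w)} = cl (S i) := by
        ext w
        rw [hRS i w]
        simp only [Set.mem_ofPred_eq]
        rw [hRd i (t i w) (fun J => hat (col J) w) (res_res k0 (e i) j _)]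
      rw [hS'] at h
      have h2 : μ.real (symmDiff (cl (S i)) (A i)) ≤ δ :=
        ENNReal.toReal_le_of_le_ofReal hδ.le (hSd i).le
      have h3 := h.trans ((mul_le_mul_of_nonneg_left h2 (by positivity)).trans hδε)
      exact le_of_mul_le_mul_left h3 hc
    have b2 : μ.real (⋃ q ∈ (Finset.univ : Finset ι'), X q \ cl (Y q)) ≤ ε / 2 := by
      refine (measureReal_biUnion_finset_le _ _).trans ?_
      refine (Finset.sum_le_card_nsmul _ _ _ fun q _ => hYm q).trans ?_
      rw [nsmul_eq_mul, Finset.card_univ, mul_div_assoc', div_le_iff₀ (by positivity)]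
      nlinarith
    have b3 : μ.real (⋃ p ∈ (Finset.univ : Finset (Finset V × κ)),
            cl {z | col p.1 z = p.2} \ Dp p.1 p.2) ≤ 0 := by
      refine (measureReal_biUnion_finset_le _ _).trans ?_
      refine (Finset.sum_nonpos fun p _ => le_of_eq ?_)
      exact null_cp (meas_cl _)
    have := measureReal_mono (μ := μ) hsub
    have u1 := measureReal_union_le (μ := μ)
      {w | w ∈ A i ∧ ¬ cp μ (low (e i) j) (t i ⁻¹' {t i w} \ A i) w ≤
          c * cp μ (low (e i) j) (t i ⁻¹' {t i w}) w}
      ((⋃ q ∈ (Finset.univ : Finset ι'), X q \ cl (Y q)) ∪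
          ⋃ p ∈ (Finset.univ : Finset (Finset V × κ)),
            cl {z | col p.1 z = p.2} \ Dp p.1 p.2)
    have u2 := measureReal_union_le (μ := μ)
      (⋃ q ∈ (Finset.univ : Finset ι'), X q \ cl (Y q))
          (⋃ p ∈ (Finset.univ : Finset (Finset V × κ)),
            cl {z | col p.1 z = p.2} \ Dp p.1 p.2)
    linarith
  · intro T hT
    by_contra hne
    obtain ⟨z, hz⟩ := Set.nonempty_iff_ne_empty.2 hne
    have hz' : ∀ i ∈ T, z ∈ As i := fun i hi => Set.mem_iInter₂.1 hz i hi
    let τ : Finset V → κ := fun J => col J z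
    have hTc : (T.card : ℝ) * c < 1 := by
      refine lt_of_le_of_lt ?_ hcm
      gcongr
      exact Finset.card_le_univ T
    have hn := count2 (μ := μ) (j := j) hU T e A hA1 (fun J => cl {z | col J z = τ J})
      (fun J => hDm J (τ J)) hTc (fun i => Sg i (res k0 (e i) j τ)) (fun i => hSg i _)
      (by
        intro i w hw
        rw [← htα i τ]
        exact hw) hT
    let T' : Finset ι' := T.image (fun i => .inr (i, res k0 (e i) j τ)) ∪
      (T.biUnion (fun i => (e i).powersetCard j)).image (fun J => .inl (J, τ J))
    have hT' : ⋂ q ∈ T', X q = (⋂ i ∈ T, Sg i (res k0 (e i) j τ)) ∩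
        ⋂ J ∈ T.biUnion (fun i => (e i).powersetCard j),
          {w | 0 < cp μ (low J j) (cl {z | col J z = τ J}) w} := by
      rw [Finset.set_biInter_inter, Finset.set_biInter_finset_image,
        Finset.set_biInter_finset_image]
      rfl
    have hemp := hYe T' (by rw [hT']; exact hn)
    have : z ∈ ⋂ q ∈ T', Y q := by
      rw [Finset.set_biInter_inter, Finset.set_biInter_finset_image,
        Finset.set_biInter_finset_image]
      refine ⟨Set.mem_iInter₂.2 fun i hi => (hz' i hi).1, Set.mem_iInter₂.2 fun J hJ => ?_⟩
      obtain ⟨i, hi, hJ⟩ := Finset.mem_biUnion.1 hJ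
      exact (hz' i hi).2 J hJ
    rw [hemp] at this
    exact this

theorem ind_all (hU : Lim U μ) (j : ℕ) : Ind μ j := by
  induction j with
  | zero => exact ind_zero
  | succ j ih => exact ind_succ hU ih

end ind
end HRL

open Finset
namespace HRL
open MeasureTheory Filter Topology
open scoped ENNReal
universe u
set_option linter.unusedSectionVars false

section fin
variable {V : Type u} [DecidableEq V] [Fintype V]
variable {U : Ultrafilter ℕ} {μ : Measure (Om V)} [IsProbabilityMeasure μ]

open Classical in
lemma dens_card (S : Set (Z V)) (n : ℕ) :
    dens S n = ((Finset.univ.filter fun x : V → Fin (n + 1) => (⟨n, x⟩ : Z V) ∈ S).card : ℝ) /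
      (Fintype.card (V → Fin (n + 1)) : ℝ) := by
  unfold dens av
  congr 1
  rw [Finset.card_filter]
  push_cast
  refine Finset.sum_congr rfl fun x _ => ?_
  simp [Set.indicator_apply]

lemma dens_mono_at {S T : Set (Z V)} {n : ℕ} (h : ∀ x, (⟨n, x⟩ : Z V) ∈ S → (⟨n, x⟩ : Z V) ∈ T) :
    dens S n ≤ dens T n := by
  classical
  rw [dens_card, dens_card]
  have := card_pos' (V := V) n
  refine div_le_div_of_nonneg_right ?_ this.le
  refine Nat.cast_le.2 (Finset.card_le_card fun x hx => ?_)
  rw [Finset.mem_filter] at hx ⊢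
  exact ⟨hx.1, h x hx.2⟩

lemma dens_eq_le {a b : V} (hab : a ≠ b) (n : ℕ) :
    dens {z : Z V | z.2 a = z.2 b} n ≤ 1 / ((n : ℝ) + 1) := by
  classical
  rw [dens_card]
  have hp := card_pos' (V := V) n
  rw [div_le_div_iff₀ hp (by positivity), one_mul]
  have h : ((Finset.univ.filter fun x : V → Fin (n + 1) => x a = x b) ×ˢ
      (Finset.univ : Finset (Fin (n + 1)))).card ≤
      (Finset.univ : Finset (V → Fin (n + 1))).card := by
    refine Finset.card_le_card_of_injOn (fun p => Function.update p.1 a p.2)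
      (fun _ _ => Finset.mem_coe.2 (Finset.mem_univ _)) ?_
    rintro ⟨x, c⟩ hx ⟨y, d⟩ hy hxy
    have hx' : x a = x b := by simpa using hx
    have hy' : y a = y b := by simpa using hy
    simp only at hxy
    have h1 : c = d := by simpa using congrFun hxy a
    have h2 : ∀ v, v ≠ a → x v = y v := fun v hv => by
      simpa [Function.update_of_ne hv] using congrFun hxy v
    have h3 : x = y := by
      funext v
      by_cases hv : v = a
      · rw [hv, hx', hy', h2 b hab.symm]
      · exact h2 v hv
    rw [h1, h3]
  rw [Finset.card_product, Finset.card_univ, Finset.card_univ, Fintype.card_fin] at h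
  refine le_trans (le_of_eq ?_) ((Nat.cast_le (α := ℝ)).2 h)
  rw [Nat.cast_mul, Nat.cast_add, Nat.cast_one]
  congr 2
  refine congrArg Finset.card (Finset.ext fun x => ?_)
  simp only [Finset.mem_filter, Finset.mem_univ, true_and, Set.mem_ofPred_eq]

lemma null_eq (hU : Lim U μ) (hat : (U : Filter ℕ) ≤ atTop) {a b : V} (hab : a ≠ b) :
    μ.real (cl {z : Z V | z.2 a = z.2 b}) = 0 := by
  refine le_antisymm ?_ measureReal_nonneg
  exact le_of_tendsto_of_tendsto (hU _)
    ((tendsto_one_div_add_atTop_nhds_zero_nat (𝕜 := ℝ)).mono_left hat)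
    (Eventually.of_forall fun n => dens_eq_le hab n)

lemma null_noninj (hU : Lim U μ) (hat : (U : Filter ℕ) ≤ atTop) :
    μ.real (cl {z : Z V | ¬ Function.Injective z.2}) = 0 := by
  classical
  refine le_antisymm ?_ measureReal_nonneg
  have hsub : cl {z : Z V | ¬ Function.Injective z.2} ⊆
      ⋃ p ∈ (Finset.univ.filter fun p : V × V => p.1 ≠ p.2), cl {z : Z V | z.2 p.1 = z.2 p.2} := by
    intro w hw
    by_contra hcon
    simp only [Set.mem_iUnion, not_exists] at hcon
    have h1 : ∀ᶠ z in (show Filter (Z V) from Ultrafilter.toFilter w),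
        ∀ p : V × V, p.1 ≠ p.2 → ¬ z.2 p.1 = z.2 p.2 := by
      refine Filter.eventually_all.2 fun p => ?_
      by_cases hp : p.1 = p.2
      · exact Eventually.of_forall fun z h => (h hp).elim
      · have := hcon p (by simpa using hp)
        have h2 : w ∈ cl ({z : Z V | z.2 p.1 = z.2 p.2})ᶜ := by rw [cl_compl]; exact this
        exact Filter.mem_of_superset h2 fun z hz _ => hz
    have h2 : ∀ᶠ z in (show Filter (Z V) from Ultrafilter.toFilter w),
        ¬ Function.Injective z.2 := hw
    have : (show Filter (Z V) from Ultrafilter.toFilter w).NeBot :=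
      Ultrafilter.neBot (show Ultrafilter (Z V) from w)
    obtain ⟨z, z1, z2⟩ := (h1.and h2).exists
    exact z2 fun a b hab => by_contra fun hne => z1 (a, b) hne hab
  refine (measureReal_mono hsub (measure_ne_top μ _)).trans ((measureReal_biUnion_finset_le _ _).trans ?_)
  exact Finset.sum_nonpos fun p hp => (null_eq hU hat (by simpa using hp)).le

lemma agree_card (e : Finset V) {n : ℕ} (x : V → Fin (n + 1)) :
    Fintype.card (V → Fin (n + 1)) ≤
      (Finset.univ.filter fun y : V → Fin (n + 1) => ∀ v ∈ e, y v = x v).card *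
        (n + 1) ^ e.card := by
  have h : (Finset.univ : Finset (V → Fin (n + 1))).card ≤
      ((Finset.univ.filter fun y : V → Fin (n + 1) => ∀ v ∈ e, y v = x v) ×ˢ
        (Finset.univ : Finset (e → Fin (n + 1)))).card := by
    refine Finset.card_le_card_of_injOn (fun y => (glue e x y, fun v => y v)) ?_ ?_
    · intro y _
      simp only [Finset.coe_product, Set.mem_prod, Finset.mem_coe, Finset.mem_filter,
        Finset.mem_univ, true_and, and_true]
      intro v hv
      simp [glue, hv]
    · intro y _ y' _ h
      simp only [Prod.mk.injEq] at h
      funext v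
      by_cases hv : v ∈ e
      · exact congrFun h.2 ⟨v, hv⟩
      · simpa [glue, hv] using congrFun h.1 v
  rw [Finset.card_product, Finset.card_univ, Finset.card_univ] at h
  simpa using h

lemma removal_count {r : ℕ} {F : Finset (Finset V)} (hF : IsRGraph r F) {n : ℕ}
    (D : Finset (Finset (Fin (n + 1)))) (Bd : Finset V → Set (Z V))
    (hdep : ∀ e ∈ F, dep e (Bd e))
    (hD : ∀ g ∈ D, ∃ e ∈ F, ∃ x : V → Fin (n + 1), e.image x = g ∧ (⟨n, x⟩ : Z V) ∈ Bd e) :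
    (D.card : ℝ) ≤ (∑ e ∈ F, dens (Bd e) n) * ((n : ℝ) + 1) ^ r := by
  classical
  have hp := card_pos' (V := V) n
  let W : Finset (Finset V × (V → Fin (n + 1))) :=
    (F ×ˢ Finset.univ).filter fun p => (⟨n, p.2⟩ : Z V) ∈ Bd p.1
  have hW : (∑ e ∈ F, dens (Bd e) n) =
      (W.card : ℝ) / (Fintype.card (V → Fin (n + 1)) : ℝ) := by
    simp_rw [dens_card]
    rw [← Finset.sum_div]
    congr 1
    rw [Finset.card_filter, Finset.sum_product]
    push_cast
    refine Finset.sum_congr rfl fun e _ => ?_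
    rw [Finset.card_filter]
    push_cast
    rfl
  have hfib : ∀ g ∈ D, Fintype.card (V → Fin (n + 1)) ≤
      (W.filter fun p => p.1.image p.2 = g).card * (n + 1) ^ r := by
    intro g hg
    obtain ⟨e, he, x, hx, hB⟩ := hD g hg
    have h := agree_card e x
    rw [hF e he] at h
    refine h.trans ?_
    gcongr
    refine Finset.card_le_card_of_injOn (fun y => (e, y)) ?_ ?_
    · intro y hy
      have hy' : ∀ v ∈ e, y v = x v := by simpa using hy
      have hB' : (⟨n, y⟩ : Z V) ∈ Bd e := by
        have : ((⟨n, y⟩ : Z V) ∈ Bd e) = ((⟨n, x⟩ : Z V) ∈ Bd e) := hdep e he n y x hy'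
        rw [this]; exact hB
      have hi : e.image y = g := by
        rw [← hx]
        exact Finset.image_congr fun v hv => hy' v hv
      simp [W, he, hB', hi]
    · intro y _ y' _ h
      exact (Prod.mk.inj h).2
  have hsum : D.card * Fintype.card (V → Fin (n + 1)) ≤ W.card * (n + 1) ^ r := by
    calc D.card * Fintype.card (V → Fin (n + 1))
        = ∑ _g ∈ D, Fintype.card (V → Fin (n + 1)) := by simp
      _ ≤ ∑ g ∈ D, (W.filter fun p => p.1.image p.2 = g).card * (n + 1) ^ r :=
          Finset.sum_le_sum hfib
      _ = (∑ g ∈ D, (W.filter fun p => p.1.image p.2 = g).card) * (n + 1) ^ r := by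
          rw [Finset.sum_mul]
      _ ≤ W.card * (n + 1) ^ r := by
          gcongr
          rw [← Finset.card_biUnion]
          · exact Finset.card_le_card (Finset.biUnion_subset.2 fun g _ => Finset.filter_subset _ _)
          · intro g _ g' _ hne
            refine Finset.disjoint_left.2 fun p hp hp' => hne ?_
            exact (Finset.mem_filter.1 hp).2.symm.trans (Finset.mem_filter.1 hp').2
  rw [hW, div_mul_eq_mul_div, le_div_iff₀ hp]
  exact_mod_cast hsum

lemma pow_le_const_choose (r n : ℕ) (h : 2 * r ≤ n + 1) :
    ((n : ℝ) + 1) ^ r ≤ (2 ^ r * (r.factorial : ℝ)) * ((n + 1).choose r : ℝ) := by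
  have h1 := Nat.pow_le_choose (α := ℝ) r (n + 1)
  rw [div_le_iff₀ (by positivity)] at h1
  have h2 : ((n : ℝ) + 1) ≤ 2 * ((n + 1 + 1 - r : ℕ) : ℝ) := by
    have : n + 1 ≤ 2 * (n + 1 + 1 - r) := by omega
    exact_mod_cast this
  calc ((n : ℝ) + 1) ^ r ≤ (2 * ((n + 1 + 1 - r : ℕ) : ℝ)) ^ r := by gcongr
    _ = 2 ^ r * ((n + 1 + 1 - r : ℕ) : ℝ) ^ r := mul_pow _ _ _
    _ ≤ 2 ^ r * (((n + 1).choose r : ℝ) * (r.factorial : ℝ)) := by gcongr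
    _ = _ := by ring

theorem final {r : ℕ} {F : Finset (Finset V)} (hF : IsRGraph r F) {η : ℝ} (hη : 0 < η) :
    ∀ᶠ n : ℕ in atTop, ∀ G : Finset (Finset (Fin (n + 1))),
      IsRGraph r G → ¬ ContainsCopy F G →
        ∃ G' ⊆ G, ((G \ G').card : ℝ) ≤ η * ((n + 1).choose r) ∧ ¬ ContainsHom F G' := by
  classical
  by_contra hcon
  rw [Filter.not_eventually] at hcon
  set P : ℕ → Prop := fun n => ¬ ∀ G : Finset (Finset (Fin (n + 1))),
      IsRGraph r G → ¬ ContainsCopy F G →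
        ∃ G' ⊆ G, ((G \ G').card : ℝ) ≤ η * ((n + 1).choose r) ∧ ¬ ContainsHom F G' with hP
  have hne : (atTop ⊓ 𝓟 {n | P n}).NeBot := Filter.frequently_mem_iff_neBot.1 hcon
  let U : Ultrafilter ℕ := Ultrafilter.of (atTop ⊓ 𝓟 {n | P n})
  have hUle : (U : Filter ℕ) ≤ atTop ⊓ 𝓟 {n | P n} := Ultrafilter.of_le _
  have hat : (U : Filter ℕ) ≤ atTop := hUle.trans inf_le_left
  have hUP : ∀ᶠ n in (U : Filter ℕ), P n := hUle (Filter.mem_inf_of_right (mem_principal_self _))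
  have hex : ∀ n, ∃ G : Finset (Finset (Fin (n + 1))), P n → IsRGraph r G ∧ ¬ ContainsCopy F G ∧
      ¬ ∃ G' ⊆ G, ((G \ G').card : ℝ) ≤ η * ((n + 1).choose r) ∧ ¬ ContainsHom F G' := by
    intro n
    by_cases hn : P n
    · have := hn
      simp only [hP, not_forall] at this
      obtain ⟨G, h1, h2, h3⟩ := this
      exact ⟨G, fun _ => ⟨h1, h2, h3⟩⟩
    · exact ⟨∅, fun h => (hn h).elim⟩
  choose G hG using hex
  obtain ⟨μ, hμ, hU⟩ := exists_measure (V := V) U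
  have hU : Lim U μ := hU
  let A : Finset V → Set (Z V) := fun e => {z | e.image z.2 ∈ G z.1}
  have hAd : ∀ e, dep e (A e) := by
    intro e n x y hxy
    have : e.image x = e.image y := Finset.image_congr fun v hv => hxy v hv
    simp only [A, Set.mem_ofPred_eq, this]
  let ι := {e // e ∈ F}
  let C : ℝ := 2 ^ r * (r.factorial : ℝ)
  have hC : 0 < C := by positivity
  let ε : ℝ := η / (2 * C * (F.card + 1))
  have hε : 0 < ε := by positivity
  have hAm : ∀ i : ι, MeasurableSet[B (low i.1 (r + 1))] (cl (A i.1)) := fun i =>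
    meas_B (.base i.1 _ ⟨subset_rfl, by rw [hF i.1 i.2]; exact Nat.lt_succ_self r⟩ (hAd i.1))
  obtain ⟨A', hA'd, hA'm, hA'e⟩ := ind_all (μ := μ) hU (r + 1) ι (fun i => i.1)
    (fun i => cl (A i.1)) hAm ε hε
  have hnull : μ (⋂ i ∈ (Finset.univ : Finset ι), cl (A i.1)) = 0 := by
    have hsub : (⋂ i ∈ (Finset.univ : Finset ι), cl (A i.1)) ⊆ cl (⋂ i : ι, A i.1) := by
      intro w hw
      have h1 : ∀ᶠ z in (show Filter (Z V) from Ultrafilter.toFilter w), ∀ i : ι, z ∈ A i.1 :=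
        Filter.eventually_all.2 fun i => Set.mem_iInter₂.1 hw i (Finset.mem_univ _)
      exact Filter.mem_of_superset h1 fun z hz => Set.mem_iInter.2 hz
    refine measure_mono_null hsub ?_
    rw [← measureReal_eq_zero_iff]
    refine le_antisymm ?_ measureReal_nonneg
    rw [← null_noninj hU hat]
    refine le_of_tendsto_of_tendsto (hU _) (hU _) ?_
    filter_upwards [hUP] with n hn
    refine dens_mono_at fun x hx => ?_
    intro hinj
    refine (hG n hn).2.1 ⟨x, hinj, fun e he => ?_⟩
    exact Set.mem_iInter.1 hx ⟨e, he⟩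
  have hemp := hA'e Finset.univ hnull
  let Bd : Finset V → Set (Z V) := fun e => if h : e ∈ F then A e \ A' ⟨e, h⟩ else ∅
  have hBd : ∀ (e) (h : e ∈ F), Bd e = A e \ A' ⟨e, h⟩ := fun e h => by simp only [Bd, dif_pos h]
  have hBdep : ∀ e ∈ F, dep e (Bd e) := by
    intro e he n x y hxy
    rw [hBd e he]
    exact congrArg₂ (fun p q => p ∧ ¬ q) (hAd e n x y hxy) (hA'd ⟨e, he⟩ n x y hxy)
  have hdens : ∀ᶠ n in (U : Filter ℕ), ∀ e ∈ F, dens (Bd e) n ≤ 2 * ε := by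
    rw [Filter.eventually_all_finset]
    intro e he
    have h1 : μ.real (cl (Bd e)) < 2 * ε := by
      have h2 := hA'm ⟨e, he⟩
      rw [hBd e he, Set.sdiff_eq, cl_inter, cl_compl, ← Set.sdiff_eq]
      linarith
    filter_upwards [(hU (Bd e)).eventually (gt_mem_nhds h1)] with n hn using hn.le
  have hbig : ∀ᶠ n in (U : Filter ℕ), 2 * r ≤ n := hat (eventually_ge_atTop (2 * r))
  obtain ⟨n, hn1, hn2, hn3⟩ := (hUP.and (hdens.and hbig)).exists
  obtain ⟨g1, g2, g3⟩ := hG n hn1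
  apply g3
  let G' := (G n).filter fun g => ∀ i : ι, ∀ x : V → Fin (n + 1), i.1.image x = g →
    (⟨n, x⟩ : Z V) ∈ A' i
  refine ⟨G', Finset.filter_subset _ _, ?_, ?_⟩
  · have hcount := removal_count hF (G n \ G') Bd hBdep (by
      intro g hg
      obtain ⟨hg1, hg2⟩ := Finset.mem_sdiff.1 hg
      have : ¬ ∀ i : ι, ∀ x : V → Fin (n + 1), i.1.image x = g → (⟨n, x⟩ : Z V) ∈ A' i :=
        fun h => hg2 (Finset.mem_filter.2 ⟨hg1, h⟩)
      push Not at this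
      obtain ⟨i, x, hx, hxA⟩ := this
      refine ⟨i.1, i.2, x, hx, ?_⟩
      rw [hBd i.1 i.2]
      exact ⟨show i.1.image x ∈ G n by rw [hx]; exact hg1, hxA⟩)
    have hs : ∑ e ∈ F, dens (Bd e) n ≤ F.card * (2 * ε) := by
      have := Finset.sum_le_card_nsmul F _ _ hn2
      rwa [nsmul_eq_mul] at this
    have hs2 : F.card * (2 * ε) * C ≤ η := by
      have : (F.card : ℝ) * (2 * ε) * C = η * (F.card / (F.card + 1)) := by
        simp only [ε]; field_simp
      rw [this]
      refine mul_le_of_le_one_right hη.le ?_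
      rw [div_le_one (by positivity)]
      linarith
    have hpow := pow_le_const_choose r n (by omega)
    calc ((G n \ G').card : ℝ) ≤ (∑ e ∈ F, dens (Bd e) n) * ((n : ℝ) + 1) ^ r := hcount
      _ ≤ (F.card * (2 * ε)) * (C * ((n + 1).choose r : ℝ)) := by gcongr
      _ = (F.card * (2 * ε) * C) * ((n + 1).choose r : ℝ) := by ring
      _ ≤ η * ((n + 1).choose r : ℝ) := by gcongr
  · rintro ⟨f, hf⟩
    have : (⟨n, f⟩ : Z V) ∈ ⋂ i ∈ (Finset.univ : Finset ι), A' i := by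
      refine Set.mem_iInter₂.2 fun i _ => ?_
      exact (Finset.mem_filter.1 (hf i.1 i.2)).2 i f rfl
    rw [hemp] at this
    exact this

end fin
end HRL

/-- **Lemma (removal to hom-freeness).**  Fix an `r`-graph `F` and `η₂ > 0`.  There exists
`n₀ > 0` such that every `F`-free `n`-vertex `r`-graph `G` with `n > n₀` can be made
`F`-hom-free by deleting at most `η₂·C(n,r)` edges. -/
theorem removal_to_hom_free {α : Type*} [Fintype α]
    (r : ℕ) (F : Finset (Finset α)) (hF : IsRGraph r F)
    (η₂ : ℝ) (hη₂ : 0 < η₂) :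
    ∃ n₀ : ℕ, 0 < n₀ ∧ ∀ n : ℕ, n₀ < n → ∀ G : Finset (Finset (Fin n)),
      IsRGraph r G → ¬ ContainsCopy F G →
        ∃ G' ⊆ G, ((G \ G').card : ℝ) ≤ η₂ * (n.choose r) ∧ ¬ ContainsHom F G' := by
  classical
  have h := HRL.final (V := α) (r := r) (F := F) hF hη₂
  obtain ⟨N, hN⟩ := Filter.eventually_atTop.1 h
  refine ⟨N + 1, Nat.succ_pos N, fun n hn G hG hc => ?_⟩
  obtain ⟨m, rfl⟩ : ∃ m, n = m + 1 := ⟨n - 1, by omega⟩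
  exact hN m (by omega) G hG hc
end

section
/- Fix an r-graph F. For every ε > 0 there exist η > 0 and n₀ > 0 such that for every n-vertex r-graph G with n > n₀: if G contains at most η·n^(|V(F)|) copies of F, then one can delete at most ε·C(n, r) edges from G so that the resulting r-graph is F-free. -/
open Finset

section Removal

open scoped Classical

/-- expectation over a finite type -/
noncomputable def HEx {X : Type*} [Fintype X] (f : X → ℝ) : ℝ := (∑ x, f x) / Fintype.card X

/-- conditional expectation with respect to the fibres of a map -/
noncomputable def Hce {X β : Type*} [Fintype X] (κ : X → β) (f : X → ℝ) (x : X) : ℝ :=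
  (∑ y, if κ y = κ x then f y else 0) / (∑ y, if κ y = κ x then (1:ℝ) else 0)

section basics
variable {X β γ : Type*} [Fintype X]

lemma HEx_add (f g : X → ℝ) : HEx (fun x => f x + g x) = HEx f + HEx g := by
  simp [HEx, Finset.sum_add_distrib, add_div]

lemma HEx_sub (f g : X → ℝ) : HEx (fun x => f x - g x) = HEx f - HEx g := by
  simp [HEx, Finset.sum_sub_distrib, sub_div]

lemma HEx_mul_left (a : ℝ) (f : X → ℝ) : HEx (fun x => a * f x) = a * HEx f := by
  simp [HEx, ← Finset.mul_sum, mul_div_assoc]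

lemma HEx_sum {ι : Type*} (s : Finset ι) (f : ι → X → ℝ) :
    HEx (fun x => ∑ i ∈ s, f i x) = ∑ i ∈ s, HEx (f i) := by
  simp only [HEx]
  rw [Finset.sum_comm, Finset.sum_div]

lemma HEx_mono {f g : X → ℝ} (h : ∀ x, f x ≤ g x) : HEx f ≤ HEx g := by
  unfold HEx
  gcongr
  exact h _

lemma HEx_nonneg {f : X → ℝ} (h : ∀ x, 0 ≤ f x) : 0 ≤ HEx f :=
  div_nonneg (Finset.sum_nonneg fun x _ => h x) (Nat.cast_nonneg _)

lemma HEx_const [Nonempty X] (a : ℝ) : HEx (fun _ : X => a) = a := by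
  have : (Fintype.card X : ℝ) ≠ 0 := by exact_mod_cast Fintype.card_ne_zero
  simp [HEx]

lemma HEx_le_one [Nonempty X] {f : X → ℝ} (h : ∀ x, f x ≤ 1) : HEx f ≤ 1 :=
  (HEx_mono h).trans (HEx_const (X := X) 1).le

lemma HEx_abs_le (f : X → ℝ) : |HEx f| ≤ HEx (fun x => |f x|) := by
  unfold HEx
  rw [abs_div, abs_of_nonneg (Nat.cast_nonneg (α := ℝ) _)]
  gcongr
  exact Finset.abs_sum_le_sum_abs _ _

lemma HEx_cs (f g : X → ℝ) :
    (HEx (fun x => f x * g x)) ^ 2 ≤ HEx (fun x => f x ^ 2) * HEx (fun x => g x ^ 2) := by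
  unfold HEx
  rw [div_pow, div_mul_div_comm, ← sq]
  gcongr
  exact Finset.sum_mul_sq_le_sq_mul_sq _ _ _

lemma Hden_pos (κ : X → β) (x : X) : 0 < ∑ y, if κ y = κ x then (1:ℝ) else 0 := by
  refine Finset.sum_pos' (fun y _ => by split_ifs <;> norm_num) ⟨x, Finset.mem_univ _, by simp⟩

lemma Hce_congr (κ : X → β) (f : X → ℝ) {x y : X} (h : κ x = κ y) : Hce κ f x = Hce κ f y := by
  simp [Hce, h]

lemma Hce_nonneg (κ : X → β) {f : X → ℝ} (h : ∀ x, 0 ≤ f x) (x : X) : 0 ≤ Hce κ f x :=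
  div_nonneg (Finset.sum_nonneg fun y _ => by split_ifs <;> simp [h])
    (Hden_pos κ x).le

lemma Hce_le_one (κ : X → β) {f : X → ℝ} (h : ∀ x, f x ≤ 1) (x : X) : Hce κ f x ≤ 1 := by
  unfold Hce
  rw [div_le_one (Hden_pos κ x)]
  refine Finset.sum_le_sum fun y _ => ?_
  split_ifs <;> simp [h]

lemma HEx_ce_mul (κ : X → β) (f g : X → ℝ) (hg : ∀ x y, κ x = κ y → g x = g y) :
    HEx (fun x => Hce κ f x * g x) = HEx (fun x => f x * g x) := by
  unfold HEx
  congr 1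
  have h1 : ∀ x, Hce κ f x * g x
      = ∑ y, if κ y = κ x then f y * g y / (∑ z, if κ z = κ y then (1:ℝ) else 0) else 0 := by
    intro x
    unfold Hce
    rw [div_mul_eq_mul_div, Finset.sum_mul, Finset.sum_div]
    refine Finset.sum_congr rfl fun y _ => ?_
    split_ifs with h
    · rw [hg y x h, h]
    · simp
  simp_rw [h1]
  rw [Finset.sum_comm]
  refine Finset.sum_congr rfl fun y _ => ?_
  have h2 : ∀ x, (if κ y = κ x then f y * g y / (∑ z, if κ z = κ y then (1:ℝ) else 0) else 0)
      = (f y * g y / (∑ z, if κ z = κ y then (1:ℝ) else 0)) * (if κ x = κ y then 1 else 0) := by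
    intro x
    by_cases h : κ x = κ y
    · simp [h]
    · simp [h, Ne.symm h]
  simp_rw [h2]
  rw [← Finset.mul_sum, div_mul_cancel₀ _ (Hden_pos κ y).ne']

lemma Hpyth (κ : X → β) (κ' : X → γ) (hr : ∀ x y, κ' x = κ' y → κ x = κ y) (f : X → ℝ) :
    HEx (fun x => (Hce κ' f x - Hce κ f x) ^ 2)
      = HEx (fun x => Hce κ' f x ^ 2) - HEx (fun x => Hce κ f x ^ 2) := by
  have h1 := HEx_ce_mul κ' f (Hce κ f) (fun x y h => Hce_congr κ f (hr x y h))
  have h2 := HEx_ce_mul κ f (Hce κ f) (fun x y h => Hce_congr κ f h)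
  have h3 : (fun x => (Hce κ' f x - Hce κ f x) ^ 2)
      = fun x => (Hce κ' f x ^ 2 + Hce κ f x * Hce κ f x) - 2 * (Hce κ' f x * Hce κ f x) := by
    ext x; ring
  rw [h3, HEx_sub, HEx_add, HEx_mul_left, h1, ← h2]
  simp_rw [sq]
  ring

/-- energy increment from a correlation -/
lemma Hincr [Nonempty X] (κ : X → β) (κ' : X → γ) (hr : ∀ x y, κ' x = κ' y → κ x = κ y)
    (f g : X → ℝ) (hg : ∀ x y, κ' x = κ' y → g x = g y) (hg1 : ∀ x, |g x| ≤ 1) :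
    HEx (fun x => Hce κ f x ^ 2) + (HEx (fun x => (f x - Hce κ f x) * g x)) ^ 2
      ≤ HEx (fun x => Hce κ' f x ^ 2) := by
  have h1 : HEx (fun x => (f x - Hce κ f x) * g x)
      = HEx (fun x => (Hce κ' f x - Hce κ f x) * g x) := by
    simp_rw [sub_mul]
    rw [HEx_sub, HEx_sub, HEx_ce_mul κ' f g hg]
  have h2 := HEx_cs (fun x => Hce κ' f x - Hce κ f x) g
  have h3 : HEx (fun x => g x ^ 2) ≤ 1 := HEx_le_one fun x => by
    rw [← sq_abs]; exact pow_le_one₀ (abs_nonneg _) (hg1 x)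
  have h4 := Hpyth κ κ' hr f
  have h5 : 0 ≤ HEx (fun x => (Hce κ' f x - Hce κ f x) ^ 2) := HEx_nonneg fun x => sq_nonneg _
  rw [h1]
  nlinarith

/-- Markov -/
lemma Hmarkov (f : X → ℝ) (hf : ∀ x, 0 ≤ f x) (s : ℝ) (hs : 0 < s) :
    HEx (fun x => if s < f x then (1:ℝ) else 0) ≤ HEx f / s := by
  rw [le_div_iff₀ hs, mul_comm, ← HEx_mul_left]
  refine HEx_mono fun x => ?_
  split_ifs with h
  · linarith
  · simpa using hf x

end basics

section product
variable {J V : Type*}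

/-- `f` depends only on the coordinates in `S`. -/
def HDep {β : Type*} (S : Finset J) (f : (J → V) → β) : Prop :=
  ∀ x y, (∀ i ∈ S, x i = y i) → f x = f y

lemma HDep.mono {β : Type*} {S T : Finset J} {f : (J → V) → β} (h : HDep S f) (hST : S ⊆ T) :
    HDep T f := fun x y hxy => h x y fun i hi => hxy i (hST hi)

variable [Fintype J]

/-- products of `0/1` functions, each missing a coordinate of `I`. -/
def HTest (I : Finset J) (g : (J → V) → ℝ) : Prop :=
  ∃ u : J → (J → V) → ℝ, (∀ i ∈ I, HDep (Finset.univ.erase i) (u i)) ∧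
    (∀ i x, u i x = 0 ∨ u i x = 1) ∧ g = fun x => ∏ i ∈ I, u i x

lemma HTest.mul {I : Finset J} {g g' : (J → V) → ℝ} (h : HTest I g) (h' : HTest I g') :
    HTest I (fun x => g x * g' x) := by
  obtain ⟨u, hu, hu1, rfl⟩ := h
  obtain ⟨v, hv, hv1, rfl⟩ := h'
  refine ⟨fun i x => u i x * v i x, ?_, ?_, ?_⟩
  · intro i hi x y hxy
    simp only
    rw [hu i hi x y hxy, hv i hi x y hxy]
  · intro i x
    rcases hu1 i x with h | h <;> rcases hv1 i x with h' | h' <;> simp [h, h']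
  · ext x
    rw [Finset.prod_mul_distrib]

lemma HTest.of_dep {I T : Finset J} {g : (J → V) → ℝ} (hg : HDep T g) (hIT : ¬ I ⊆ T)
    (h01 : ∀ x, g x = 0 ∨ g x = 1) : HTest I g := by
  obtain ⟨i, hi, hiT⟩ := Finset.not_subset.1 hIT
  refine ⟨fun l => if l = i then g else fun _ => 1, ?_, ?_, ?_⟩
  · intro l hl
    by_cases h : l = i
    · simp only [h, if_true]
      refine hg.mono fun a ha => ?_
      simp only [Finset.mem_erase, Finset.mem_univ, and_true]
      rintro rfl
      exact hiT ha
    · simp only [h, if_false]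
      intro x y _
      rfl
  · intro l x
    by_cases h : l = i <;> simp [h, h01]
  · ext x
    rw [Finset.prod_eq_single i]
    · simp
    · intro l _ hl
      simp [hl]
    · exact fun h => absurd hi h

lemma HTest.one {I : Finset J} : HTest I (fun _ : J → V => (1:ℝ)) :=
  ⟨fun _ _ => 1, fun _ _ _ _ _ => rfl, fun _ _ => Or.inr rfl, by simp⟩

lemma HTest.prod {I : Finset J} {ι : Type*} (s : Finset ι) (g : ι → (J → V) → ℝ)
    (h : ∀ a ∈ s, HTest I (g a)) : HTest I (fun x => ∏ a ∈ s, g a x) := by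
  induction s using Finset.induction_on with
  | empty => simpa using HTest.one
  | insert a s ha ih =>
    simp_rw [Finset.prod_insert ha]
    exact (h a (by simp)).mul (ih fun b hb => h b (by simp [hb]))

variable [Fintype V]

lemma HEx_piecewise (I : Finset J) (F : (J → V) → ℝ) :
    HEx (fun y => HEx (fun x => F (I.piecewise x y))) = HEx F := by
  rcases isEmpty_or_nonempty (J → V) with hE | hE
  · simp [HEx]
  have hc : (Fintype.card (J → V) : ℝ) ≠ 0 := by exact_mod_cast Fintype.card_ne_zero
  have key : ∑ p : (J → V) × (J → V), F (I.piecewise p.2 p.1)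
      = ∑ p : (J → V) × (J → V), F p.2 := by
    refine Finset.sum_nbij' (fun p => (I.piecewise p.1 p.2, I.piecewise p.2 p.1))
      (fun p => (I.piecewise p.1 p.2, I.piecewise p.2 p.1)) ?_ ?_ ?_ ?_ ?_
    · simp
    · simp
    · rintro ⟨a, b⟩ _
      ext i <;> by_cases hi : i ∈ I <;> simp [Finset.piecewise, hi]
    · rintro ⟨a, b⟩ _
      ext i <;> by_cases hi : i ∈ I <;> simp [Finset.piecewise, hi]
    · simp
  rw [Fintype.sum_prod_type, Fintype.sum_prod_type] at key
  unfold HEx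
  rw [← Finset.sum_div, key]
  simp only [Finset.sum_const, Finset.card_univ, nsmul_eq_mul]
  field_simp

/-- Localise a correlation with a test function to the coordinates in `I`. -/
lemma Hlocal [Nonempty V] (I : Finset J) (φ g : (J → V) → ℝ) (hφ : HDep I φ) (hg : HTest I g) (η : ℝ)
    (h : η < |HEx (fun x => φ x * g x)|) :
    ∃ w : J → (J → V) → ℝ, (∀ i ∈ I, HDep (I.erase i) (w i)) ∧
      (∀ i x, w i x = 0 ∨ w i x = 1) ∧ η < |HEx (fun x => φ x * ∏ i ∈ I, w i x)| := by
  obtain ⟨u, hu, hu1, rfl⟩ := hg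
  have h1 : ∃ y, |HEx (fun x => φ x * ∏ i ∈ I, u i x)|
      ≤ |HEx (fun x => φ x * ∏ i ∈ I, u i (I.piecewise x y))| := by
    obtain ⟨y, hy⟩ := Finite.exists_max
      (fun y => |HEx (fun x => φ x * ∏ i ∈ I, u i (I.piecewise x y))|)
    refine ⟨y, ?_⟩
    have h2 := HEx_piecewise I (fun x => φ x * ∏ i ∈ I, u i x)
    have h3 : ∀ x y, φ (I.piecewise x y) = φ x := fun x y =>
      hφ _ _ fun i hi => by simp [Finset.piecewise, hi]
    simp only [h3] at h2
    rw [← h2]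
    refine (HEx_abs_le _).trans ((HEx_mono hy).trans ?_)
    rw [HEx_const]
  obtain ⟨y, hy⟩ := h1
  refine ⟨fun i x => u i (I.piecewise x y), ?_, fun i x => hu1 i _, h.trans_le hy⟩
  intro i hi x x' hxx
  refine hu i hi _ _ fun l hl => ?_
  by_cases hlI : l ∈ I
  · simp only [Finset.piecewise, hlI, if_true]
    exact hxx l (by simp at hl ⊢; exact ⟨hl, hlI⟩)
  · simp [Finset.piecewise, hlI]

end product

section regularity
variable {J : Type*} [Fintype J]

/-- the facet pattern of `I` -/
noncomputable def Hfac {V : Type*} (b : Finset J → (J → V) → ℕ) (I : Finset J) (x : J → V) : J → ℕ :=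
  fun i => if i ∈ I then b (I.erase i) x else 0

/-- energy -/
noncomputable def HEn {V : Type*} [Fintype V] (S : Finset (Finset J × ℕ))
    (φ : Finset J × ℕ → (J → V) → ℝ) (b : Finset J → (J → V) → ℕ) : ℝ :=
  ∑ s ∈ S, HEx (fun x => Hce (Hfac b s.1) (φ s) x ^ 2)

lemma Hfac_refine {V : Type*} {b b' : Finset J → (J → V) → ℕ}
    (hr : ∀ I x y, b' I x = b' I y → b I x = b I y) (I : Finset J) (x y : J → V)
    (h : Hfac b' I x = Hfac b' I y) : Hfac b I x = Hfac b I y := by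
  ext i
  have := congrFun h i
  unfold Hfac at *
  split_ifs with hi
  · simp only [hi, if_true] at this
    exact hr _ _ _ this
  · rfl

lemma Hfac_dep {V : Type*} {b : Finset J → (J → V) → ℕ} (hb : ∀ I, HDep I (b I)) (I : Finset J) :
    HDep I (Hfac b I) := by
  intro x y h
  ext i
  unfold Hfac
  split_ifs with hi
  · exact hb _ _ _ fun l hl => h l (Finset.mem_of_mem_erase hl)
  · rfl

lemma Hce_fac_dep {V : Type*} [Fintype V] {b : Finset J → (J → V) → ℕ} (hb : ∀ I, HDep I (b I))
    (I : Finset J) (f : (J → V) → ℝ) : HDep I (Hce (Hfac b I) f) :=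
  fun x y h => Hce_congr _ _ (Hfac_dep hb I x y h)

lemma HEn_le {V : Type*} [Fintype V] [Nonempty V] (S : Finset (Finset J × ℕ))
    (φ : Finset J × ℕ → (J → V) → ℝ) (h0 : ∀ s x, 0 ≤ φ s x ∧ φ s x ≤ 1)
    (b : Finset J → (J → V) → ℕ) : HEn S φ b ≤ S.card := by
  unfold HEn
  refine (Finset.sum_le_card_nsmul _ _ 1 fun s _ => ?_).trans (by simp)
  refine HEx_le_one fun x => pow_le_one₀ (Hce_nonneg _ (fun x => (h0 s x).1) x)
    (Hce_le_one _ (fun x => (h0 s x).2) x)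

lemma HEn_mono {V : Type*} [Fintype V] (S : Finset (Finset J × ℕ))
    (φ : Finset J × ℕ → (J → V) → ℝ) {b b' : Finset J → (J → V) → ℕ}
    (hr : ∀ I x y, b' I x = b' I y → b I x = b I y) (s : Finset J × ℕ) :
    HEx (fun x => Hce (Hfac b s.1) (φ s) x ^ 2) ≤ HEx (fun x => Hce (Hfac b' s.1) (φ s) x ^ 2) := by
  have h1 := Hpyth _ _ (Hfac_refine hr s.1) (φ s)
  have h2 : 0 ≤ HEx (fun x => (Hce (Hfac b' s.1) (φ s) x - Hce (Hfac b s.1) (φ s) x) ^ 2) :=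
    HEx_nonneg fun x => sq_nonneg _
  linarith

/-- one refinement step -/
lemma Hrefine {V : Type*} [Fintype V] [Nonempty V] (S : Finset (Finset J × ℕ))
    (φ : Finset J × ℕ → (J → V) → ℝ) (hφ : ∀ s, HDep s.1 (φ s))
    (b : Finset J → (J → V) → ℕ) (hb : ∀ I, HDep I (b I)) (m : ℕ) (hm : ∀ I x, b I x < m)
    (η : ℝ) (hη : 0 < η) (s : Finset J × ℕ) (hs : s ∈ S) (g : (J → V) → ℝ) (hg : HTest s.1 g)
    (hcor : η < |HEx (fun x => (φ s x - Hce (Hfac b s.1) (φ s) x) * g x)|) :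
    ∃ b' : Finset J → (J → V) → ℕ, (∀ I, HDep I (b' I)) ∧ (∀ I x, b' I x < 2 * m) ∧
      (∀ I x y, b' I x = b' I y → b I x = b I y) ∧ HEn S φ b + η ^ 2 ≤ HEn S φ b' := by
  obtain ⟨w, hw, hw1, hwc⟩ := Hlocal s.1 (fun x => φ s x - Hce (Hfac b s.1) (φ s) x) g
    (fun x y h => by
      simp only
      rw [hφ s x y h, Hce_fac_dep hb s.1 (φ s) x y h]) hg η hcor
  set b' : Finset J → (J → V) → ℕ := fun I x =>
    2 * b I x + (if ∃ i ∈ s.1, I = s.1.erase i ∧ w i x = 1 then 1 else 0) with hb'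
  have hr : ∀ I x y, b' I x = b' I y → b I x = b I y := by
    intro I x y h
    simp only [hb'] at h
    split_ifs at h <;> omega
  refine ⟨b', ?_, ?_, hr, ?_⟩
  · intro I x y h
    simp only [hb']
    rw [hb I x y h]
    have : (∃ i ∈ s.1, I = s.1.erase i ∧ w i x = 1) ↔ (∃ i ∈ s.1, I = s.1.erase i ∧ w i y = 1) := by
      refine exists_congr fun i => and_congr_right fun hi => and_congr_right fun hI => ?_
      rw [hw i hi x y (hI ▸ h)]
    simp only [this]
  · intro I x
    simp only [hb']
    have := hm I x
    split_ifs <;> omega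
  · have hmeas : ∀ x y, Hfac b' s.1 x = Hfac b' s.1 y →
        ∏ i ∈ s.1, w i x = ∏ i ∈ s.1, w i y := by
      intro x y h
      refine Finset.prod_congr rfl fun i hi => ?_
      have h1 := congrFun h i
      simp only [Hfac, hi, if_true] at h1
      have h2 := hr _ _ _ h1
      have h3 : ∀ z, (∃ l ∈ s.1, s.1.erase i = s.1.erase l ∧ w l z = 1) ↔ w i z = 1 := by
        intro z
        constructor
        · rintro ⟨l, hl, hel, hz⟩
          rwa [Finset.erase_injOn s.1 hi hl hel]
        · exact fun hz => ⟨i, hi, rfl, hz⟩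
      simp only [hb', h2, h3] at h1
      rcases hw1 i x with hx | hx <;> rcases hw1 i y with hy | hy <;> simp_all
    have hle1 : ∀ x, |∏ i ∈ s.1, w i x| ≤ 1 := by
      intro x
      rw [Finset.abs_prod]
      refine Finset.prod_le_one (fun _ _ => abs_nonneg _) fun i _ => ?_
      rcases hw1 i x with h | h <;> simp [h]
    have h4 := Hincr (Hfac b s.1) (Hfac b' s.1) (Hfac_refine hr s.1) (φ s) _ hmeas hle1
    have h5 : η ^ 2 ≤ HEx (fun x => (φ s x - Hce (Hfac b s.1) (φ s) x) * ∏ i ∈ s.1, w i x) ^ 2 := by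
      rw [← sq_abs (HEx _)]
      exact pow_le_pow_left₀ hη.le hwc.le 2
    unfold HEn
    rw [← Finset.add_sum_erase _ _ hs, ← Finset.add_sum_erase _ _ hs]
    have h6 := Finset.sum_le_sum (s := S.erase s) fun t _ => HEn_mono S φ hr t
    linarith

/-- weak regularity -/
lemma Hweak {V : Type*} [Fintype V] [Nonempty V] (S : Finset (Finset J × ℕ))
    (φ : Finset J × ℕ → (J → V) → ℝ) (hφ : ∀ s, HDep s.1 (φ s))
    (h0 : ∀ s x, 0 ≤ φ s x ∧ φ s x ≤ 1) (η : ℝ) (hη : 0 < η) (t : ℕ) :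
    ∀ (m : ℕ) (b : Finset J → (J → V) → ℕ), (∀ I, HDep I (b I)) → (∀ I x, b I x < m) →
    (S.card : ℝ) - t * η ^ 2 ≤ HEn S φ b →
    ∃ b' : Finset J → (J → V) → ℕ, (∀ I, HDep I (b' I)) ∧ (∀ I x, b' I x < 2 ^ t * m) ∧
      (∀ I x y, b' I x = b' I y → b I x = b I y) ∧
      ∀ s ∈ S, ∀ g, HTest s.1 g →
        |HEx (fun x => (φ s x - Hce (Hfac b' s.1) (φ s) x) * g x)| ≤ η := by
  induction t with
  | zero =>
    intro m b hb hm hE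
    refine ⟨b, hb, by simpa using hm, fun _ _ _ h => h, ?_⟩
    intro s hs g hg
    by_contra! hcon
    obtain ⟨b', _, _, _, h⟩ := Hrefine S φ hφ b hb m hm η hη s hs g hg hcon
    have := HEn_le S φ h0 b'
    have : 0 < η ^ 2 := by positivity
    simp at hE
    linarith
  | succ t ih =>
    intro m b hb hm hE
    by_cases hall : ∀ s ∈ S, ∀ g, HTest s.1 g →
        |HEx (fun x => (φ s x - Hce (Hfac b s.1) (φ s) x) * g x)| ≤ η
    · refine ⟨b, hb, fun I x => (hm I x).trans_le ?_, fun _ _ _ h => h, hall⟩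
      exact Nat.le_mul_of_pos_left _ (by positivity)
    · push Not at hall
      obtain ⟨s, hs, g, hg, hcon⟩ := hall
      obtain ⟨b', hb', hm', hr', h⟩ := Hrefine S φ hφ b hb m hm η hη s hs g hg hcon
      obtain ⟨b2, hb2, hm2, hr2, h2⟩ := ih (2 * m) b' hb' hm' (by push_cast at hE; linarith)
      refine ⟨b2, hb2, fun I x => ?_, fun I x y h => hr' _ _ _ (hr2 _ _ _ h), h2⟩
      have := hm2 I x
      rw [pow_succ, mul_assoc]
      exact this

/-- strong regularity, inductive form -/
lemma Hstrong (S : Finset (Finset J × ℕ)) (δ : ℝ) (hδ : 0 < δ) (β : ℕ → ℝ) (hβ : ∀ m, 0 < β m)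
    (t : ℕ) : ∀ m : ℕ, ∃ K : ℕ, ∀ (V : Type) [Fintype V] [Nonempty V]
    (φ : Finset J × ℕ → (J → V) → ℝ), (∀ s, HDep s.1 (φ s)) →
    (∀ s x, 0 ≤ φ s x ∧ φ s x ≤ 1) →
    ∀ b : Finset J → (J → V) → ℕ, (∀ I, HDep I (b I)) → (∀ I x, b I x < m) →
    (S.card : ℝ) - t * δ ≤ HEn S φ b →
    ∃ m' ≤ K, ∃ b₁ b₂ : Finset J → (J → V) → ℕ, (∀ I, HDep I (b₁ I)) ∧ (∀ I, HDep I (b₂ I)) ∧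
      (∀ I x, b₁ I x < m') ∧ ∀ s ∈ S,
        HEx (fun x => (Hce (Hfac b₂ s.1) (φ s) x - Hce (Hfac b₁ s.1) (φ s) x) ^ 2) ≤ δ ∧
        ∀ g, HTest s.1 g →
          |HEx (fun x => (φ s x - Hce (Hfac b₂ s.1) (φ s) x) * g x)| ≤ β m' := by
  induction t with
  | zero =>
    intro m
    refine ⟨m, ?_⟩
    intro V _ _ φ hφ h0 b hb hm hE
    obtain ⟨t, ht⟩ := exists_nat_gt ((S.card : ℝ) / (β m) ^ 2)
    have hβm := hβ m
    rw [div_lt_iff₀ (by positivity)] at ht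
    obtain ⟨b', hb', -, hr, h⟩ := Hweak S φ hφ h0 (β m) hβm t m b hb hm (by
      have : 0 ≤ HEn S φ b := Finset.sum_nonneg fun s _ => HEx_nonneg fun x => sq_nonneg _
      linarith)
    refine ⟨m, le_rfl, b, b', hb, hb', hm, fun s hs => ⟨?_, h s hs⟩⟩
    rw [Hpyth _ _ (Hfac_refine hr s.1) (φ s)]
    have h1 := HEn_le S φ h0 b'
    have h2 : HEn S φ b ≤ HEn S φ b' := Finset.sum_le_sum fun t _ => HEn_mono S φ hr t
    have h3 := Finset.single_le_sum (s := S) (f := fun s => HEx (fun x => Hce (Hfac b' s.1) (φ s) x ^ 2)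
      - HEx (fun x => Hce (Hfac b s.1) (φ s) x ^ 2))
      (fun t _ => sub_nonneg.2 (HEn_mono S φ hr t)) hs
    rw [Finset.sum_sub_distrib] at h3
    unfold HEn at *
    simp at hE
    linarith
  | succ t ih =>
    intro m
    have hβm := hβ m
    obtain ⟨T, hT⟩ := exists_nat_gt ((S.card : ℝ) / (β m) ^ 2)
    rw [div_lt_iff₀ (by positivity)] at hT
    obtain ⟨K, hK⟩ := ih (2 ^ T * m)
    refine ⟨max m K, ?_⟩
    intro V _ _ φ hφ h0 b hb hm hE
    obtain ⟨b', hb', hm', hr, h⟩ := Hweak S φ hφ h0 (β m) hβm T m b hb hm (by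
      have : 0 ≤ HEn S φ b := Finset.sum_nonneg fun s _ => HEx_nonneg fun x => sq_nonneg _
      linarith)
    by_cases hlt : HEn S φ b' ≤ HEn S φ b + δ
    · refine ⟨m, le_max_left _ _, b, b', hb, hb', hm, fun s hs => ⟨?_, h s hs⟩⟩
      rw [Hpyth _ _ (Hfac_refine hr s.1) (φ s)]
      have h3 := Finset.single_le_sum (s := S)
        (f := fun s => HEx (fun x => Hce (Hfac b' s.1) (φ s) x ^ 2)
          - HEx (fun x => Hce (Hfac b s.1) (φ s) x ^ 2))
        (fun t _ => sub_nonneg.2 (HEn_mono S φ hr t)) hs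
      rw [Finset.sum_sub_distrib] at h3
      unfold HEn at *
      linarith
    · obtain ⟨m', hm'K, rest⟩ := hK V φ hφ h0 b' hb' hm' (by push_cast at hE; linarith)
      exact ⟨m', hm'K.trans (le_max_right _ _), rest⟩

lemma Hreg (S : Finset (Finset J × ℕ)) (δ : ℝ) (hδ : 0 < δ) (β : ℕ → ℝ) (hβ : ∀ m, 0 < β m) :
    ∃ K : ℕ, ∀ (V : Type) [Fintype V] [Nonempty V]
    (φ : Finset J × ℕ → (J → V) → ℝ), (∀ s, HDep s.1 (φ s)) →
    (∀ s x, 0 ≤ φ s x ∧ φ s x ≤ 1) →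
    ∃ m' ≤ K, ∃ b₁ b₂ : Finset J → (J → V) → ℕ, (∀ I, HDep I (b₁ I)) ∧ (∀ I, HDep I (b₂ I)) ∧
      (∀ I x, b₁ I x < m') ∧ ∀ s ∈ S,
        HEx (fun x => (Hce (Hfac b₂ s.1) (φ s) x - Hce (Hfac b₁ s.1) (φ s) x) ^ 2) ≤ δ ∧
        ∀ g, HTest s.1 g →
          |HEx (fun x => (φ s x - Hce (Hfac b₂ s.1) (φ s) x) * g x)| ≤ β m' := by
  obtain ⟨T, hT⟩ := exists_nat_gt ((S.card : ℝ) / δ)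
  rw [div_lt_iff₀ hδ] at hT
  obtain ⟨K, hK⟩ := Hstrong S δ hδ β hβ T 1
  refine ⟨K, fun V _ _ φ hφ h0 => hK V φ hφ h0 (fun _ _ => 0) (fun _ _ _ _ => rfl)
    (fun _ _ => Nat.one_pos) ?_⟩
  have : 0 ≤ HEn S φ (fun _ _ => 0) := Finset.sum_nonneg fun s _ => HEx_nonneg fun x => sq_nonneg _
  linarith

end regularity

section counting

lemma Hcount {X ι : Type*} [Fintype X] (U : Finset ι) (A f : ι → X → ℝ) (d : ι → ℝ)
    (G : X → ℝ) (β ρ : ℝ) (hA : ∀ i x, 0 ≤ A i x ∧ A i x ≤ 1) (hG : ∀ x, 0 ≤ G x)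
    (hd : ∀ i, 0 ≤ d i ∧ d i ≤ 1) :
    (∀ i ∈ U, ∀ K ⊆ U, i ∉ K →
      |HEx (fun x => (A i x - f i x) * (G x * ∏ l ∈ K, A l x))| ≤ β) →
    (∀ i ∈ U, HEx (fun x => G x * |f i x - d i|) ≤ ρ) →
    |HEx (fun x => G x * ∏ i ∈ U, A i x) - (∏ i ∈ U, d i) * HEx G| ≤ U.card * (β + ρ) := by
  induction U using Finset.induction_on with
  | empty => intro _ _; simp
  | insert i U hi ih =>
    intro h1 h2
    have ih' := ih (fun l hl K hK hlK => h1 l (by simp [hl]) K (hK.trans (Finset.subset_insert _ _)) hlK)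
      (fun l hl => h2 l (by simp [hl]))
    have e1 := h1 i (by simp) U (Finset.subset_insert _ _) hi
    have e2 : |HEx (fun x => (f i x - d i) * (G x * ∏ l ∈ U, A l x))| ≤ ρ := by
      refine (HEx_abs_le _).trans ((HEx_mono fun x => ?_).trans (h2 i (by simp)))
      have hp0 : 0 ≤ ∏ l ∈ U, A l x := Finset.prod_nonneg fun l _ => (hA l x).1
      have hp1 : ∏ l ∈ U, A l x ≤ 1 := Finset.prod_le_one (fun l _ => (hA l x).1) fun l _ => (hA l x).2
      rw [abs_mul, abs_of_nonneg (mul_nonneg (hG x) hp0), mul_comm]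
      exact mul_le_mul_of_nonneg_right (mul_le_of_le_one_right (hG x) hp1) (abs_nonneg _)
    have e3 : HEx (fun x => G x * ∏ l ∈ insert i U, A l x)
        = HEx (fun x => (A i x - f i x) * (G x * ∏ l ∈ U, A l x))
        + HEx (fun x => (f i x - d i) * (G x * ∏ l ∈ U, A l x))
        + d i * HEx (fun x => G x * ∏ l ∈ U, A l x) := by
      rw [← HEx_mul_left, ← HEx_add, ← HEx_add]
      congr 1
      ext x
      rw [Finset.prod_insert hi]
      ring
    rw [e3, Finset.prod_insert hi, Finset.card_insert_of_notMem hi]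
    set a := HEx (fun x => G x * ∏ l ∈ U, A l x)
    set z := (∏ l ∈ U, d l) * HEx G with hz
    have e4 : |d i * (a - z)| ≤ U.card * (β + ρ) := by
      rw [abs_mul, abs_of_nonneg (hd i).1]
      exact (mul_le_of_le_one_left (abs_nonneg _) (hd i).2).trans ih'
    have e5 : d i * (∏ l ∈ U, d l) * HEx G = d i * z := by rw [hz]; ring
    rw [e5]
    rw [abs_le] at *
    push_cast
    constructor <;> nlinarith

lemma Hbad1 {X β : Type*} [Fintype X] [Nonempty X] (κ : X → β) (c : X → ℕ) (k : ℕ) (hc : ∀ x, c x < k)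
    (τ : ℝ) (hτ : 0 ≤ τ) :
    HEx (fun x => if Hce κ (fun y => if c y = c x then 1 else 0) x < τ then (1:ℝ) else 0) ≤ k * τ := by
  have h1 : ∀ x, (if Hce κ (fun y => if c y = c x then 1 else 0) x < τ then (1:ℝ) else 0)
      ≤ ∑ a ∈ Finset.range k, (if c x = a then 1 else 0) *
        (if Hce κ (fun y => if c y = a then 1 else 0) x < τ then (1:ℝ) else 0) := by
    intro x
    refine le_trans ?_ (Finset.single_le_sum (f := fun a => (if c x = a then (1:ℝ) else 0) *
        (if Hce κ (fun y => if c y = a then 1 else 0) x < τ then (1:ℝ) else 0))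
        (fun a _ => by positivity) (Finset.mem_range.2 (hc x)))
    simp
  refine (HEx_mono h1).trans ?_
  rw [HEx_sum]
  refine (Finset.sum_le_card_nsmul _ _ τ fun a _ => ?_).trans (by simp)
  rw [← HEx_ce_mul κ (fun x => if c x = a then (1:ℝ) else 0)
    (fun x => if Hce κ (fun y => if c y = a then 1 else 0) x < τ then (1:ℝ) else 0)]
  · refine (HEx_mono (g := fun _ => τ) fun x => ?_).trans (HEx_const τ).le
    split_ifs with h
    · simpa using h.le
    · simpa using hτ
  · intro x y h
    simp only [Hce_congr κ _ h]

lemma Hbad2 {X β : Type*} [Fintype X] (κ : X → β) (c : X → ℕ) (k : ℕ) (hc : ∀ x, c x < k)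
    (h : ℕ → X → ℝ) (hh : ∀ a x, 0 ≤ h a x) (s M : ℝ) (hs : 0 < s) (hM : ∀ a < k, HEx (h a) ≤ M) :
    HEx (fun x => if s < Hce κ (h (c x)) x then (1:ℝ) else 0) ≤ k * (M / s) := by
  have h1 : ∀ x, (if s < Hce κ (h (c x)) x then (1:ℝ) else 0)
      ≤ ∑ a ∈ Finset.range k, (if s < Hce κ (h a) x then (1:ℝ) else 0) := by
    intro x
    exact Finset.single_le_sum (f := fun a => (if s < Hce κ (h a) x then (1:ℝ) else 0))
        (fun a _ => by positivity) (Finset.mem_range.2 (hc x))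
  refine (HEx_mono h1).trans ?_
  rw [HEx_sum]
  refine (Finset.sum_le_card_nsmul _ _ (M / s) fun a ha => ?_).trans (by simp)
  refine (Hmarkov _ (Hce_nonneg κ (hh a)) s hs).trans ?_
  gcongr
  have := HEx_ce_mul κ (h a) (fun _ => 1) (fun _ _ _ => rfl)
  simp only [mul_one] at this
  change HEx (fun x => Hce κ (h a) x) ≤ M
  rw [this]
  exact hM a (Finset.mem_range.1 ha)

lemma Harith (qS qT pS pT DU DT a g z t θ s C ε : ℝ) (hqS : 0 < qS) (hqT : 0 < qT)
    (hDU0 : 0 ≤ DU) (hDT1 : DT ≤ 1) (hDTt : t ≤ DT) (hDSt : t ≤ DU * DT) (ht : 0 < t)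
    (hC : 0 ≤ C) (hz : 0 ≤ z) (hg : 0 ≤ g) (hs : 0 ≤ s) (hε : 0 < ε) (hθ0 : 0 ≤ θ)
    (hθ : θ ≤ t * ε / 8) (hθ' : θ ≤ t / 8) (hsθ : s ≤ θ)
    (h1 : |pS - DU * DT * qS| ≤ θ * qS) (h2 : |pT - DT * qT| ≤ θ * qT)
    (h3 : |a - DU * g| ≤ θ * qS) (h4 : g * qT ≤ qS * (C * z + s * qT)) :
    t / 2 * qS ≤ pS ∧ a * pT ≤ pS * (2 * C * z + ε * pT) := by
  rw [abs_le] at h1 h2 h3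
  have k1 : 7 / 8 * (DU * DT * qS) ≤ pS := by nlinarith
  have k2 : pT ≤ 9 / 8 * (DT * qT) := by nlinarith
  have k3 : 7 / 8 * (DT * qT) ≤ pT := by nlinarith
  have k4 : 7 / 8 * (t * qS) ≤ pS := by nlinarith
  have k5 : 7 / 8 * (t * qT) ≤ pT := by nlinarith
  have hpS : 0 < pS := lt_of_lt_of_le (by positivity) k4
  have hpT : 0 < pT := lt_of_lt_of_le (by positivity) k5
  refine ⟨by nlinarith, ?_⟩
  have m1 : a * pT ≤ DU * g * pT + θ * qS * pT := by nlinarith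
  have m2 : DU * g * pT ≤ DU * g * (9 / 8 * (DT * qT)) := by gcongr
  have hDS : 0 ≤ DU * DT := ht.le.trans hDSt
  have m3 : DU * g * (9 / 8 * (DT * qT)) ≤ 9 / 8 * (DU * DT) * (qS * (C * z + s * qT)) := by
    have := mul_le_mul_of_nonneg_left h4 (show 0 ≤ 9 / 8 * (DU * DT) by positivity)
    linarith
  have hw : 0 ≤ C * z + s * qT := by positivity
  have m4 : 9 / 8 * (DU * DT) * (qS * (C * z + s * qT)) ≤ 9 / 7 * pS * (C * z + s * qT) := by
    have : 9 / 8 * (DU * DT) * qS ≤ 9 / 7 * pS := by linarith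
    have := mul_le_mul_of_nonneg_right this hw
    linarith
  have m5 : s * qT ≤ ε / 7 * pT := by
    have h5 : s * qT ≤ t * ε / 8 * qT := by gcongr; linarith
    have h6 := mul_le_mul_of_nonneg_left k5 (show 0 ≤ ε / 7 by positivity)
    linarith
  have m6 : θ * qS ≤ ε / 7 * pS := by
    have h5 : θ * qS ≤ t * ε / 8 * qS := by gcongr
    have h6 := mul_le_mul_of_nonneg_left k4 (show 0 ≤ ε / 7 by positivity)
    linarith
  have m7 : θ * qS * pT ≤ ε / 7 * pS * pT := by gcongr
  have m8 : 9 / 7 * pS * (C * z + s * qT) ≤ 9 / 7 * pS * (C * z + ε / 7 * pT) := by gcongr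
  have u1 : 0 ≤ pS * (C * z) := by positivity
  have u2 : 0 ≤ pS * pT * ε := by positivity
  have u3 : 9 / 7 * pS * (C * z + ε / 7 * pT) = 9 / 7 * (pS * (C * z)) + 9 / 49 * (pS * pT * ε) := by
    ring
  have u4 : ε / 7 * pS * pT = 1 / 7 * (pS * pT * ε) := by ring
  have u5 : pS * (2 * C * z + ε * pT) = 2 * (pS * (C * z)) + pS * pT * ε := by ring
  rw [u5]
  linarith

variable {J : Type*} [Fintype J]

/-- pattern indicator -/
noncomputable def HR {V : Type*} (D : Finset (Finset J)) (j : ℕ) (b : Finset J → (J → V) → ℕ)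
    (S : Finset J) (x y : J → V) : ℝ :=
  ∏ I ∈ D.filter (fun I => I.card ≤ j ∧ I ⊆ S), if b I y = b I x then (1:ℝ) else 0

/-- pattern map -/
noncomputable def HK {V : Type*} (D : Finset (Finset J)) (j : ℕ) (b : Finset J → (J → V) → ℕ)
    (S : Finset J) (x : J → V) : Finset J → ℕ :=
  fun I => if I ∈ D ∧ I.card ≤ j ∧ I ⊆ S then b I x else 0

lemma HK_dep {V : Type*} (D : Finset (Finset J)) (j : ℕ) {b : Finset J → (J → V) → ℕ}
    (hb : ∀ I, HDep I (b I)) (S : Finset J) : HDep S (HK D j b S) := by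
  intro x y h
  ext I
  unfold HK
  split_ifs with hI
  · exact hb I x y fun i hi => h i (hI.2.2 hi)
  · rfl

lemma HR_eq {V : Type*} (D : Finset (Finset J)) (j : ℕ) (b : Finset J → (J → V) → ℕ)
    (S : Finset J) (x y : J → V) :
    HR D j b S x y = if HK D j b S y = HK D j b S x then 1 else 0 := by
  unfold HR
  rw [Finset.prod_ite_zero]
  simp only [Finset.prod_const_one]
  congr 1
  simp only [Finset.mem_filter, eq_iff_iff, HK, funext_iff]
  refine forall_congr' fun I => ?_
  by_cases h : I ∈ D ∧ I.card ≤ j ∧ I ⊆ S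
  · simp [h]
  · simp [h]

lemma HR_01 {V : Type*} (D : Finset (Finset J)) (j : ℕ) (b : Finset J → (J → V) → ℕ)
    (S : Finset J) (x y : J → V) : HR D j b S x y = 0 ∨ HR D j b S x y = 1 := by
  rw [HR_eq]; split_ifs <;> simp

lemma HR_ce {V : Type*} [Fintype V] [Nonempty V] (D : Finset (Finset J)) (j : ℕ)
    (b : Finset J → (J → V) → ℕ) (S : Finset J) (x : J → V) (h : (J → V) → ℝ) :
    HEx (fun y => HR D j b S x y * h y) = Hce (HK D j b S) h x * HEx (HR D j b S x) := by
  have h1 : (fun y => HR D j b S x y * h y)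
      = fun y => if HK D j b S y = HK D j b S x then h y else 0 := by
    ext y; rw [HR_eq]; split_ifs <;> simp
  have h2 : HR D j b S x = fun y => if HK D j b S y = HK D j b S x then 1 else 0 := by
    ext y; rw [HR_eq]
  rw [h1, h2]
  unfold HEx Hce
  have := (Hden_pos (HK D j b S) x).ne'
  field_simp
  congr!

/-- The inductive statement. -/
def HP (J : Type*) [Fintype J] (D : Finset (Finset J)) (j : ℕ) : Prop :=
  ∃ C : ℝ, 1 ≤ C ∧ ∀ (k : ℕ) (ε : ℝ), 0 < ε → ∃ η : ℝ, 0 < η ∧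
    ∀ (V : Type) [Fintype V] [Nonempty V] (c : Finset J → (J → V) → ℕ),
      (∀ I, HDep I (c I)) → (∀ I x, c I x < k) →
      ∃ (b : Finset J → (J → V) → ℕ) (B : Finset J → Set (J → V)),
        (∀ I, HDep I (b I)) ∧ (∀ I, HDep I (fun x => x ∈ B I)) ∧
        (∀ I ∈ D, I.card = j → b I = c I) ∧
        (∀ I ∈ D, I.card ≤ j → HEx (fun x => if x ∈ B I then (1:ℝ) else 0) ≤ ε) ∧
        ∀ x, (∀ I ∈ D, I.card ≤ j → x ∉ B I) → ∀ S : Finset J,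
          η ≤ HEx (HR D j b S x) ∧
          ∀ T ⊆ S, ∀ h : (J → V) → ℝ, HDep T h → (∀ y, h y = 0 ∨ h y = 1) →
            HEx (fun y => HR D j b S x y * h y) * HEx (HR D j b T x) ≤
              HEx (HR D j b S x) *
                (C * HEx (fun y => HR D j b T x y * h y) + ε * HEx (HR D j b T x))

lemma HP_zero (D : Finset (Finset J)) : HP J D 0 := by
  refine ⟨1, le_rfl, fun k ε hε => ⟨1, one_pos, ?_⟩⟩
  intro V _ _ c hc hk
  refine ⟨c, fun _ => ∅, hc, fun _ _ _ _ => rfl, fun _ _ _ => rfl, ?_, ?_⟩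
  · intro I _ _
    simp [HEx, hε.le]
  · intro x _ S
    have h1 : ∀ S, HR D 0 c S x = fun _ => 1 := by
      intro S
      ext y
      unfold HR
      refine Finset.prod_eq_one fun I hI => ?_
      simp only [Finset.mem_filter, Nat.le_zero, Finset.card_eq_zero] at hI
      rw [if_pos]
      refine hc I y x ?_
      simp [hI.2.1]
    simp only [h1, HEx_const]
    refine ⟨le_rfl, fun T _ h _ _ => ?_⟩
    simp only [one_mul]
    linarith

end counting

section step
variable {J : Type*} [Fintype J]

lemma HR_dep {V : Type*} (D : Finset (Finset J)) (j : ℕ) {b : Finset J → (J → V) → ℕ}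
    (hb : ∀ I, HDep I (b I)) (S : Finset J) (x : J → V) : HDep S (HR D j b S x) := by
  intro y z h
  rw [HR_eq, HR_eq, HK_dep D j hb S y z h]

lemma HR_split {V : Type*} (D : Finset (Finset J)) (j : ℕ) (b b' : Finset J → (J → V) → ℕ)
    (h : ∀ I : Finset J, I.card ≤ j → b I = b' I) (S : Finset J) (x y : J → V) :
    HR D (j + 1) b S x y = HR D j b' S x y *
      ∏ I ∈ D.filter (fun I => I.card = j + 1 ∧ I ⊆ S), if b I y = b I x then (1:ℝ) else 0 := by
  unfold HR
  rw [← Finset.prod_filter_mul_prod_filter_not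
    (D.filter (fun I => I.card ≤ j + 1 ∧ I ⊆ S)) (fun I => I.card ≤ j)]
  congr 1
  · rw [Finset.filter_filter]
    refine Finset.prod_congr ?_ ?_
    · ext I; simp only [Finset.mem_filter]; constructor
      · rintro ⟨a, ⟨b, c⟩, d⟩; exact ⟨a, d, c⟩
      · rintro ⟨a, b, c⟩; exact ⟨a, ⟨by omega, c⟩, b⟩
    · intro I hI
      simp only [Finset.mem_filter] at hI
      rw [h I hI.2.1]
  · rw [Finset.filter_filter]
    refine Finset.prod_congr ?_ (fun _ _ => rfl)
    ext I; simp only [Finset.mem_filter]; constructor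
    · rintro ⟨a, ⟨b, c⟩, d⟩; exact ⟨a, by omega, c⟩
    · rintro ⟨a, b, c⟩; exact ⟨a, ⟨by omega, c⟩, by omega⟩

/-- test function property of lower order patterns -/
lemma HR_test {V : Type*} (D : Finset (Finset J)) (j : ℕ) {b : Finset J → (J → V) → ℕ}
    (hb : ∀ I, HDep I (b I)) (S : Finset J) (x : J → V) (I : Finset J) (hI : j < I.card) :
    HTest I (HR D j b S x) := by
  unfold HR
  refine HTest.prod _ (fun I' y => if b I' y = b I' x then (1:ℝ) else 0) fun I' hI' => ?_
  simp only [Finset.mem_filter] at hI'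
  refine HTest.of_dep (T := I') ?_ ?_ ?_
  · intro y z h
    simp only [hb I' y z h]
  · intro h
    have := Finset.card_le_card h
    omega
  · intro y; split_ifs <;> simp

lemma Hmin (f : ℕ → ℝ) (hf : ∀ m, 0 < f m) (K : ℕ) : ∃ η, 0 < η ∧ ∀ m ≤ K, η ≤ f m := by
  obtain ⟨m, _, h⟩ := Finset.exists_min_image (Finset.range (K + 1)) f ⟨0, by simp⟩
  exact ⟨f m, hf m, fun l hl => h l (by simp; omega)⟩

lemma HP_succ (D : Finset (Finset J)) (hD : ∀ I ∈ D, ∀ I' ⊆ I, I' ∈ D) (j : ℕ) (ih : HP J D j) :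
    HP J D (j + 1) := by
  obtain ⟨C, hC1, ih⟩ := ih
  refine ⟨2 * C, by linarith, fun k ε hε => ?_⟩
  -- parameters
  obtain ⟨ε1, hε1, hε1ε, hε11⟩ : ∃ ε1 : ℝ, 0 < ε1 ∧ ε1 ≤ ε ∧ ε1 ≤ 1 :=
    ⟨min ε 1, by positivity, min_le_left _ _, min_le_right _ _⟩
  obtain ⟨τ, hτ0, hτ1, hkτ⟩ : ∃ τ : ℝ, 0 < τ ∧ τ ≤ 1 ∧ k * τ ≤ ε / 2 := by
    refine ⟨ε1 / (2 * (k + 1)), by positivity, ?_, ?_⟩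
    · rw [div_le_one (by positivity)]
      have : (0:ℝ) ≤ k := Nat.cast_nonneg k
      linarith
    · rw [mul_div_assoc', div_le_iff₀ (by positivity)]
      have : (0:ℝ) ≤ k := Nat.cast_nonneg k
      nlinarith
  set N : ℕ := D.card with hN
  set t : ℝ := τ ^ N with ht
  have ht0 : 0 < t := by positivity
  have ht1 : t ≤ 1 := pow_le_one₀ hτ0.le hτ1
  set θ : ℝ := t * ε1 / 8 with hθ
  have hθ0 : 0 < θ := by positivity
  have hθε : θ ≤ ε := by
    have : t * ε1 ≤ 1 * ε1 := by gcongr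
    rw [hθ]; linarith
  obtain ⟨s, hs0, hsθ, hsN⟩ : ∃ s : ℝ, 0 < s ∧ s ≤ θ ∧ N * (s * (2 + C)) ≤ θ / 2 := by
    refine ⟨θ / (2 * (N + 1) * (2 + C)), by positivity, ?_, ?_⟩
    · refine div_le_self hθ0.le ?_
      have : (0:ℝ) ≤ N := Nat.cast_nonneg N
      nlinarith
    · have : (0:ℝ) ≤ N := Nat.cast_nonneg N
      rw [show (N:ℝ) * (θ / (2 * (N + 1) * (2 + C)) * (2 + C)) = θ / 2 * (N / (N + 1)) by
        field_simp]
      refine mul_le_of_le_one_right (by positivity) ?_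
      rw [div_le_one (by positivity)]
      linarith
  obtain ⟨δ, hδ0, hkδ⟩ : ∃ δ : ℝ, 0 < δ ∧ k * (δ / s ^ 2 / s) ≤ ε / 2 := by
    refine ⟨ε / (2 * (k + 1)) * s ^ 3, by positivity, ?_⟩
    have h1 : (k:ℝ) * (ε / (2 * (k + 1)) * s ^ 3 / s ^ 2 / s) = ε / 2 * (k / (k + 1)) := by
      field_simp
    rw [h1]
    refine mul_le_of_le_one_right (by positivity) ?_
    rw [div_le_one (by positivity)]
    linarith
  choose η' hη' ihm using fun m : ℕ => ih m s hs0
  set β : ℕ → ℝ := fun m => θ * η' m / (2 * (N + 1)) with hβ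
  have hβ0 : ∀ m, 0 < β m := fun m => by have := hη' m; simp only [hβ]; positivity
  obtain ⟨K, hK⟩ := Hreg ((D.filter (fun I => I.card = j + 1)) ×ˢ Finset.range k) δ hδ0 β hβ0
  obtain ⟨η₀, hη₀, hη₀K⟩ := Hmin η' hη' K
  refine ⟨t / 2 * η₀, by positivity, ?_⟩
  intro V _ _ c hc hck
  -- regularise
  set φ : Finset J × ℕ → (J → V) → ℝ := fun p x => if c p.1 x = p.2 then 1 else 0 with hφ
  have hφdep : ∀ p, HDep p.1 (φ p) := fun p x y h => by simp only [hφ, hc p.1 x y h]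
  have hφ01 : ∀ p x, 0 ≤ φ p x ∧ φ p x ≤ 1 := fun p x => by
    simp only [hφ]; split_ifs <;> norm_num
  obtain ⟨m, hmK, b₁, b₂, hb₁, hb₂, hb₁m, hreg⟩ := hK V φ hφdep hφ01
  obtain ⟨b, B, hb, hB, hbb₁, hBε, hmain⟩ := ihm m V b₁ hb₁ hb₁m
  have hη'0 := hη' m
  set f : Finset J → ℕ → (J → V) → ℝ := fun I a => Hce (Hfac b₂ I) (φ (I, a)) with hf
  set d : Finset J → ℕ → (J → V) → ℝ := fun I a => Hce (Hfac b₁ I) (φ (I, a)) with hd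
  have hfdep : ∀ I a, HDep I (f I a) := fun I a => Hce_fac_dep hb₂ I _
  have hddep : ∀ I a, HDep I (d I a) := fun I a => Hce_fac_dep hb₁ I _
  have hf01 : ∀ I a x, 0 ≤ f I a x ∧ f I a x ≤ 1 := fun I a x =>
    ⟨Hce_nonneg _ (fun y => (hφ01 _ y).1) x, Hce_le_one _ (fun y => (hφ01 _ y).2) x⟩
  have hd01 : ∀ I a x, 0 ≤ d I a x ∧ d I a x ≤ 1 := fun I a x =>
    ⟨Hce_nonneg _ (fun y => (hφ01 _ y).1) x, Hce_le_one _ (fun y => (hφ01 _ y).2) x⟩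
  set e : Finset J → ℕ → (J → V) → ℝ := fun I a x => if s < |f I a x - d I a x| then 1 else 0 with he
  have hedep : ∀ I a, HDep I (e I a) := fun I a x y h => by
    simp only [he, hfdep I a x y h, hddep I a x y h]
  have he01 : ∀ I a x, e I a x = 0 ∨ e I a x = 1 := fun I a x => by
    simp only [he]; split_ifs <;> simp
  set bn : Finset J → (J → V) → ℕ := fun I => if I.card = j + 1 then c I else b I with hbn
  set Bn : Finset J → Set (J → V) := fun I => if I.card = j + 1 then
    {x | d I (c I x) x < τ ∨ s < Hce (HK D j b I) (e I (c I x)) x} else B I with hBn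
  have hbn_le : ∀ I : Finset J, I.card ≤ j → bn I = b I := fun I hI => by
    simp only [hbn]; rw [if_neg (by omega)]
  refine ⟨bn, Bn, ?_, ?_, ?_, ?_, ?_⟩
  · intro I
    simp only [hbn]
    split_ifs
    · exact hc I
    · exact hb I
  · intro I
    simp only [hBn]
    split_ifs with hI
    · intro x y h
      simp only [Set.mem_setOf_eq]
      rw [hc I x y h, hddep I _ x y h, Hce_congr _ _ (HK_dep D j hb I x y h)]
    · exact hB I
  · intro I _ hI
    simp only [hbn, hI, if_true]
  · intro I hID hI
    by_cases hI' : I.card = j + 1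
    · simp only [hBn, hI', if_true, Set.mem_setOf_eq]
      have e1 := Hbad1 (Hfac b₁ I) (c I) k (hck I) τ hτ0.le
      have e2 := Hbad2 (HK D j b I) (c I) k (hck I) (e I) (fun a x => by
        rcases he01 I a x with h | h <;> simp [h]) s (δ / s ^ 2) hs0 (by
        intro a ha
        have h1 := (hreg (I, a) (by simp [hID, hI', ha])).1
        have h2 := Hmarkov (fun x => (f I a x - d I a x) ^ 2) (fun x => sq_nonneg _) (s ^ 2)
          (by positivity)
        refine le_trans (HEx_mono fun x => ?_) (h2.trans (by gcongr))
        simp only [he]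
        have : s < |f I a x - d I a x| → s ^ 2 < (f I a x - d I a x) ^ 2 := fun h => by
          rw [← sq_abs (f I a x - d I a x)]
          exact pow_lt_pow_left₀ h hs0.le (by norm_num)
        by_cases h9 : s < |f I a x - d I a x|
        · rw [if_pos h9, if_pos (this h9)]
        · rw [if_neg h9]
          split_ifs <;> norm_num)
      have e3 : HEx (fun x => if d I (c I x) x < τ ∨ s < Hce (HK D j b I) (e I (c I x)) x
          then (1:ℝ) else 0) ≤ HEx (fun x => (if d I (c I x) x < τ then (1:ℝ) else 0) +
            (if s < Hce (HK D j b I) (e I (c I x)) x then (1:ℝ) else 0)) := by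
        refine HEx_mono fun x => ?_
        by_cases h1 : d I (c I x) x < τ <;>
          by_cases h2 : s < Hce (HK D j b I) (e I (c I x)) x <;> simp [h1, h2]
      rw [HEx_add] at e3
      have e1' : HEx (fun x => if d I (c I x) x < τ then (1:ℝ) else 0) ≤ k * τ := e1
      linarith
    · simp only [hBn, hI', if_false]
      exact (hBε I hID (by omega)).trans (hsθ.trans hθε)
  -- main part
  intro x hx
  have hxB : ∀ I ∈ D, I.card ≤ j → x ∉ B I := by
    intro I hID hI
    have := hx I hID (by omega)
    simp only [hBn] at this
    rwa [if_neg (by omega)] at this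
  have hxd : ∀ I ∈ D, I.card = j + 1 → τ ≤ d I (c I x) x ∧
      Hce (HK D j b I) (e I (c I x)) x ≤ s := by
    intro I hID hI
    have := hx I hID (by omega)
    simp only [hBn] at this
    rw [if_pos hI] at this
    simp only [Set.mem_setOf_eq, not_or, not_lt] at this
    exact this
  have hm2 := hmain x hxB
  set q : Finset J → ℝ := fun S => HEx (HR D j b S x) with hq
  have hqη : ∀ S, η' m ≤ q S := fun S => (hm2 S).1
  have hq0 : ∀ S, 0 < q S := fun S => hη'0.trans_le (hqη S)
  have hR0 : ∀ S y, 0 ≤ HR D j b S x y := fun S y => by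
    rcases HR_01 D j b S x y with h | h <;> simp [h]
  set A : Finset J → (J → V) → ℝ := fun I y => if c I y = c I x then 1 else 0 with hA
  have hA01 : ∀ I y, A I y = 0 ∨ A I y = 1 := fun I y => by simp only [hA]; split_ifs <;> simp
  have hAdep : ∀ I, HDep I (A I) := fun I y z h => by simp only [hA, hc I y z h]
  set L : Finset J → Finset (Finset J) := fun S => D.filter (fun I => I.card = j + 1 ∧ I ⊆ S) with hL
  have hRn : ∀ S y, HR D (j + 1) bn S x y = HR D j b S x y * ∏ I ∈ L S, A I y := by
    intro S y
    rw [HR_split D j bn b hbn_le]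
    congr 1
    refine Finset.prod_congr rfl fun I hI => ?_
    simp only [hL, Finset.mem_filter] at hI
    simp only [hbn, hI.2.1, if_true, hA]
  -- fluctuation bound
  have hfluc : ∀ S, ∀ I ∈ L S, HEx (fun y => HR D j b S x y * |f I (c I x) y - d I (c I x) x|)
      ≤ s * (2 + C) * q S := by
    intro S I hI
    simp only [hL, Finset.mem_filter] at hI
    obtain ⟨hID, hIc, hIS⟩ := hI
    have h1 := (hm2 S).2 I hIS (e I (c I x)) (hedep I _) (he01 I _)
    have h2 : HEx (fun y => HR D j b I x y * e I (c I x) y) ≤ s * q I := by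
      rw [HR_ce]
      exact mul_le_mul_of_nonneg_right (hxd I hID hIc).2 (hq0 I).le
    have h3 : HEx (fun y => HR D j b S x y * e I (c I x) y) ≤ q S * (s * (1 + C)) := by
      have h4 : HEx (fun y => HR D j b S x y * e I (c I x) y) * q I
          ≤ q S * (s * (1 + C)) * q I := by
        refine h1.trans ?_
        have : C * HEx (fun y => HR D j b I x y * e I (c I x) y) ≤ C * (s * q I) := by gcongr
        have h5 := mul_le_mul_of_nonneg_left this (hq0 S).le
        simp only [hq] at h5 ⊢
        linarith
      exact le_of_mul_le_mul_right h4 (hq0 I)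
    have h4 : HEx (fun y => HR D j b S x y * |f I (c I x) y - d I (c I x) x|)
        ≤ HEx (fun y => s * HR D j b S x y + HR D j b S x y * e I (c I x) y) := by
      refine HEx_mono fun y => ?_
      rcases HR_01 D j b S x y with h | h
      · simp [h]
      · rw [h]
        have hdeq : d I (c I x) x = d I (c I x) y := by
          refine Hce_congr _ _ ?_
          rw [HR_eq] at h
          have hK' : HK D j b S y = HK D j b S x := by
            by_contra hne
            simp [hne] at h
          ext i
          unfold Hfac
          split_ifs with hi
          · have h5 := congrFun hK' (I.erase i)
            have h6 : (I.erase i).card = j := by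
              rw [Finset.card_erase_of_mem hi]; omega
            have h7 : I.erase i ∈ D := hD I hID _ (Finset.erase_subset _ _)
            have h8 : I.erase i ⊆ S := (Finset.erase_subset _ _).trans hIS
            simp only [HK] at h5
            rw [if_pos ⟨h7, h6.le, h8⟩, if_pos ⟨h7, h6.le, h8⟩, hbb₁ _ h7 h6] at h5
            exact h5.symm
          · rfl
        rw [hdeq]
        have ha : |f I (c I x) y - d I (c I x) y| ≤ 1 := by
          have := hf01 I (c I x) y
          have := hd01 I (c I x) y
          rw [abs_le]; constructor <;> linarith
        simp only [he]
        split_ifs with h9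
        · linarith
        · push Not at h9
          linarith
    rw [HEx_add, HEx_mul_left] at h4
    simp only [hq] at h3 ⊢
    linarith
  -- counting
  have hcount : ∀ S, ∀ U ⊆ L S, ∀ G : (J → V) → ℝ, (∀ I ∈ U, HTest I G) → (∀ y, 0 ≤ G y) →
      (∀ y, G y ≤ HR D j b S x y) →
      |HEx (fun y => G y * ∏ I ∈ U, A I y) - (∏ I ∈ U, d I (c I x) x) * HEx G| ≤ θ * q S := by
    intro S U hU G hGt hG0 hGR
    have h1 := Hcount U A (fun I => f I (c I x)) (fun I => d I (c I x) x) G (β m)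
      (s * (2 + C) * q S) (fun I y => by rcases hA01 I y with h | h <;> simp [h]) hG0
      (fun I => hd01 I _ x) ?_ ?_
    · refine h1.trans ?_
      have hUN : (U.card : ℝ) ≤ N := by
        exact_mod_cast Finset.card_le_card (hU.trans (Finset.filter_subset _ _))
      have h2 : (N:ℝ) * β m ≤ θ / 2 * η' m := by
        simp only [hβ]
        rw [show (N:ℝ) * (θ * η' m / (2 * (N + 1))) = θ / 2 * η' m * (N / (N + 1)) by field_simp]
        refine mul_le_of_le_one_right (by positivity) ?_
        rw [div_le_one (by positivity)]
        linarith
      have h3 : θ / 2 * η' m ≤ θ / 2 * q S := by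
        have := hqη S
        gcongr
      have h4 := mul_le_mul_of_nonneg_right hsN (hq0 S).le
      have h5 : (U.card : ℝ) * (β m + s * (2 + C) * q S) ≤ N * (β m + s * (2 + C) * q S) := by
        have := hβ0 m
        have := hq0 S
        gcongr
      linarith
    · intro I hI K' hK' hIK
      have hI' := hU hI
      simp only [hL, Finset.mem_filter] at hI'
      have h2 := (hreg (I, c I x) (by simp [hI'.1, hI'.2.1, hck])).2
        (fun y => G y * ∏ l ∈ K', A l y) ?_
      · exact h2
      · refine (hGt I hI).mul (HTest.prod _ A fun l hl => ?_)
        have hl' := hU (hK' hl)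
        simp only [hL, Finset.mem_filter] at hl'
        refine HTest.of_dep (hAdep l) ?_ (hA01 l)
        intro hsub
        have := Finset.eq_of_subset_of_card_le hsub (by omega)
        exact hIK (this ▸ hl)
    · intro I hI
      refine (HEx_mono fun y => ?_).trans (hfluc S I (hU hI))
      exact mul_le_mul_of_nonneg_right (hGR y) (abs_nonneg _)
  have hprod_t : ∀ S, ∀ U ⊆ L S, t ≤ ∏ I ∈ U, d I (c I x) x := by
    intro S U hU
    have h1 : τ ^ U.card ≤ ∏ I ∈ U, d I (c I x) x := by
      rw [← Finset.prod_const]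
      refine Finset.prod_le_prod (fun _ _ => hτ0.le) fun I hI => ?_
      have := hU hI
      simp only [hL, Finset.mem_filter] at this
      exact (hxd I this.1 this.2.1).1
    refine le_trans ?_ h1
    exact pow_le_pow_of_le_one hτ0.le hτ1 (Finset.card_le_card (hU.trans (Finset.filter_subset _ _)))
  have hpcount : ∀ S, |HEx (HR D (j + 1) bn S x) - (∏ I ∈ L S, d I (c I x) x) * q S| ≤ θ * q S := by
    intro S
    have h1 := hcount S (L S) subset_rfl (HR D j b S x) (fun I hI => by
      simp only [hL, Finset.mem_filter] at hI
      exact HR_test D j hb S x I (by omega)) (hR0 S) (fun y => le_rfl)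
    have h2 : HR D (j + 1) bn S x = fun y => HR D j b S x y * ∏ I ∈ L S, A I y := funext (hRn S)
    rw [h2]
    exact h1
  intro S
  have key : ∀ T ⊆ S, ∀ h : (J → V) → ℝ, HDep T h → (∀ y, h y = 0 ∨ h y = 1) →
      t / 2 * q S ≤ HEx (HR D (j + 1) bn S x) ∧
      HEx (fun y => HR D (j + 1) bn S x y * h y) * HEx (HR D (j + 1) bn T x) ≤
        HEx (HR D (j + 1) bn S x) *
          (2 * C * HEx (fun y => HR D (j + 1) bn T x y * h y) + ε * HEx (HR D (j + 1) bn T x)) := by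
    intro T hTS h hTh h01
    have hLTS : L T ⊆ L S := by
      intro I hI
      simp only [hL, Finset.mem_filter] at hI ⊢
      exact ⟨hI.1, hI.2.1, hI.2.2.trans hTS⟩
    set h' : (J → V) → ℝ := fun y => h y * ∏ I ∈ L T, A I y with hh'
    have hA0 : ∀ y, (∏ I ∈ L T, A I y) = 0 ∨ (∏ I ∈ L T, A I y) = 1 := by
      intro y
      by_cases hall : ∀ I ∈ L T, A I y = 1
      · right; exact Finset.prod_eq_one hall
      · push Not at hall
        obtain ⟨I, hI, hne⟩ := hall
        left
        exact Finset.prod_eq_zero hI ((hA01 I y).resolve_right hne)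
    have hh'01 : ∀ y, h' y = 0 ∨ h' y = 1 := by
      intro y
      simp only [hh']
      rcases h01 y with h1 | h1 <;> rcases hA0 y with h2 | h2 <;> simp [h1, h2]
    have hh'dep : HDep T h' := by
      intro y z hyz
      simp only [hh']
      rw [hTh y z hyz]
      congr 1
      refine Finset.prod_congr rfl fun I hI => ?_
      simp only [hL, Finset.mem_filter] at hI
      exact hAdep I y z fun i hi => hyz i (hI.2.2 hi)
    have hg0 : ∀ y, 0 ≤ HR D j b S x y * h' y := fun y => by
      rcases hh'01 y with h1 | h1 <;> simp [h1, hR0]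
    have h3 := hcount S (L S \ L T) Finset.sdiff_subset (fun y => HR D j b S x y * h' y)
      (fun I hI => by
        simp only [hL, Finset.mem_sdiff, Finset.mem_filter] at hI
        refine (HR_test D j hb S x I (by omega)).mul (HTest.of_dep hh'dep ?_ hh'01)
        tauto) hg0 (fun y => by
        rcases hh'01 y with h1 | h1 <;> simp [h1, hR0])
    have e1 : ∀ y, HR D j b S x y * h' y * ∏ I ∈ L S \ L T, A I y
        = HR D (j + 1) bn S x y * h y := by
      intro y
      rw [hRn, ← Finset.prod_sdiff hLTS]
      simp only [hh']
      ring
    simp only [e1] at h3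
    have h4 := (hm2 S).2 T hTS h' hh'dep hh'01
    have e2 : ∀ y, HR D j b T x y * h' y = HR D (j + 1) bn T x y * h y := by
      intro y
      rw [hRn]
      simp only [hh']
      ring
    simp only [e2] at h4
    have h1 := hpcount S
    rw [← Finset.prod_sdiff hLTS] at h1
    have hDT1 : ∏ I ∈ L T, d I (c I x) x ≤ 1 :=
      Finset.prod_le_one (fun I _ => (hd01 I _ x).1) fun I _ => (hd01 I _ x).2
    refine Harith (q S) (q T) _ _ (∏ I ∈ L S \ L T, d I (c I x) x) (∏ I ∈ L T, d I (c I x) x) _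
      (HEx (fun y => HR D j b S x y * h' y)) _ t θ s C ε (hq0 S) (hq0 T)
      (Finset.prod_nonneg fun I _ => (hd01 I _ x).1) hDT1 (hprod_t T _ subset_rfl) ?_ ht0
      (by linarith) ?_ (HEx_nonneg hg0) hs0.le hε hθ0.le ?_ ?_ hsθ h1 (hpcount T) h3 h4
    · rw [Finset.prod_sdiff hLTS]
      exact hprod_t S _ subset_rfl
    · refine HEx_nonneg fun y => ?_
      rw [← e2]
      rcases hh'01 y with h1 | h1 <;> simp [h1, hR0]
    · rw [hθ]; gcongr
    · rw [hθ]
      have : t * ε1 ≤ t * 1 := by gcongr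
      linarith
  refine ⟨?_, fun T hTS h hTh h01 => (key T hTS h hTh h01).2⟩
  refine le_trans ?_ (key ∅ (Finset.empty_subset _) (fun _ => 0) (fun _ _ _ => rfl)
    (fun _ => Or.inl rfl)).1
  have := hη₀K m hmK
  have := hqη S
  gcongr
  linarith

lemma HP_all (D : Finset (Finset J)) (hD : ∀ I ∈ D, ∀ I' ⊆ I, I' ∈ D) (j : ℕ) : HP J D j := by
  induction j with
  | zero => exact HP_zero D
  | succ j ih => exact HP_succ D hD j ih

end step

section final
variable {J : Type*} [Fintype J]

lemma Hfiber (n : ℕ) (e : Finset J) (x : J → Fin n) :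
    (Finset.univ.filter (fun y : J → Fin n => ∀ i ∈ e, y i = x i)).card
      = n ^ (Fintype.card J - e.card) := by
  have h : Finset.univ.filter (fun y : J → Fin n => ∀ i ∈ e, y i = x i)
      = Fintype.piFinset (fun i => if i ∈ e then {x i} else Finset.univ) := by
    ext y
    simp only [Finset.mem_filter, Finset.mem_univ, true_and, Fintype.mem_piFinset]
    refine forall_congr' fun i => ?_
    by_cases hi : i ∈ e <;> simp [hi]
  rw [h, Fintype.card_piFinset]
  have h2 : ∀ i, (if i ∈ e then ({x i} : Finset (Fin n)) else Finset.univ).card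
      = if i ∈ e then 1 else n := fun i => by by_cases hi : i ∈ e <;> simp [hi]
  simp_rw [h2]
  rw [Finset.prod_ite]
  simp only [Finset.prod_const_one, one_mul, Finset.prod_const]
  congr 1
  rw [← Finset.card_compl]
  congr 1
  ext i; simp

lemma Hdel (n : ℕ) (hn : 0 < n) (e : Finset J) (Y : Set (J → Fin n)) (hY : HDep e (fun x => x ∈ Y))
    (ε : ℝ) (h : HEx (fun x => if x ∈ Y then (1:ℝ) else 0) ≤ ε) :
    (((Finset.univ.filter (fun x => x ∈ Y)).image (fun x => e.image x)).card : ℝ)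
      ≤ ε * (n:ℝ) ^ e.card := by
  set Z := Finset.univ.filter (fun x => x ∈ Y) with hZ
  have h1 : (Z.image (fun x => e.image x)).card * n ^ (Fintype.card J - e.card) ≤ Z.card := by
    rw [Finset.card_eq_sum_card_image (fun x => e.image x) Z, ← smul_eq_mul]
    refine Finset.card_nsmul_le_sum _ _ _ fun E hE => ?_
    obtain ⟨x, hx, rfl⟩ := Finset.mem_image.1 hE
    rw [← Hfiber n e x]
    refine Finset.card_le_card fun y hy => ?_
    simp only [Finset.mem_filter, Finset.mem_univ, true_and, hZ] at hy hx ⊢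
    refine ⟨?_, ?_⟩
    · have := hY y x hy
      simp only at this
      rwa [this]
    · exact Finset.image_congr fun i hi => hy i hi
  have hn' : (0:ℝ) < n := by exact_mod_cast hn
  have h2 : (Z.card : ℝ) ≤ ε * (n:ℝ) ^ Fintype.card J := by
    unfold HEx at h
    rw [div_le_iff₀ (by simp; positivity)] at h
    simpa [hZ] using h
  have h3 : (n:ℝ) ^ Fintype.card J = (n:ℝ) ^ e.card * (n:ℝ) ^ (Fintype.card J - e.card) := by
    rw [← pow_add]
    congr 1
    have := Finset.card_le_univ e
    omega
  have h4 : ((Z.image (fun x => e.image x)).card : ℝ) * (n:ℝ) ^ (Fintype.card J - e.card)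
      ≤ Z.card := by exact_mod_cast h1
  rw [h3, ← mul_assoc] at h2
  exact le_of_mul_le_mul_right (h4.trans h2) (by positivity)

lemma Hcoll (n : ℕ) (hn : 0 < n) (i l : J) (hil : i ≠ l) :
    HEx (fun y : J → Fin n => if y i = y l then (1:ℝ) else 0) ≤ 1 / n := by
  have hn' : (0:ℝ) < n := by exact_mod_cast hn
  have h1 : (Finset.univ.filter (fun y : J → Fin n => y i = y l)).card
      ≤ n ^ (Fintype.card J - 1) := by
    have h2 : Fintype.card ({a : J // a ≠ i} → Fin n) = n ^ (Fintype.card J - 1) := by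
      have : Fintype.card {a : J // a ≠ i} = Fintype.card J - 1 := by
        simp [Fintype.card_subtype_compl]
      simp [this]
    rw [← h2, ← Finset.card_univ]
    refine Finset.card_le_card_of_injOn (fun y a => y a.1) (by simp) ?_
    intro y hy z hz hyz
    simp only [Finset.coe_filter, Finset.mem_univ, true_and, Set.mem_setOf_eq] at hy hz
    have h3 : ∀ a, a ≠ i → y a = z a := fun a ha => congrFun hyz ⟨a, ha⟩
    ext a
    by_cases ha : a = i
    · rw [ha, hy, hz, h3 l hil.symm]
    · rw [h3 a ha]
  have h3 : (n:ℝ) ^ Fintype.card J = (n:ℝ) ^ (Fintype.card J - 1) * n := by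
    rw [← pow_succ]
    congr 1
    have : 0 < Fintype.card J := Fintype.card_pos_iff.2 ⟨i⟩
    omega
  unfold HEx
  rw [div_le_div_iff₀ (by simp; positivity) hn']
  have h4 : ((Finset.univ.filter (fun y : J → Fin n => y i = y l)).card : ℝ)
      ≤ (n:ℝ) ^ (Fintype.card J - 1) := by exact_mod_cast h1
  simp only [Finset.sum_boole, Fintype.card_pi, Fintype.card_fin, Finset.prod_const,
    Finset.card_univ, Nat.cast_pow, one_mul]
  rw [h3]
  gcongr

lemma Hchoose (n r : ℕ) (h : 2 * r ≤ n) :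
    (n:ℝ) ^ r ≤ 2 ^ r * (r.factorial : ℝ) * (n.choose r) := by
  have h1 : ((n + 1 - r : ℕ) : ℝ) ^ r ≤ r.factorial * (n.choose r) := by
    have := Nat.pow_sub_le_descFactorial n r
    rw [Nat.descFactorial_eq_factorial_mul_choose] at this
    exact_mod_cast this
  have h2 : (n:ℝ) ≤ 2 * ((n + 1 - r : ℕ) : ℝ) := by
    have : n ≤ 2 * (n + 1 - r) := by omega
    exact_mod_cast this
  calc (n:ℝ) ^ r ≤ (2 * ((n + 1 - r : ℕ) : ℝ)) ^ r := by gcongr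
    _ = 2 ^ r * ((n + 1 - r : ℕ) : ℝ) ^ r := by rw [mul_pow]
    _ ≤ 2 ^ r * (r.factorial * (n.choose r)) := by gcongr
    _ = _ := by ring

lemma Hmain (r : ℕ) (F : Finset (Finset J)) (hF : ∀ e ∈ F, e.card = r) (ε : ℝ) (hε : 0 < ε) :
    ∃ η : ℝ, 0 < η ∧ ∃ n₀ : ℕ, 0 < n₀ ∧ ∀ n : ℕ, n₀ < n →
      ∀ G : Finset (Finset (Fin n)),
        (Nat.card {f : J → Fin n // Function.Injective f ∧ ∀ e ∈ F, e.image f ∈ G} : ℝ)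
            ≤ η * (n : ℝ) ^ (Fintype.card J) →
        ∃ G' ⊆ G, ((G \ G').card : ℝ) ≤ ε * (n.choose r) ∧
          ¬ ∃ f : J → Fin n, Function.Injective f ∧ ∀ e ∈ F, e.image f ∈ G' := by
  set D : Finset (Finset J) := Finset.univ.filter (fun I => ∃ e ∈ F, I ⊆ e) with hD
  have hDd : ∀ I ∈ D, ∀ I' ⊆ I, I' ∈ D := by
    intro I hI I' hI'
    simp only [hD, Finset.mem_filter, Finset.mem_univ, true_and] at hI ⊢
    obtain ⟨e, he, hIe⟩ := hI
    exact ⟨e, he, hI'.trans hIe⟩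
  have hcardD : ∀ I ∈ D, I.card ≤ r := by
    intro I hI
    simp only [hD, Finset.mem_filter, Finset.mem_univ, true_and] at hI
    obtain ⟨e, he, hIe⟩ := hI
    rw [← hF e he]
    exact Finset.card_le_card hIe
  obtain ⟨C, -, hP⟩ := HP_all D hDd r
  set M : ℕ := F.card * D.card with hM
  set ε' : ℝ := ε / (2 ^ r * r.factorial * (M + 1)) with hε'
  have hε'0 : 0 < ε' := by positivity
  obtain ⟨η, hη, hP⟩ := hP 2 ε' hε'0
  obtain ⟨n₁, hn₁⟩ := exists_nat_gt ((Fintype.card J : ℝ) ^ 2 * 3 / η)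
  refine ⟨η / 3, by positivity, n₁ + 2 * r + 1, by omega, ?_⟩
  intro n hn G hG
  have hn0 : 0 < n := by omega
  have hn' : (0:ℝ) < n := by exact_mod_cast hn0
  haveI : Nonempty (Fin n) := ⟨⟨0, hn0⟩⟩
  obtain ⟨b, B, hb, hB, hbc, hBε, hmain⟩ := hP (Fin n) (fun I x => if I.image x ∈ G then 1 else 0)
    (fun I x y h => by
      have : I.image x = I.image y := Finset.image_congr fun i hi => h i hi
      simp only [this])
    (fun I x => by split_ifs <;> norm_num)
  set Del : Finset (Finset (Fin n)) := F.biUnion (fun e => (D.filter (fun I => I ⊆ e)).biUnion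
    (fun I => (Finset.univ.filter (fun x => x ∈ B I)).image (fun x => e.image x))) with hDel
  refine ⟨G \ Del, Finset.sdiff_subset, ?_, ?_⟩
  · have h1 : (Del.card : ℝ) ≤ M * (ε' * (n:ℝ) ^ r) := by
      have h2 : (Del.card : ℝ) ≤ ∑ e ∈ F, ∑ I ∈ D.filter (fun I => I ⊆ e),
          (((Finset.univ.filter (fun x => x ∈ B I)).image (fun x => e.image x)).card : ℝ) := by
        have : Del.card ≤ ∑ e ∈ F, ∑ I ∈ D.filter (fun I => I ⊆ e),
          ((Finset.univ.filter (fun x => x ∈ B I)).image (fun x => e.image x)).card :=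
          Finset.card_biUnion_le.trans (Finset.sum_le_sum fun e _ => Finset.card_biUnion_le)
        exact_mod_cast this
      refine h2.trans ?_
      have h3 : ∀ e ∈ F, ∑ I ∈ D.filter (fun I => I ⊆ e),
          (((Finset.univ.filter (fun x => x ∈ B I)).image (fun x => e.image x)).card : ℝ)
          ≤ D.card * (ε' * (n:ℝ) ^ r) := by
        intro e he
        refine (Finset.sum_le_card_nsmul _ _ (ε' * (n:ℝ) ^ r) fun I hI => ?_).trans ?_
        · simp only [Finset.mem_filter] at hI
          have := Hdel n hn0 e (B I) ((hB I).mono hI.2) ε' (hBε I hI.1 (hcardD I hI.1))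
          rwa [hF e he] at this
        · rw [nsmul_eq_mul]
          gcongr
          exact Finset.filter_subset _ _
      refine (Finset.sum_le_card_nsmul _ _ _ h3).trans ?_
      rw [nsmul_eq_mul, hM]
      push_cast
      exact (mul_assoc _ _ _).symm.le
    have h2 : G \ (G \ Del) ⊆ Del := by
      intro E hE
      simp only [Finset.mem_sdiff, not_and, not_not] at hE
      exact hE.2 hE.1
    have h3 : ((G \ (G \ Del)).card : ℝ) ≤ Del.card := by exact_mod_cast Finset.card_le_card h2
    refine h3.trans (h1.trans ?_)
    have h4 := Hchoose n r (by omega)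
    calc (M:ℝ) * (ε' * (n:ℝ) ^ r) ≤ (M + 1) * (ε' * (2 ^ r * (r.factorial : ℝ) * (n.choose r))) := by
          gcongr
          linarith
      _ = ε * (n.choose r) := by
          rw [hε']
          have : (r.factorial : ℝ) ≠ 0 := by exact_mod_cast r.factorial_ne_zero
          field_simp
  · rintro ⟨x, hxinj, hx⟩
    have hxB : ∀ I ∈ D, I.card ≤ r → x ∉ B I := by
      intro I hI _ hxI
      have hI' := hI
      simp only [hD, Finset.mem_filter, Finset.mem_univ, true_and] at hI'
      obtain ⟨e, he, hIe⟩ := hI'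
      have h1 := hx e he
      rw [Finset.mem_sdiff] at h1
      refine h1.2 ?_
      simp only [hDel, Finset.mem_biUnion]
      exact ⟨e, he, I, Finset.mem_filter.2 ⟨hI, hIe⟩,
        Finset.mem_image.2 ⟨x, Finset.mem_filter.2 ⟨Finset.mem_univ _, hxI⟩, rfl⟩⟩
    have h1 := (hmain x hxB Finset.univ).1
    have h2 : ∀ y, HR D r b Finset.univ x y ≤
        (if Function.Injective y ∧ ∀ e ∈ F, e.image y ∈ G then (1:ℝ) else 0) +
        ∑ i : J, ∑ l : J, if i ≠ l then (if y i = y l then (1:ℝ) else 0) else 0 := by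
      intro y
      have hs0 : ∀ i l, 0 ≤ if i ≠ l then (if y i = y l then (1:ℝ) else 0) else 0 := fun i l => by
        positivity
      have hs1 : 0 ≤ ∑ i : J, ∑ l : J, if i ≠ l then (if y i = y l then (1:ℝ) else 0) else 0 :=
        Finset.sum_nonneg fun i _ => Finset.sum_nonneg fun l _ => hs0 i l
      rcases HR_01 D r b Finset.univ x y with h | h
      · rw [h]
        have : (0:ℝ) ≤ if Function.Injective y ∧ ∀ e ∈ F, e.image y ∈ G then (1:ℝ) else 0 := by
          positivity
        linarith
      · rw [h]
        have hyG : ∀ e ∈ F, e.image y ∈ G := by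
          intro e he
          have heD : e ∈ D := by
            simp only [hD, Finset.mem_filter, Finset.mem_univ, true_and]
            exact ⟨e, he, subset_rfl⟩
          rw [HR_eq] at h
          have hK' : HK D r b Finset.univ y = HK D r b Finset.univ x := by
            by_contra hne
            simp [hne] at h
          have h5 := congrFun hK' e
          simp only [HK] at h5
          rw [if_pos ⟨heD, (hF e he).le, Finset.subset_univ _⟩,
            if_pos ⟨heD, (hF e he).le, Finset.subset_univ _⟩, hbc e heD (hF e he)] at h5
          have h6 : e.image x ∈ G := (Finset.mem_sdiff.1 (hx e he)).1
          simp only [h6, if_true] at h5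
          by_contra hcon
          simp [hcon] at h5
        by_cases hinj : Function.Injective y
        · rw [if_pos ⟨hinj, hyG⟩]
          linarith
        · rw [if_neg (fun h => hinj h.1)]
          simp only [Function.Injective, not_forall] at hinj
          obtain ⟨i, l, hil, hne⟩ := hinj
          have h7 := Finset.single_le_sum (f := fun l => if i ≠ l then (if y i = y l then (1:ℝ) else 0) else 0)
            (fun l _ => hs0 i l) (Finset.mem_univ l)
          have h8 := Finset.single_le_sum (f := fun i => ∑ l : J, if i ≠ l then (if y i = y l then (1:ℝ) else 0) else 0)
            (fun i _ => Finset.sum_nonneg fun l _ => hs0 i l) (Finset.mem_univ i)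
          simp only [ne_eq, hne, not_false_eq_true, if_true, hil] at h7 h8
          simp only [ne_eq, zero_add]
          exact h7.trans h8
    have h3 := HEx_mono h2
    rw [HEx_add, HEx_sum] at h3
    simp_rw [HEx_sum] at h3
    have h4 : HEx (fun y : J → Fin n =>
        if Function.Injective y ∧ ∀ e ∈ F, e.image y ∈ G then (1:ℝ) else 0) ≤ η / 3 := by
      unfold HEx
      rw [div_le_iff₀ (by simp; positivity)]
      rw [Nat.card_eq_fintype_card, Fintype.card_subtype] at hG
      simpa using hG
    have h5 : ∑ i : J, ∑ l : J, HEx (fun y : J → Fin n =>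
        if i ≠ l then (if y i = y l then (1:ℝ) else 0) else 0) ≤ (Fintype.card J : ℝ) ^ 2 / n := by
      have h6 : ∀ i l : J, HEx (fun y : J → Fin n =>
          if i ≠ l then (if y i = y l then (1:ℝ) else 0) else 0) ≤ 1 / n := by
        intro i l
        by_cases h : i = l
        · simp only [h, ne_eq, not_true_eq_false, if_false]
          rw [HEx_const]; positivity
        · simp only [ne_eq, h, not_false_eq_true, if_true]
          exact Hcoll n hn0 i l h
      refine (Finset.sum_le_sum fun i _ => Finset.sum_le_sum fun l _ => h6 i l).trans ?_
      simp only [Finset.sum_const, Finset.card_univ, nsmul_eq_mul]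
      apply le_of_eq
      ring
    have h6 : (Fintype.card J : ℝ) ^ 2 / n ≤ η / 3 := by
      have h7 : (n₁:ℝ) ≤ n := by exact_mod_cast (by omega : n₁ ≤ n)
      have h8 := hn₁.trans_le h7
      rw [div_lt_iff₀ hη] at h8
      rw [div_le_iff₀ hn']
      linarith
    have h9 : HEx (HR D r b Finset.univ x) ≤ η / 3 + η / 3 :=
      h3.trans (add_le_add h4 (h5.trans h6))
    linarith

end final

end Removal

/-- **Lemma (hypergraph removal lemma).**  Fix an `r`-graph `F`.  For every `ε > 0` there
exist `η > 0` and `n₀ > 0` such that every `n`-vertex `r`-graph `G` with `n > n₀` containing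
at most `η·n^(|V(F)|)` (labelled) copies of `F` can be made `F`-free by deleting at most
`ε·C(n,r)` edges. -/
theorem hypergraph_removal {α : Type*} [Fintype α]
    (r : ℕ) (F : Finset (Finset α)) (hF : IsRGraph r F)
    (ε : ℝ) (hε : 0 < ε) :
    ∃ η : ℝ, 0 < η ∧ ∃ n₀ : ℕ, 0 < n₀ ∧ ∀ n : ℕ, n₀ < n →
      ∀ G : Finset (Finset (Fin n)), IsRGraph r G →
        (Nat.card {f : α → Fin n // Function.Injective f ∧ ∀ e ∈ F, e.image f ∈ G} : ℝ)
            ≤ η * (n : ℝ) ^ (Fintype.card α) →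
        ∃ G' ⊆ G, ((G \ G').card : ℝ) ≤ ε * (n.choose r) ∧ ¬ ContainsCopy F G' := by
  obtain ⟨η, hη, n₀, hn₀, h⟩ := Hmain r F hF ε hε
  refine ⟨η, hη, n₀, hn₀, fun n hn G _ hc => ?_⟩
  exact h n hn G hc
end
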